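/- For all sufficiently smooth rapidly decaying u, v : ℝ³_ξ → ℝ: (a) ⟨Lu, v⟩ = ⟨u, Lv⟩ and ⟨Lu, u⟩ ≥ 0; (b) the kernel of L equals span{M^{1/2}, ξ₁M^{1/2}, ξ₂M^{1/2}, ξ₃M^{1/2}, |ξ|²M^{1/2}}; (c) ⟨Lu, u⟩ = 0 if and only if u = Pu; (d) there exists κ₀ > 0 (independent of u) such that ⟨Lu, u⟩ ≥ κ₀ |{I−P}u|²_σ. -/

import Mathlib

open MeasureTheory Real

noncomputable section VPL

/-- The velocity/space domain `ℝ³`. -/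
abbrev E3 : Type := EuclideanSpace ℝ (Fin 3)

/-- Japanese bracket `⟨ξ⟩ = (1+|ξ|²)^{1/2}`. -/
def jap (ξ : E3) : ℝ := Real.sqrt (1 + ‖ξ‖ ^ 2)

/-- Normalized global Maxwellian `M(ξ) = (2π)^{-3/2} e^{-|ξ|²/2}`. -/
def Mx (ξ : E3) : ℝ := (2 * π) ^ (-(3 : ℝ) / 2) * Real.exp (-‖ξ‖ ^ 2 / 2)

/-- `M^{1/2}`. -/
def sqrtM (ξ : E3) : ℝ := Real.sqrt (Mx ξ)

/-- Partial derivative in the `i`-th coordinate. -/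
def pd (i : Fin 3) (f : E3 → ℝ) (ξ : E3) : ℝ :=
  fderiv ℝ f ξ (EuclideanSpace.single i 1)

/-- The Landau collision kernel `B^{ij}(ξ) = (δ_{ij} - ξ_iξ_j/|ξ|²)|ξ|^{γ+2}`. -/
def Bij (γ : ℝ) (i j : Fin 3) (ξ : E3) : ℝ :=
  ((if i = j then (1 : ℝ) else 0) - ξ i * ξ j / ‖ξ‖ ^ 2) * ‖ξ‖ ^ (γ + 2)

/-- The Landau collision operator `Q(f,g)`. -/
def Qop (γ : ℝ) (f g : E3 → ℝ) (ξ : E3) : ℝ :=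
  ∑ i : Fin 3, ∑ j : Fin 3,
    pd i (fun ζ => ∫ ξ', Bij γ i j (ζ - ξ') * (f ξ' * pd j g ζ - pd j f ξ' * g ζ)) ξ

/-- The linearized Landau operator `L`. -/
def Lop (γ : ℝ) (u : E3 → ℝ) (ξ : E3) : ℝ :=
  -((Mx ξ) ^ (-(1 : ℝ) / 2)) *
    (Qop γ Mx (fun ζ => sqrtM ζ * u ζ) ξ + Qop γ (fun ζ => sqrtM ζ * u ζ) Mx ξ)

/-- The nonlinear term `Γ(u₁,u₂)`. -/
def Gam (γ : ℝ) (u₁ u₂ : E3 → ℝ) (ξ : E3) : ℝ :=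
  (Mx ξ) ^ (-(1 : ℝ) / 2) *
    Qop γ (fun ζ => sqrtM ζ * u₁ ζ) (fun ζ => sqrtM ζ * u₂ ζ) ξ

/-- The Landau collision frequency `σ^{ij} = B^{ij} ∗ M`. -/
def sigmaij (γ : ℝ) (i j : Fin 3) (ξ : E3) : ℝ := ∫ ξ', Bij γ i j (ξ - ξ') * Mx ξ'

/-- The time–velocity weight `w_{τ,λ}(t,ξ) = ⟨ξ⟩^{(γ+2)τ} exp(λ⟨ξ⟩²/(1+t)^ϑ)`. -/
def wt (γ τ lam ϑ t : ℝ) (ξ : E3) : ℝ :=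
  jap ξ ^ ((γ + 2) * τ) * Real.exp (lam * jap ξ ^ 2 / (1 + t) ^ ϑ)

/-- Weighted `L²_ξ` norm squared `|u|²_{τ,λ}`. -/
def vnormSq (γ τ lam ϑ t : ℝ) (u : E3 → ℝ) : ℝ :=
  ∫ ξ, (wt γ τ lam ϑ t ξ) ^ 2 * (u ξ) ^ 2

/-- Weighted dissipation norm squared `|u|²_{σ,τ,λ}`. -/
def vsigSq (γ τ lam ϑ t : ℝ) (u : E3 → ℝ) : ℝ :=
  ∑ i : Fin 3, ∑ j : Fin 3, ∫ ξ,
    (wt γ τ lam ϑ t ξ) ^ 2 *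
      (sigmaij γ i j ξ * pd i u ξ * pd j u ξ +
        sigmaij γ i j ξ * (ξ i / 2) * (ξ j / 2) * (u ξ) ^ 2)

/-- `L²_ξ` inner product. -/
def ipv (u v : E3 → ℝ) : ℝ := ∫ ξ, u ξ * v ξ

/-- Macroscopic coefficient `a`. -/
def aC (u : E3 → ℝ) : ℝ := ∫ ξ, sqrtM ξ * u ξ

/-- Macroscopic coefficient `b_i`. -/
def bC (i : Fin 3) (u : E3 → ℝ) : ℝ := ∫ ξ, ξ i * sqrtM ξ * u ξ

/-- Macroscopic coefficient `c`. -/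
def cC (u : E3 → ℝ) : ℝ := (1 / 6) * ∫ ξ, (‖ξ‖ ^ 2 - 3) * sqrtM ξ * u ξ

/-- Macroscopic projection `Pu`. -/
def Pv (u : E3 → ℝ) (ξ : E3) : ℝ :=
  (aC u + (∑ i : Fin 3, bC i u * ξ i) + cC u * (‖ξ‖ ^ 2 - 3)) * sqrtM ξ

/-- Microscopic part `{I - P}u`. -/
def IPv (u : E3 → ℝ) (ξ : E3) : ℝ := u ξ - Pv u ξ

/-- Multi-indices on `ℝ³` as triples of naturals. -/
abbrev MIdx : Type := ℕ × ℕ × ℕ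

/-- Length `|β|` of a multi-index. -/
def deg (β : MIdx) : ℕ := β.1 + β.2.1 + β.2.2

/-- Iterated partial derivative `∂^β`. -/
def pdM (β : MIdx) (f : E3 → ℝ) : E3 → ℝ :=
  (pd 0)^[β.1] ((pd 1)^[β.2.1] ((pd 2)^[β.2.2] f))

/-- The finite set of multi-indices of length at most `N`. -/
def midx (N : ℕ) : Finset MIdx :=
  ((Finset.range (N + 1)) ×ˢ (Finset.range (N + 1)) ×ˢ (Finset.range (N + 1))).filter
    fun β => deg β ≤ N

/-- Pairs `(α,β)` of multi-indices with `|α|+|β| ≤ N`. -/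
def midxP (N : ℕ) : Finset (MIdx × MIdx) :=
  ((midx N) ×ˢ (midx N)).filter fun p => deg p.1 + deg p.2 ≤ N

/-- Partial derivative in the space variable of `u = u(x,ξ)`. -/
def pdx (i : Fin 3) (u : E3 → E3 → ℝ) : E3 → E3 → ℝ :=
  fun x ξ => fderiv ℝ (fun y => u y ξ) x (EuclideanSpace.single i 1)

/-- Iterated space derivative `∂^α_x` of `u = u(x,ξ)`. -/
def pdxM (α : MIdx) (u : E3 → E3 → ℝ) : E3 → E3 → ℝ :=
  (pdx 0)^[α.1] ((pdx 1)^[α.2.1] ((pdx 2)^[α.2.2] u))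

/-- Mixed derivative `∂^α_β = ∂^α_x ∂^β_ξ` of `u = u(x,ξ)`. -/
def pdab (α β : MIdx) (u : E3 → E3 → ℝ) : E3 → E3 → ℝ :=
  fun x => pdM β (pdxM α u x)

/-- Weighted `L²_{x,ξ}` norm squared `‖u‖²_{τ,λ}`. -/
def xnormSq (γ τ lam ϑ t : ℝ) (u : E3 → E3 → ℝ) : ℝ := ∫ x, vnormSq γ τ lam ϑ t (u x)

/-- Weighted dissipation norm squared `‖u‖²_{σ,τ,λ}`. -/
def xsigSq (γ τ lam ϑ t : ℝ) (u : E3 → E3 → ℝ) : ℝ := ∫ x, vsigSq γ τ lam ϑ t (u x)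

/-- `L²_{x,ξ}` inner product. -/
def ipx (u v : E3 → E3 → ℝ) : ℝ := ∫ x, ∫ ξ, u x ξ * v x ξ

/-- `a(x)`. -/
def aF (u : E3 → E3 → ℝ) (x : E3) : ℝ := aC (u x)

/-- `b_i(x)`. -/
def bF (i : Fin 3) (u : E3 → E3 → ℝ) (x : E3) : ℝ := bC i (u x)

/-- `c(x)`. -/
def cF (u : E3 → E3 → ℝ) (x : E3) : ℝ := cC (u x)

/-- `{I-P}u` for `u = u(x,ξ)`. -/
def IPx (u : E3 → E3 → ℝ) : E3 → E3 → ℝ := fun x => IPv (u x)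

/-- The Poisson potential `φ = -(4π|x|)^{-1} ∗ ρ`. -/
def poisson (ρ : E3 → ℝ) (x : E3) : ℝ := -∫ y, ρ y / (4 * π * ‖x - y‖)

/-- The self-consistent potential of `u`. -/
def phiF (u : E3 → E3 → ℝ) : E3 → ℝ := poisson (aF u)

/-- `L²_x` norm squared. -/
def L2Sq (f : E3 → ℝ) : ℝ := ∫ x, (f x) ^ 2

/-- `H^N_x` norm squared. -/
def HsobSq (N : ℕ) (f : E3 → ℝ) : ℝ := ∑ α ∈ midx N, L2Sq (pdM α f)

/-- `‖∇_x f‖²_{H^N}`. -/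
def gradSobSq (N : ℕ) (f : E3 → ℝ) : ℝ := ∑ i : Fin 3, HsobSq N (pd i f)

/-- `‖∇_x (a,b,c)‖²_{H^N}`. -/
def abcGradSobSq (N : ℕ) (u : E3 → E3 → ℝ) : ℝ :=
  gradSobSq N (aF u) + (∑ i : Fin 3, gradSobSq N (bF i u)) + gradSobSq N (cF u)

/-- `‖∇²_x f‖²_{H^N}`. -/
def hessSobSq (N : ℕ) (f : E3 → ℝ) : ℝ :=
  ∑ i : Fin 3, ∑ j : Fin 3, HsobSq N (pd i (pd j f))

/-- Full instant energy norm `|||u(t)|||²_{N,ℓ,λ}`. -/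
def triSq (γ : ℝ) (N : ℕ) (ℓ lam ϑ t : ℝ) (u : E3 → E3 → ℝ) : ℝ :=
  (∑ p ∈ midxP N, xnormSq γ ((deg p.2 : ℝ) - ℓ) lam ϑ t (pdab p.1 p.2 u))
    + gradSobSq N (phiF u)

/-- `Z₁ = L²_ξ(L¹_x)` norm. -/
def Z1 (u : E3 → E3 → ℝ) : ℝ := Real.sqrt (∫ ξ, (∫ x, |u x ξ|) ^ 2)

/-- Un-currying of a Schwartz function on `ℝ³_x × ℝ³_ξ`. -/
def uc (u : SchwartzMap (E3 × E3) ℝ) : E3 → E3 → ℝ := fun x ξ => u (x, ξ)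

end VPL

/-! ### Basic calculus with `pd` -/

theorem pd_add' {f g : E3 → ℝ} (hf : Differentiable ℝ f) (hg : Differentiable ℝ g) (i : Fin 3) (x : E3) :
    pd i (fun y => f y + g y) x = pd i f x + pd i g x := by
  unfold pd; rw [fderiv_fun_add (hf x) (hg x)]; rfl

theorem pd_sub' {f g : E3 → ℝ} (hf : Differentiable ℝ f) (hg : Differentiable ℝ g) (i : Fin 3) (x : E3) :
    pd i (fun y => f y - g y) x = pd i f x - pd i g x := by
  unfold pd; rw [fderiv_fun_sub (hf x) (hg x)]; rfl

theorem pd_mul' {f g : E3 → ℝ} (hf : Differentiable ℝ f) (hg : Differentiable ℝ g) (i : Fin 3) (x : E3) :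
    pd i (fun y => f y * g y) x = pd i f x * g x + f x * pd i g x := by
  unfold pd; rw [fderiv_fun_mul (hf x) (hg x)]
  simp; ring

theorem pd_const' (c : ℝ) (i : Fin 3) (x : E3) : pd i (fun _ => c) x = 0 := by
  unfold pd; simp

theorem pd_sum' {ι : Type} (s : Finset ι) {f : ι → E3 → ℝ} (hf : ∀ k, Differentiable ℝ (f k))
    (i : Fin 3) (x : E3) :
    pd i (fun y => ∑ k ∈ s, f k y) x = ∑ k ∈ s, pd i (f k) x := by
  unfold pd; rw [fderiv_fun_sum (fun k _ => hf k x)]; simp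

theorem diff_coord (j : Fin 3) : Differentiable ℝ (fun x : E3 => x j) := by
  fun_prop

theorem pd_coord (i j : Fin 3) (x : E3) : pd i (fun y => y j) x = if i = j then 1 else 0 := by
  unfold pd
  have : HasFDerivAt (fun y : E3 => y j) (EuclideanSpace.proj j : E3 →L[ℝ] ℝ) x :=
    (EuclideanSpace.proj j : E3 →L[ℝ] ℝ).hasFDerivAt
  rw [this.fderiv]
  simp [eq_comm]

theorem pd_normsq (i : Fin 3) (x : E3) : pd i (fun y => ‖y‖ ^ 2) x = 2 * x i := by
  unfold pd
  rw [(hasStrictFDerivAt_norm_sq x).hasFDerivAt.fderiv]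
  simp [EuclideanSpace.inner_single_right]

theorem diff_normsq : Differentiable ℝ (fun x : E3 => ‖x‖ ^ 2) := by
  intro x; exact (hasStrictFDerivAt_norm_sq x).hasFDerivAt.differentiableAt

theorem fderiv_eq_sum (f : E3 → ℝ) (x v : E3) : fderiv ℝ f x v = ∑ i, v i * pd i f x := by
  have : v = ∑ i : Fin 3, v i • (EuclideanSpace.single i (1:ℝ) : E3) := by
    ext j; fin_cases j <;> simp [Fin.sum_univ_three]
  conv_lhs => rw [this]
  rw [map_sum]; simp [pd]

theorem fderiv_norm_le (f : E3 → ℝ) (x : E3) : ‖fderiv ℝ f x‖ ≤ ∑ i, |pd i f x| := by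
  apply ContinuousLinearMap.opNorm_le_bound _ (Finset.sum_nonneg fun _ _ => abs_nonneg _)
  intro v
  rw [fderiv_eq_sum, Finset.sum_mul]
  refine (Finset.abs_sum_le_sum_abs _ _).trans (Finset.sum_le_sum fun i _ => ?_)
  rw [abs_mul, mul_comm]
  gcongr
  exact PiLp.norm_apply_le v i

theorem coord_le (x : E3) (i : Fin 3) : |x i| ≤ ‖x‖ := PiLp.norm_apply_le x i

theorem normsq3 (x : E3) : ‖x‖ ^ 2 = x 0 ^ 2 + x 1 ^ 2 + x 2 ^ 2 := by
  rw [EuclideanSpace.real_norm_sq_eq, Fin.sum_univ_three]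

theorem meas_pd (i : Fin 3) (f : E3 → ℝ) : Measurable (pd i f) :=
  measurable_fderiv_apply_const ℝ f _

/-! ### Rapid decay and polynomial growth -/

/-- rapid decay -/
def Dec (f : E3 → ℝ) : Prop := ∀ k : ℕ, ∃ C : ℝ, ∀ x, (1 + ‖x‖) ^ k * |f x| ≤ C
/-- polynomial growth -/
def PG (f : E3 → ℝ) : Prop := ∃ k : ℕ, ∃ C : ℝ, ∀ x, |f x| ≤ C * (1 + ‖x‖) ^ k

theorem Dec.exists_nonneg {f : E3 → ℝ} (h : Dec f) (k : ℕ) :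
    ∃ C : ℝ, 0 ≤ C ∧ ∀ x, (1 + ‖x‖) ^ k * |f x| ≤ C := by
  obtain ⟨C, hC⟩ := h k
  exact ⟨C, le_trans (by positivity) (hC 0), hC⟩

theorem PG.exists_nonneg {f : E3 → ℝ} (h : PG f) :
    ∃ k : ℕ, ∃ C : ℝ, 0 ≤ C ∧ ∀ x, |f x| ≤ C * (1 + ‖x‖) ^ k := by
  obtain ⟨k, C, hC⟩ := h
  refine ⟨k, |C|, abs_nonneg _, fun x => (hC x).trans ?_⟩
  gcongr; exact le_abs_self _

theorem Dec.add {f g : E3 → ℝ} (hf : Dec f) (hg : Dec g) : Dec (fun x => f x + g x) := by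
  intro k
  obtain ⟨C, hC⟩ := hf k
  obtain ⟨D, hD⟩ := hg k
  refine ⟨C + D, fun x => ?_⟩
  have h1 := abs_add_le (f x) (g x)
  have : (1 + ‖x‖) ^ k * |f x + g x| ≤ (1 + ‖x‖) ^ k * (|f x| + |g x|) := by gcongr
  linarith [hC x, hD x, mul_add ((1 + ‖x‖) ^ k) |f x| |g x|]

theorem Dec.mono {f g : E3 → ℝ} (hf : Dec f) (h : ∀ x, |g x| ≤ |f x|) : Dec g := by
  intro k
  obtain ⟨C, hC⟩ := hf k
  refine ⟨C, fun x => le_trans ?_ (hC x)⟩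
  exact mul_le_mul_of_nonneg_left (h x) (by positivity)

theorem Dec.mul {f g : E3 → ℝ} (hf : Dec f) (hg : PG g) : Dec (fun x => f x * g x) := by
  intro k
  obtain ⟨m, D, hD0, hD⟩ := hg.exists_nonneg
  obtain ⟨C, hC0, hC⟩ := hf.exists_nonneg (k + m)
  refine ⟨C * D, fun x => ?_⟩
  rw [abs_mul]
  calc (1 + ‖x‖) ^ k * (|f x| * |g x|) ≤ (1 + ‖x‖) ^ k * (|f x| * (D * (1 + ‖x‖) ^ m)) := by
        gcongr; exact hD x
    _ = ((1 + ‖x‖) ^ (k + m) * |f x|) * D := by ring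
    _ ≤ C * D := by gcongr; exact hC x

theorem Dec.pg {f : E3 → ℝ} (hf : Dec f) : PG f := by
  obtain ⟨C, hC⟩ := hf 0
  exact ⟨0, C, fun x => by simpa using hC x⟩

theorem PG.add {f g : E3 → ℝ} (hf : PG f) (hg : PG g) : PG (fun x => f x + g x) := by
  obtain ⟨k, C, hC0, hC⟩ := hf.exists_nonneg
  obtain ⟨m, D, hD0, hD⟩ := hg.exists_nonneg
  refine ⟨k + m, C + D, fun x => (abs_add_le _ _).trans ?_⟩
  rw [add_mul]
  have h1 : (1:ℝ) ≤ 1 + ‖x‖ := by linarith [norm_nonneg x]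
  refine add_le_add ((hC x).trans ?_) ((hD x).trans ?_)
  · gcongr <;> first | exact h1 | omega
  · gcongr <;> first | exact h1 | omega

theorem PG.mul {f g : E3 → ℝ} (hf : PG f) (hg : PG g) : PG (fun x => f x * g x) := by
  obtain ⟨k, C, hC0, hC⟩ := hf.exists_nonneg
  obtain ⟨m, D, hD0, hD⟩ := hg.exists_nonneg
  refine ⟨k + m, C * D, fun x => ?_⟩
  rw [abs_mul]
  calc |f x| * |g x| ≤ (C * (1 + ‖x‖) ^ k) * (D * (1 + ‖x‖) ^ m) := by
        gcongr; exacts [hC x, hD x]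
    _ = _ := by ring

theorem PG.const (c : ℝ) : PG (fun _ => c) := ⟨0, |c|, fun x => by simp⟩
theorem PG.coord (i : Fin 3) : PG (fun x => x i) :=
  ⟨1, 1, fun x => by have := coord_le x i; simp; linarith⟩
theorem PG.norm : PG (fun x => ‖x‖) := ⟨1, 1, fun x => by simp⟩
theorem PG.neg {f : E3 → ℝ} (hf : PG f) : PG (fun x => - f x) := by
  simpa using (PG.const (-1)).mul hf
theorem PG.sub {f g : E3 → ℝ} (hf : PG f) (hg : PG g) : PG (fun x => f x - g x) := by
  simpa [sub_eq_add_neg] using hf.add hg.neg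
theorem PG.pow {f : E3 → ℝ} (hf : PG f) (n : ℕ) : PG (fun x => f x ^ n) := by
  induction n with
  | zero => simpa using PG.const 1
  | succ n ih => simpa [pow_succ] using ih.mul hf
theorem Dec.neg {f : E3 → ℝ} (hf : Dec f) : Dec (fun x => - f x) := by
  simpa using hf.mul (PG.const (-1))
theorem Dec.sub {f g : E3 → ℝ} (hf : Dec f) (hg : Dec g) : Dec (fun x => f x - g x) := by
  simpa [sub_eq_add_neg] using hf.add hg.neg
theorem Dec.zero : Dec (fun _ => 0) := fun k => ⟨0, fun x => by simp⟩
theorem Dec.mul' {f g : E3 → ℝ} (hf : PG f) (hg : Dec g) : Dec (fun x => f x * g x) := by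
  simpa [mul_comm] using hg.mul hf
theorem Dec.sum {ι : Type} (s : Finset ι) {f : ι → E3 → ℝ} (hf : ∀ k, Dec (f k)) :
    Dec (fun y => ∑ k ∈ s, f k y) := by
  classical
  induction s using Finset.induction_on with
  | empty => simpa using Dec.zero
  | insert a s ha ih => simpa [Finset.sum_insert ha] using (hf a).add ih

theorem int_bracket : Integrable (fun x : E3 => (1 + ‖x‖) ^ (-(4:ℝ))) := by
  apply integrable_one_add_norm
  simp; norm_num

theorem Dec.integrable {f : E3 → ℝ} (hf : Dec f) (hm : AEStronglyMeasurable f) : Integrable f := by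
  obtain ⟨C, hC⟩ := hf 4
  refine (int_bracket.const_mul C).mono' hm (Filter.Eventually.of_forall fun x => ?_)
  have h1 : (0:ℝ) < 1 + ‖x‖ := by positivity
  rw [Real.rpow_neg h1.le]
  have : (1 + ‖x‖) ^ (4:ℝ) = (1 + ‖x‖) ^ (4:ℕ) := by norm_cast
  rw [this, ← div_eq_mul_inv, le_div_iff₀ (by positivity), Real.norm_eq_abs]
  linarith [hC x]

structure RD1 (f : E3 → ℝ) : Prop where
  diff : Differentiable ℝ f
  dec : Dec f
  pdec : ∀ i, Dec (pd i f)

structure PG1 (f : E3 → ℝ) : Prop where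
  diff : Differentiable ℝ f
  pg : PG f
  ppg : ∀ i, PG (pd i f)

theorem RD1.pg1 {f : E3 → ℝ} (h : RD1 f) : PG1 f := ⟨h.diff, h.dec.pg, fun i => (h.pdec i).pg⟩
theorem RD1.cont {f : E3 → ℝ} (h : RD1 f) : Continuous f := h.diff.continuous
theorem PG1.cont {f : E3 → ℝ} (h : PG1 f) : Continuous f := h.diff.continuous

theorem RD1.add {f g : E3 → ℝ} (hf : RD1 f) (hg : RD1 g) : RD1 (fun x => f x + g x) := by
  refine ⟨hf.diff.add hg.diff, hf.dec.add hg.dec, fun i => ?_⟩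
  have : pd i (fun x => f x + g x) = fun x => pd i f x + pd i g x := funext (pd_add' hf.diff hg.diff i)
  rw [this]; exact (hf.pdec i).add (hg.pdec i)

theorem RD1.mul {f g : E3 → ℝ} (hf : RD1 f) (hg : PG1 g) : RD1 (fun x => f x * g x) := by
  refine ⟨hf.diff.mul hg.diff, hf.dec.mul hg.pg, fun i => ?_⟩
  have : pd i (fun x => f x * g x) = fun x => pd i f x * g x + f x * pd i g x :=
    funext (pd_mul' hf.diff hg.diff i)
  rw [this]; exact ((hf.pdec i).mul hg.pg).add (hf.dec.mul (hg.ppg i))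

theorem RD1.mul' {f g : E3 → ℝ} (hf : PG1 f) (hg : RD1 g) : RD1 (fun x => f x * g x) := by
  simpa [mul_comm] using hg.mul hf

theorem PG1.add {f g : E3 → ℝ} (hf : PG1 f) (hg : PG1 g) : PG1 (fun x => f x + g x) := by
  refine ⟨hf.diff.add hg.diff, hf.pg.add hg.pg, fun i => ?_⟩
  have : pd i (fun x => f x + g x) = fun x => pd i f x + pd i g x := funext (pd_add' hf.diff hg.diff i)
  rw [this]; exact (hf.ppg i).add (hg.ppg i)

theorem PG1.mul {f g : E3 → ℝ} (hf : PG1 f) (hg : PG1 g) : PG1 (fun x => f x * g x) := by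
  refine ⟨hf.diff.mul hg.diff, hf.pg.mul hg.pg, fun i => ?_⟩
  have : pd i (fun x => f x * g x) = fun x => pd i f x * g x + f x * pd i g x :=
    funext (pd_mul' hf.diff hg.diff i)
  rw [this]; exact ((hf.ppg i).mul hg.pg).add (hf.pg.mul (hg.ppg i))

theorem PG1.const (c : ℝ) : PG1 (fun _ => c) :=
  ⟨by fun_prop, PG.const c, fun i => by
    have : pd i (fun _ => c) = fun _ => 0 := funext (pd_const' c i)
    rw [this]; exact PG.const 0⟩
theorem PG1.coord (j : Fin 3) : PG1 (fun x => x j) :=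
  ⟨diff_coord j, PG.coord j, fun i => by
    have : pd i (fun x => x j) = fun _ => if i = j then 1 else 0 := funext (pd_coord i j)
    rw [this]; exact PG.const _⟩
theorem PG1.neg {f : E3 → ℝ} (hf : PG1 f) : PG1 (fun x => - f x) := by
  simpa using (PG1.const (-1)).mul hf
theorem PG1.sub {f g : E3 → ℝ} (hf : PG1 f) (hg : PG1 g) : PG1 (fun x => f x - g x) := by
  simpa [sub_eq_add_neg] using hf.add hg.neg
theorem RD1.neg {f : E3 → ℝ} (hf : RD1 f) : RD1 (fun x => - f x) := by
  simpa using hf.mul (PG1.const (-1))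
theorem RD1.sub {f g : E3 → ℝ} (hf : RD1 f) (hg : RD1 g) : RD1 (fun x => f x - g x) := by
  simpa [sub_eq_add_neg] using hf.add hg.neg
theorem RD1.zero : RD1 (fun _ => 0) :=
  ⟨by fun_prop, Dec.zero, fun i => by
    have : pd i (fun _ => (0:ℝ)) = fun _ => 0 := funext (pd_const' 0 i)
    rw [this]; exact Dec.zero⟩
theorem RD1.sum {ι : Type} (s : Finset ι) {f : ι → E3 → ℝ} (hf : ∀ k, RD1 (f k)) :
    RD1 (fun y => ∑ k ∈ s, f k y) := by
  classical
  induction s using Finset.induction_on with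
  | empty => simpa using RD1.zero
  | insert a s ha ih => simpa [Finset.sum_insert ha] using (hf a).add ih
theorem PG1.normsq : PG1 (fun x => ‖x‖ ^ 2) :=
  ⟨diff_normsq, PG.norm.pow 2, fun i => by
    have : pd i (fun x => ‖x‖ ^ 2) = fun x => 2 * x i := funext (pd_normsq i)
    rw [this]; exact (PG.const 2).mul (PG.coord i)⟩

/-! ### Schwartz functions -/
theorem schwartz_dec (u : SchwartzMap E3 ℝ) : Dec u := by
  intro k
  refine ⟨2 ^ k * ((Finset.Iic (k, 0)).sup (fun m => SchwartzMap.seminorm ℝ m.1 m.2)) u, fun x => ?_⟩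
  have := SchwartzMap.one_add_le_sup_seminorm_apply (𝕜 := ℝ) (m := (k, 0)) (k := k) (n := 0) le_rfl le_rfl u x
  rw [norm_iteratedFDeriv_zero] at this
  exact this

theorem schwartz_pd (u : SchwartzMap E3 ℝ) (i : Fin 3) : ∃ v : SchwartzMap E3 ℝ, pd i u = v :=
  ⟨(SchwartzMap.evalCLM ℝ E3 ℝ (EuclideanSpace.single i 1) ∘L SchwartzMap.fderivCLM ℝ E3 ℝ) u, rfl⟩

theorem schwartz_rd1 (u : SchwartzMap E3 ℝ) : RD1 u := by
  refine ⟨u.differentiable, schwartz_dec u, fun i => ?_⟩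
  obtain ⟨v, hv⟩ := schwartz_pd u i
  rw [hv]; exact schwartz_dec v

/-! ### The Maxwellian -/
theorem Mx_pos (x : E3) : 0 < Mx x := by unfold Mx; positivity
theorem sqrtM_pos (x : E3) : 0 < sqrtM x := Real.sqrt_pos.2 (Mx_pos x)
theorem sqrtM_mul_self (x : E3) : sqrtM x * sqrtM x = Mx x := Real.mul_self_sqrt (Mx_pos x).le
theorem sqrtM_sq (x : E3) : sqrtM x ^ 2 = Mx x := Real.sq_sqrt (Mx_pos x).le

noncomputable def cM : ℝ := Real.sqrt ((2 * π) ^ (-(3 : ℝ) / 2))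
theorem cM_pos : 0 < cM := Real.sqrt_pos.2 (by positivity)
theorem sqrtM_eq (x : E3) : sqrtM x = cM * Real.exp (-‖x‖ ^ 2 / 4) := by
  unfold sqrtM Mx cM
  rw [Real.sqrt_mul (by positivity)]
  congr 1
  rw [Real.sqrt_eq_iff_mul_self_eq (by positivity) (by positivity), ← Real.exp_add]
  congr 1; ring

theorem gauss_bound (k : ℕ) {a : ℝ} (ha : 0 < a) :
    ∃ C : ℝ, 0 ≤ C ∧ ∀ r : ℝ, 0 ≤ r → (1 + r) ^ k * Real.exp (-a * r ^ 2) ≤ C := by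
  refine ⟨k.factorial * Real.exp (1 + 1 / (4 * a)), by positivity, fun r hr => ?_⟩
  have h1 := Real.pow_div_factorial_le_exp (1 + r) (by linarith) k
  rw [div_le_iff₀ (by positivity)] at h1
  calc (1 + r) ^ k * Real.exp (-a * r ^ 2)
      ≤ (Real.exp (1 + r) * k.factorial) * Real.exp (-a * r ^ 2) := by gcongr
    _ = k.factorial * Real.exp (1 + r + -a * r ^ 2) := by rw [Real.exp_add (1 + r)]; ring
    _ ≤ _ := by
      refine mul_le_mul_of_nonneg_left (Real.exp_le_exp.2 ?_) (by positivity)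
      have : r - a * r ^ 2 ≤ 1 / (4 * a) := by
        rw [le_div_iff₀ (by positivity)]
        nlinarith [sq_nonneg (2 * a * r - 1)]
      linarith

theorem exp_dec {a : ℝ} (ha : 0 < a) : Dec (fun x => Real.exp (-a * ‖x‖ ^ 2)) := by
  intro k
  obtain ⟨C, -, hC⟩ := gauss_bound k ha
  refine ⟨C, fun x => ?_⟩
  rw [abs_of_pos (Real.exp_pos _)]
  exact hC _ (norm_nonneg _)

theorem diff_sqrtM : Differentiable ℝ sqrtM := by
  have : sqrtM = fun x => cM * Real.exp (-‖x‖ ^ 2 / 4) := funext sqrtM_eq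
  rw [this]
  have := diff_normsq
  fun_prop

theorem pd_sqrtM (i : Fin 3) (x : E3) : pd i sqrtM x = -(x i / 2) * sqrtM x := by
  have h1 := ((hasStrictFDerivAt_norm_sq x).hasFDerivAt.const_mul (-(1/4 : ℝ))).exp.const_mul cM
  have h2 : sqrtM = fun x => cM * Real.exp (-(1/4 : ℝ) * ‖x‖ ^ 2) := by
    funext y; rw [sqrtM_eq]; congr 2; ring
  rw [← h2] at h1
  unfold pd
  rw [h1.fderiv, sqrtM_eq]
  simp [EuclideanSpace.inner_single_right]
  have : -‖x‖ ^ 2 / 4 = -(4⁻¹ * ‖x‖ ^ 2) := by ring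
  rw [this]; ring

theorem dec_sqrtM : Dec sqrtM := by
  have := (exp_dec (a := 1/4) (by norm_num)).mul (PG.const cM)
  refine this.mono fun x => le_of_eq ?_
  rw [sqrtM_eq]; congr 1; rw [mul_comm]; congr 2; ring

theorem rd1_sqrtM : RD1 sqrtM := ⟨diff_sqrtM, dec_sqrtM, fun i => by
  have : pd i sqrtM = fun x => -(x i / 2) * sqrtM x := funext (pd_sqrtM i)
  rw [this]
  have h : PG (fun x : E3 => -(x i / 2)) := by
    have := (PG.coord i).mul (PG.const (-(1/2)))
    simpa [div_eq_mul_inv] using this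
  exact Dec.mul' h dec_sqrtM⟩

theorem Mx_eq_mul : Mx = fun x => sqrtM x * sqrtM x := funext fun x => (sqrtM_mul_self x).symm
theorem rd1_Mx : RD1 Mx := by rw [Mx_eq_mul]; exact rd1_sqrtM.mul rd1_sqrtM.pg1
theorem pd_Mx (i : Fin 3) (x : E3) : pd i Mx x = -(x i) * Mx x := by
  rw [Mx_eq_mul, pd_mul' diff_sqrtM diff_sqrtM, pd_sqrtM]; ring

/-! ### The kernel and convolutions -/
noncomputable def b1 (γ : ℝ) (z : E3) : ℝ := if ‖z‖ < 1 then ‖z‖ ^ (γ + 2) else 0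
noncomputable def kb (γ : ℝ) (z : E3) : ℝ := 2 * (1 + b1 γ z)

theorem b1_nonneg (γ : ℝ) (z : E3) : 0 ≤ b1 γ z := by unfold b1; split_ifs <;> positivity
theorem kb_nonneg (γ : ℝ) (z : E3) : 0 ≤ kb γ z := by
  unfold kb; linarith [b1_nonneg γ z]

theorem meas_b1 (γ : ℝ) : Measurable (b1 γ) := by
  unfold b1
  exact Measurable.ite (measurableSet_lt (by fun_prop) (by fun_prop)) (by fun_prop) (by fun_prop)

theorem meas_kb (γ : ℝ) : Measurable (kb γ) := by
  unfold kb; have := meas_b1 γ; fun_prop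

theorem int_b1 {γ : ℝ} (hγ1 : -3 ≤ γ) : Integrable (b1 γ) := by
  have h : IntegrableOn (fun x : E3 => ‖x‖ ^ (γ + 2)) (Metric.ball (0 : E3) 1) := by
    rw [integrableOn_fun_norm_addHaar volume (f := fun y : ℝ => y ^ (γ + 2))]
    have h2 : IntegrableOn (fun x : ℝ => x ^ (γ + 4)) (Set.Ioo 0 1) := by
      rw [intervalIntegral.integrableOn_Ioo_rpow_iff one_pos]; linarith
    refine h2.congr_fun (fun y hy => ?_) measurableSet_Ioo
    simp only [finrank_euclideanSpace_fin, smul_eq_mul]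
    rw [← Real.rpow_natCast, ← Real.rpow_add hy.1]
    congr 1; norm_num; ring
  rw [← integrable_indicator_iff measurableSet_ball] at h
  refine h.congr (Filter.Eventually.of_forall fun x => ?_)
  simp [b1, Set.indicator]

theorem norm_rpow_le_kb {γ : ℝ} (hγ2 : γ < -2) (z : E3) : 2 * ‖z‖ ^ (γ + 2) ≤ kb γ z := by
  unfold kb b1
  split_ifs with h
  · linarith
  · push Not at h
    have := Real.rpow_le_one_of_one_le_of_nonpos h (by linarith : γ + 2 ≤ 0)
    linarith

theorem Bij_abs_le {γ : ℝ} (hγ2 : γ < -2) (i j : Fin 3) (z : E3) : |Bij γ i j z| ≤ kb γ z := by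
  refine le_trans ?_ (norm_rpow_le_kb hγ2 z)
  unfold Bij
  rw [abs_mul, abs_of_nonneg (Real.rpow_nonneg (norm_nonneg z) _)]
  gcongr
  have h1 : |if i = j then (1:ℝ) else 0| ≤ 1 := by split_ifs <;> simp
  have h2 : |z i * z j / ‖z‖ ^ 2| ≤ 1 := by
    rw [abs_div, abs_mul, abs_of_nonneg (sq_nonneg ‖z‖)]
    apply div_le_one_of_le₀ _ (sq_nonneg _)
    rw [sq]; exact mul_le_mul (coord_le z i) (coord_le z j) (abs_nonneg _) (norm_nonneg _)
  exact (abs_sub _ _).trans (by linarith)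

theorem meas_Bij (γ : ℝ) (i j : Fin 3) : Measurable (Bij γ i j) := by
  unfold Bij; fun_prop

theorem Bij_neg (γ : ℝ) (i j : Fin 3) (z : E3) : Bij γ i j (-z) = Bij γ i j z := by
  unfold Bij; simp

theorem Bij_symm (γ : ℝ) (i j : Fin 3) (z : E3) : Bij γ i j z = Bij γ j i z := by
  unfold Bij; simp only [eq_comm, mul_comm]

theorem kb_int {γ : ℝ} (hγ1 : -3 ≤ γ) {f : E3 → ℝ} (hf : Dec f) (hm : AEStronglyMeasurable f) :
    ∃ C, 0 ≤ C ∧ ∀ ζ, Integrable (fun y => kb γ (ζ - y) * |f y|) ∧ ∫ y, kb γ (ζ - y) * |f y| ≤ C := by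
  obtain ⟨D, hD0, hD⟩ := hf.exists_nonneg 0
  have hfi : Integrable (fun y => |f y|) := (hf.integrable hm).abs
  have hi : ∀ ζ, Integrable (fun y => b1 γ (ζ - y)) := fun ζ => (int_b1 hγ1).comp_sub_left ζ
  have hi2 : ∀ ζ, Integrable (fun y => b1 γ (ζ - y) * |f y|) := fun ζ => by
    refine ((hi ζ).mul_const D).mono' ((hi ζ).1.mul hfi.1) (Filter.Eventually.of_forall fun y => ?_)
    rw [Real.norm_eq_abs, abs_mul, abs_abs, abs_of_nonneg (b1_nonneg _ _)]
    exact mul_le_mul_of_nonneg_left (by simpa using hD y) (b1_nonneg _ _)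
  have hi3 : ∀ ζ, Integrable (fun y => kb γ (ζ - y) * |f y|) := fun ζ => by
    refine ((hfi.add (hi2 ζ)).const_mul 2).congr (Filter.Eventually.of_forall fun y => ?_)
    simp [kb]; ring
  have hb0 : 0 ≤ ∫ y, b1 γ y := integral_nonneg (b1_nonneg γ)
  have hf0 : 0 ≤ ∫ y, |f y| := integral_nonneg fun _ => abs_nonneg _
  refine ⟨2 * ((∫ y, |f y|) + (∫ y, b1 γ y) * D), by positivity, fun ζ => ⟨hi3 ζ, ?_⟩⟩
  have e1 : ∫ y, kb γ (ζ - y) * |f y| = 2 * ((∫ y, |f y|) + ∫ y, b1 γ (ζ - y) * |f y|) := by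
    rw [← integral_add hfi (hi2 ζ), ← integral_const_mul]
    congr 1; funext y; simp [kb]; ring
  have e2 : ∫ y, b1 γ (ζ - y) * |f y| ≤ ∫ y, b1 γ (ζ - y) * D := by
    refine integral_mono (hi2 ζ) ((hi ζ).mul_const D) fun y => ?_
    exact mul_le_mul_of_nonneg_left (by simpa using hD y) (b1_nonneg _ _)
  rw [integral_mul_const, integral_sub_left_eq_self (b1 γ) volume ζ] at e2
  rw [e1]; linarith

noncomputable def cv (γ : ℝ) (i j : Fin 3) (f : E3 → ℝ) (ζ : E3) : ℝ := ∫ y, Bij γ i j (ζ - y) * f y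

theorem cv_integrable {γ : ℝ} (hγ1 : -3 ≤ γ) (hγ2 : γ < -2) (i j : Fin 3) {f : E3 → ℝ} (hf : Dec f)
    (hm : AEStronglyMeasurable f) (ζ : E3) : Integrable (fun y => Bij γ i j (ζ - y) * f y) := by
  obtain ⟨C, -, hC⟩ := kb_int hγ1 hf hm
  refine (hC ζ).1.mono' ?_ (Filter.Eventually.of_forall fun y => ?_)
  · exact ((meas_Bij γ i j).comp (by fun_prop)).aestronglyMeasurable.mul hm
  · rw [Real.norm_eq_abs, abs_mul]
    exact mul_le_mul_of_nonneg_right (Bij_abs_le hγ2 i j _) (abs_nonneg _)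

theorem cv_bdd {γ : ℝ} (hγ1 : -3 ≤ γ) (hγ2 : γ < -2) (i j : Fin 3) {f : E3 → ℝ} (hf : Dec f)
    (hm : AEStronglyMeasurable f) : PG (cv γ i j f) := by
  obtain ⟨C, -, hC⟩ := kb_int hγ1 hf hm
  refine ⟨0, C, fun ζ => ?_⟩
  rw [pow_zero, mul_one]
  refine (abs_integral_le_integral_abs).trans (le_trans ?_ (hC ζ).2)
  refine integral_mono (cv_integrable hγ1 hγ2 i j hf hm ζ).abs (hC ζ).1 fun y => ?_
  simp only [abs_mul]
  exact mul_le_mul_of_nonneg_right (Bij_abs_le hγ2 i j _) (abs_nonneg _)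

theorem cv_swap (γ : ℝ) (i j : Fin 3) (f : E3 → ℝ) (ζ : E3) :
    cv γ i j f ζ = ∫ z, Bij γ i j z * f (ζ - z) := by
  unfold cv
  rw [← integral_sub_left_eq_self (fun z => Bij γ i j z * f (ζ - z)) volume ζ]
  simp

theorem peetre (a z : E3) : 1 + ‖z‖ ≤ (1 + ‖a - z‖) * (1 + ‖a‖) := by
  have : ‖z‖ ≤ ‖a - z‖ + ‖a‖ := by
    calc ‖z‖ = ‖a - (a - z)‖ := by simp
      _ ≤ ‖a‖ + ‖a - z‖ := norm_sub_le _ _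
      _ = _ := by ring
  nlinarith [norm_nonneg (a - z), norm_nonneg a]

theorem cv_hasFDerivAt {γ : ℝ} (hγ1 : -3 ≤ γ) (hγ2 : γ < -2) (i j : Fin 3) {f : E3 → ℝ} (hf : RD1 f)
    (ζ : E3) : HasFDerivAt (cv γ i j f) (∫ z, Bij γ i j z • fderiv ℝ f (ζ - z)) ζ ∧
      Integrable (fun z => Bij γ i j z • fderiv ℝ f (ζ - z)) := by
  have e : cv γ i j f = fun ζ => ∫ z, Bij γ i j z * f (ζ - z) := funext (cv_swap γ i j f)
  choose C hC0 hC using fun k => (hf.pdec k).exists_nonneg 4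
  let R : ℝ := 2 + ‖ζ‖
  let bound : E3 → ℝ := fun z => kb γ z * |((∑ k, C k) * R ^ 4) * (1 + ‖z‖) ^ (-(4:ℝ))|
  have hR : 0 < R := by positivity
  have hCs : 0 ≤ ∑ k, C k := Finset.sum_nonneg fun k _ => hC0 k
  have hfd : ∀ a ∈ Metric.ball ζ 1, ∀ z, ‖fderiv ℝ f (a - z)‖ ≤
      |((∑ k, C k) * R ^ 4) * (1 + ‖z‖) ^ (-(4:ℝ))| := by
    intro a ha z
    have h1 : (0:ℝ) < 1 + ‖z‖ := by positivity
    have hz : (1 + ‖z‖) ^ (-(4:ℝ)) = ((1 + ‖z‖) ^ 4)⁻¹ := by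
      rw [Real.rpow_neg h1.le]; norm_cast
    rw [hz, abs_of_nonneg (by positivity), ← div_eq_mul_inv, le_div_iff₀ (by positivity)]
    have ha' : 1 + ‖a‖ ≤ R := by
      have : ‖a‖ ≤ ‖ζ‖ + ‖a - ζ‖ := by
        calc ‖a‖ = ‖ζ + (a - ζ)‖ := by simp
          _ ≤ _ := norm_add_le _ _
      have h2 : ‖a - ζ‖ < 1 := by simpa [dist_eq_norm] using ha
      simp only [R]; linarith
    have hp : (1 + ‖z‖) ^ 4 ≤ (1 + ‖a - z‖) ^ 4 * R ^ 4 := by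
      rw [← mul_pow]
      refine pow_le_pow_left₀ h1.le ((peetre a z).trans ?_) 4
      gcongr
    calc ‖fderiv ℝ f (a - z)‖ * (1 + ‖z‖) ^ 4
        ≤ (∑ k, |pd k f (a - z)|) * ((1 + ‖a - z‖) ^ 4 * R ^ 4) := by
          gcongr; exact fderiv_norm_le f _
      _ = (∑ k, (1 + ‖a - z‖) ^ 4 * |pd k f (a - z)|) * R ^ 4 := by
          rw [← Finset.mul_sum]; ring
      _ ≤ _ := by
          gcongr with k; exact hC k _
  have hbm : Integrable bound := by
    have hb : Integrable (fun z : E3 => (1 + ‖z‖) ^ (-(4:ℝ)) * ((∑ k, C k) * R ^ 4)) := int_bracket.mul_const _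
    have h0 : ∀ z : E3, 0 ≤ (1 + ‖z‖) ^ (-(4:ℝ)) := fun z => by positivity
    have hle : ∀ z : E3, (1 + ‖z‖) ^ (-(4:ℝ)) ≤ 1 := fun z =>
      Real.rpow_le_one_of_one_le_of_nonpos (by linarith [norm_nonneg z]) (by norm_num)
    have hb2 : Integrable (fun z : E3 => b1 γ z * ((∑ k, C k) * R ^ 4)) := (int_b1 hγ1).mul_const _
    refine ((hb.add hb2).const_mul 2).mono' ?_ (Filter.Eventually.of_forall fun z => ?_)
    · have h2 : Measurable (fun z : E3 => |((∑ k, C k) * R ^ 4) * (1 + ‖z‖) ^ (-(4:ℝ))|) := by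
        have : Measurable (fun z : E3 => ((∑ k, C k) * R ^ 4) * (1 + ‖z‖) ^ (-(4:ℝ))) := by fun_prop
        exact this.abs
      exact ((meas_kb γ).mul h2).aestronglyMeasurable
    · have h3 : 0 ≤ (∑ k, C k) * R ^ 4 := by positivity
      simp only [bound, Pi.add_apply]
      rw [Real.norm_eq_abs, abs_mul, abs_abs, abs_of_nonneg (kb_nonneg _ _),
        abs_of_nonneg (mul_nonneg h3 (h0 z))]
      have := mul_le_mul_of_nonneg_left (hle z) (mul_nonneg (b1_nonneg γ z) h3)
      unfold kb
      nlinarith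
  have hFm : ∀ a, AEStronglyMeasurable (fun z => Bij γ i j z * f (a - z)) := fun a =>
    ((meas_Bij γ i j).mul (hf.cont.measurable.comp (by fun_prop))).aestronglyMeasurable
  have hF'm : AEStronglyMeasurable (fun z => Bij γ i j z • fderiv ℝ f (ζ - z)) := by
    exact ((meas_Bij γ i j).aestronglyMeasurable).smul
      (((measurable_fderiv ℝ f).comp (by fun_prop)).aestronglyMeasurable)
  have hbd : ∀ᵐ z, ∀ a ∈ Metric.ball ζ 1, ‖Bij γ i j z • fderiv ℝ f (a - z)‖ ≤ bound z := by
    refine Filter.Eventually.of_forall fun z a ha => ?_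
    rw [norm_smul, Real.norm_eq_abs]
    exact mul_le_mul (Bij_abs_le hγ2 i j z) (hfd a ha z) (norm_nonneg _) (kb_nonneg _ _)
  refine ⟨?_, hbm.mono' hF'm (hbd.mono fun z hz => hz ζ (Metric.mem_ball_self one_pos))⟩
  rw [e]
  refine hasFDerivAt_integral_of_dominated_of_fderiv_le (bound := bound)
    (F' := fun a z => Bij γ i j z • fderiv ℝ f (a - z)) (Metric.ball_mem_nhds ζ one_pos)
    (Filter.Eventually.of_forall hFm) ?_ hF'm hbd hbm ?_
  · have := (cv_integrable hγ1 hγ2 i j hf.dec hf.cont.aestronglyMeasurable ζ).comp_sub_left ζ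
    simpa using this
  · refine Filter.Eventually.of_forall fun z a _ => ?_
    have h1 : HasFDerivAt (fun a => f (a - z)) (fderiv ℝ f (a - z)) a := by
      rw [hasFDerivAt_comp_sub]; exact (hf.diff (a - z)).hasFDerivAt
    exact h1.const_mul _

theorem pd_cv {γ : ℝ} (hγ1 : -3 ≤ γ) (hγ2 : γ < -2) (i j k : Fin 3) {f : E3 → ℝ} (hf : RD1 f)
    (ζ : E3) : pd k (cv γ i j f) ζ = cv γ i j (pd k f) ζ := by
  obtain ⟨h1, h2⟩ := cv_hasFDerivAt hγ1 hγ2 i j hf ζ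
  rw [cv_swap]
  unfold pd
  rw [h1.fderiv, ContinuousLinearMap.integral_apply h2]
  simp

theorem cv_pg1 {γ : ℝ} (hγ1 : -3 ≤ γ) (hγ2 : γ < -2) (i j : Fin 3) {f : E3 → ℝ} (hf : RD1 f) :
    PG1 (cv γ i j f) := by
  refine ⟨fun ζ => (cv_hasFDerivAt hγ1 hγ2 i j hf ζ).1.differentiableAt,
    cv_bdd hγ1 hγ2 i j hf.dec hf.cont.aestronglyMeasurable, fun k => ?_⟩
  have : pd k (cv γ i j f) = cv γ i j (pd k f) := funext (pd_cv hγ1 hγ2 i j k hf)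
  rw [this]
  exact cv_bdd hγ1 hγ2 i j (hf.pdec k) (meas_pd k f).aestronglyMeasurable

theorem int_sub' {α : Type*} [MeasurableSpace α] {μ : Measure α} {f g : α → ℝ} (hf : Integrable f μ) (hg : Integrable g μ) :
    Integrable (fun x => f x - g x) μ := hf.sub hg
theorem int_add' {α : Type*} [MeasurableSpace α] {μ : Measure α} {f g : α → ℝ} (hf : Integrable f μ) (hg : Integrable g μ) :
    Integrable (fun x => f x + g x) μ := hf.add hg
theorem int_neg' {α : Type*} [MeasurableSpace α] {μ : Measure α} {f : α → ℝ} (hf : Integrable f μ) :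
    Integrable (fun x => - f x) μ := hf.neg

/-! ### Divergence form of the linearized operator -/
structure RD2 (u : E3 → ℝ) : Prop where
  r : RD1 u
  d : ∀ i, RD1 (pd i u)

/-- `U_i = ∂_i u + ξ_i/2 u = M^{1/2} ∂_i (M^{-1/2} u)` -/
noncomputable def Uf (u : E3 → ℝ) (i : Fin 3) (x : E3) : ℝ := pd i u x + x i / 2 * u x

theorem schwartz_rd2 (u : SchwartzMap E3 ℝ) : RD2 u := by
  refine ⟨schwartz_rd1 u, fun i => ?_⟩
  obtain ⟨v, hv⟩ := schwartz_pd u i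
  rw [hv]; exact schwartz_rd1 v

theorem PG1.half (i : Fin 3) : PG1 (fun x => x i / 2) := by
  simpa [div_eq_mul_inv] using (PG1.coord i).mul (PG1.const (1/2))

theorem RD1.Uf_dec {u : E3 → ℝ} (h : RD1 u) (i : Fin 3) : Dec (Uf u i) :=
  (h.pdec i).add (Dec.mul' (PG1.half i).pg h.dec)
theorem RD1.Uf_meas {u : E3 → ℝ} (h : RD1 u) (i : Fin 3) : Measurable (Uf u i) := by
  have h1 := meas_pd i u
  have h2 := h.cont.measurable
  unfold Uf; fun_prop
theorem RD2.Uf_rd1 {u : E3 → ℝ} (h : RD2 u) (i : Fin 3) : RD1 (Uf u i) :=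
  (h.d i).add (RD1.mul' (PG1.half i) h.r)

theorem pd_sqrtM_mul {u : E3 → ℝ} (h : RD1 u) (j : Fin 3) :
    pd j (fun ζ => sqrtM ζ * u ζ) = fun x => sqrtM x * (Uf u j x - x j * u x) := by
  funext x
  rw [pd_mul' diff_sqrtM h.diff, pd_sqrtM]
  unfold Uf; ring

theorem rd1_pd_Mx (j : Fin 3) : RD1 (pd j Mx) := by
  have : pd j Mx = fun x => -(x j) * Mx x := funext (pd_Mx j)
  rw [this]; exact RD1.mul' (PG1.coord j).neg rd1_Mx

theorem rd1_sM {u : E3 → ℝ} (h : RD1 u) : RD1 (fun ζ => sqrtM ζ * u ζ) := rd1_sqrtM.mul h.pg1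

theorem rd1_pd_sM {u : E3 → ℝ} (h : RD2 u) (j : Fin 3) : RD1 (pd j (fun ζ => sqrtM ζ * u ζ)) := by
  rw [pd_sqrtM_mul h.r]
  exact rd1_sqrtM.mul ((h.Uf_rd1 j).sub (RD1.mul' (PG1.coord j) h.r)).pg1

noncomputable def Jf (γ : ℝ) (u : E3 → ℝ) (i : Fin 3) (ζ : E3) : ℝ :=
  ∑ j, (cv γ i j Mx ζ * (Uf u j ζ - ζ j * u ζ) - cv γ i j (pd j Mx) ζ * u ζ
    - cv γ i j (fun ζ => sqrtM ζ * u ζ) ζ * (ζ j * sqrtM ζ)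
    - cv γ i j (pd j (fun ζ => sqrtM ζ * u ζ)) ζ * sqrtM ζ)

section
variable {γ : ℝ} (hγ1 : -3 ≤ γ) (hγ2 : γ < -2)

theorem Jf_rd1 (hγ1 : -3 ≤ γ) (hγ2 : γ < -2) {u : E3 → ℝ} (h : RD2 u) (i : Fin 3) : RD1 (Jf γ u i) := by
  refine RD1.sum _ fun j => ?_
  refine RD1.sub (RD1.sub (RD1.sub ?_ ?_) ?_) ?_
  · exact RD1.mul' (cv_pg1 hγ1 hγ2 i j rd1_Mx) ((h.Uf_rd1 j).sub (RD1.mul' (PG1.coord j) h.r))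
  · exact RD1.mul' (cv_pg1 hγ1 hγ2 i j (rd1_pd_Mx j)) h.r
  · exact RD1.mul' (cv_pg1 hγ1 hγ2 i j (rd1_sM h.r)) (RD1.mul' (PG1.coord j) rd1_sqrtM)
  · exact RD1.mul' (cv_pg1 hγ1 hγ2 i j (rd1_pd_sM h j)) rd1_sqrtM

theorem Q_inner (hγ1 : -3 ≤ γ) (hγ2 : γ < -2) {f g : E3 → ℝ} (hf : RD1 f) (i j : Fin 3) :
    (fun ζ => ∫ ξ', Bij γ i j (ζ - ξ') * (f ξ' * pd j g ζ - pd j f ξ' * g ζ)) =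
    fun ζ => cv γ i j f ζ * pd j g ζ - cv γ i j (pd j f) ζ * g ζ := by
  funext ζ
  unfold cv
  rw [← integral_mul_const, ← integral_mul_const, ← integral_sub]
  · congr 1; funext y; ring
  · exact (cv_integrable hγ1 hγ2 i j hf.dec hf.cont.aestronglyMeasurable ζ).mul_const _
  · exact (cv_integrable hγ1 hγ2 i j (hf.pdec j) (meas_pd j f).aestronglyMeasurable ζ).mul_const _

theorem Mx_rpow (x : E3) : (Mx x) ^ (-(1 : ℝ) / 2) = (sqrtM x)⁻¹ := by
  unfold sqrtM
  rw [Real.sqrt_eq_rpow, ← Real.rpow_neg (Mx_pos x).le]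
  congr 1; ring

theorem Lop_eq (hγ1 : -3 ≤ γ) (hγ2 : γ < -2) {u : E3 → ℝ} (h : RD2 u) (ξ : E3) :
    Lop γ u ξ = - ∑ i, (pd i (Jf γ u i) ξ - ξ i / 2 * Jf γ u i ξ) := by
  unfold Lop Qop
  have hs := rd1_sM h.r
  have hA : ∀ i j, Differentiable ℝ (fun ζ => cv γ i j Mx ζ * pd j (fun ζ => sqrtM ζ * u ζ) ζ
      - cv γ i j (pd j Mx) ζ * (sqrtM ζ * u ζ)) := fun i j =>
    ((cv_pg1 hγ1 hγ2 i j rd1_Mx).diff.mul (rd1_pd_sM h j).diff).sub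
      ((cv_pg1 hγ1 hγ2 i j (rd1_pd_Mx j)).diff.mul hs.diff)
  have hA' : ∀ i j, Differentiable ℝ (fun ζ => cv γ i j (fun ζ => sqrtM ζ * u ζ) ζ * pd j Mx ζ
      - cv γ i j (pd j (fun ζ => sqrtM ζ * u ζ)) ζ * Mx ζ) := fun i j =>
    ((cv_pg1 hγ1 hγ2 i j hs).diff.mul (rd1_pd_Mx j).diff).sub
      ((cv_pg1 hγ1 hγ2 i j (rd1_pd_sM h j)).diff.mul rd1_Mx.diff)
  simp only [Q_inner hγ1 hγ2 rd1_Mx, Q_inner hγ1 hγ2 hs]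
  rw [← Finset.sum_add_distrib]
  have key : ∀ i, (∑ j, pd i (fun ζ => cv γ i j Mx ζ * pd j (fun ζ => sqrtM ζ * u ζ) ζ
      - cv γ i j (pd j Mx) ζ * (sqrtM ζ * u ζ)) ξ) +
      (∑ j, pd i (fun ζ => cv γ i j (fun ζ => sqrtM ζ * u ζ) ζ * pd j Mx ζ
      - cv γ i j (pd j (fun ζ => sqrtM ζ * u ζ)) ζ * Mx ζ) ξ) =
      sqrtM ξ * (pd i (Jf γ u i) ξ - ξ i / 2 * Jf γ u i ξ) := by
    intro i
    rw [← pd_sum' Finset.univ (hA i), ← pd_sum' Finset.univ (hA' i), ← pd_add'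
      (by exact Differentiable.fun_sum fun j _ => hA i j) (by exact Differentiable.fun_sum fun j _ => hA' i j)]
    have : (fun y => (∑ j, (cv γ i j Mx y * pd j (fun ζ => sqrtM ζ * u ζ) y
      - cv γ i j (pd j Mx) y * (sqrtM y * u y))) +
      (∑ j, (cv γ i j (fun ζ => sqrtM ζ * u ζ) y * pd j Mx y
      - cv γ i j (pd j (fun ζ => sqrtM ζ * u ζ)) y * Mx y))) = fun y => sqrtM y * Jf γ u i y := by
      funext y
      rw [← Finset.sum_add_distrib]
      unfold Jf
      rw [Finset.mul_sum]
      refine Finset.sum_congr rfl fun j _ => ?_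
      have e1 : pd j (fun ζ => sqrtM ζ * u ζ) y = sqrtM y * (Uf u j y - y j * u y) :=
        congrFun (pd_sqrtM_mul h.r j) y
      rw [e1, pd_Mx, ← sqrtM_mul_self]
      ring
    rw [this, pd_mul' diff_sqrtM (Jf_rd1 hγ1 hγ2 h i).diff, pd_sqrtM]
    ring
  rw [Finset.sum_congr rfl fun i _ => key i, ← Finset.mul_sum, Mx_rpow]
  have := (sqrtM_pos ξ).ne'
  rw [neg_mul, ← mul_assoc, inv_mul_cancel₀ this, one_mul]

theorem rd1_int {f g : E3 → ℝ} (hf : Dec f) (hg : PG g) (hfm : Measurable f) (hgm : Measurable g) :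
    Integrable (fun x => f x * g x) :=
  (hf.mul hg).integrable (hfm.mul hgm).aestronglyMeasurable

theorem ipv_eq (hγ1 : -3 ≤ γ) (hγ2 : γ < -2) {u v : E3 → ℝ} (hu : RD2 u) (hv : RD1 v) :
    ipv (Lop γ u) v = ∑ i, ∫ ξ, Jf γ u i ξ * Uf v i ξ := by
  unfold ipv
  have hJ := Jf_rd1 hγ1 hγ2 hu
  have i1 : ∀ i, Integrable (fun x => pd i (Jf γ u i) x * v x) := fun i =>
    rd1_int ((hJ i).pdec i) hv.dec.pg (meas_pd _ _) hv.cont.measurable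
  have i2 : ∀ i, Integrable (fun x => Jf γ u i x * pd i v x) := fun i =>
    rd1_int (hJ i).dec (hv.pdec i).pg (hJ i).cont.measurable (meas_pd _ _)
  have i3 : ∀ i, Integrable (fun x => Jf γ u i x * v x) := fun i =>
    rd1_int (hJ i).dec hv.dec.pg (hJ i).cont.measurable hv.cont.measurable
  have i4 : ∀ i, Integrable (fun x => Jf γ u i x * (x i / 2 * v x)) := fun i =>
    rd1_int (hJ i).dec ((PG1.half i).pg.mul hv.dec.pg) (hJ i).cont.measurable
      ((PG1.half i).cont.measurable.mul hv.cont.measurable)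
  have ibp : ∀ i, ∫ x, Jf γ u i x * pd i v x = - ∫ x, pd i (Jf γ u i) x * v x := fun i =>
    integral_mul_fderiv_eq_neg_fderiv_mul_of_integrable (i1 i) (i2 i) (i3 i)
      (fun x _ => (hJ i).diff x) (fun x _ => hv.diff x)
  have e : ∀ i, ∫ ξ, Jf γ u i ξ * Uf v i ξ
      = ∫ ξ, (- (pd i (Jf γ u i) ξ * v ξ) + Jf γ u i ξ * (ξ i / 2 * v ξ)) := by
    intro i
    rw [integral_add (int_neg' (i1 i)) (i4 i), integral_neg, ← ibp i, ← integral_add (i2 i) (i4 i)]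
    congr 1; funext x; unfold Uf; ring
  rw [Finset.sum_congr rfl fun i _ => e i, ← integral_finsetSum]
  · congr 1; funext ξ
    rw [Lop_eq hγ1 hγ2 hu, neg_mul, Finset.sum_mul, ← Finset.sum_neg_distrib]
    refine Finset.sum_congr rfl fun i _ => ?_
    ring
  · intro i _; exact (i1 i).neg.add (i4 i)

theorem Bij_mul (γ : ℝ) (i : Fin 3) (z : E3) : ∑ j, Bij γ i j z * z j = 0 := by
  by_cases hz : z = 0
  · subst hz; simp
  have h : ‖z‖ ^ 2 ≠ 0 := by positivity
  have h3 := normsq3 z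
  simp only [Bij, Fin.sum_univ_three]
  fin_cases i <;> simp <;> field_simp <;> rw [h3] <;> ring

/-- pointwise integral formula for `J` -/
theorem Jf_eq (hγ1 : -3 ≤ γ) (hγ2 : γ < -2) {u : E3 → ℝ} (h : RD1 u) (i : Fin 3) (ζ : E3) :
    Jf γ u i ζ = ∑ j, (cv γ i j Mx ζ * Uf u j ζ - sqrtM ζ * cv γ i j (fun y => sqrtM y * Uf u j y) ζ) := by
  have hs := rd1_sM h
  have hc : ∀ j {f : E3 → ℝ} (hf : Dec f) (hm : Measurable f), Integrable (fun y => Bij γ i j (ζ - y) * f y) :=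
    fun j f hf hm => cv_integrable hγ1 hγ2 i j hf hm.aestronglyMeasurable ζ
  have hm1 := rd1_Mx.cont.measurable
  have hm2 := hs.cont.measurable
  have d1 : ∀ j, Dec (fun y => sqrtM y * Uf u j y) := fun j => dec_sqrtM.mul (h.Uf_dec j).pg
  have m1 : ∀ j, Measurable (fun y => sqrtM y * Uf u j y) := fun j =>
    diff_sqrtM.continuous.measurable.mul (h.Uf_meas j)
  have d3 := hs.pdec
  have i1 := fun j => (hc j rd1_Mx.dec hm1).mul_const (Uf u j ζ)
  have i1' := fun j => (hc j rd1_Mx.dec hm1).mul_const (Uf u j ζ - ζ j * u ζ)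
  have i2 := fun j => (hc j ((rd1_Mx.pdec j)) (meas_pd _ _)).mul_const (u ζ)
  have i3 := fun j => (hc j hs.dec hm2).mul_const (ζ j * sqrtM ζ)
  have i4 := fun j => (hc j (hs.pdec j) (meas_pd _ _)).mul_const (sqrtM ζ)
  have i5 := fun j => (hc j (d1 j) (m1 j)).const_mul (sqrtM ζ)
  have e1 : Jf γ u i ζ = ∫ y, ∑ j, (Bij γ i j (ζ - y) * Mx y * (Uf u j ζ - ζ j * u ζ)
      - Bij γ i j (ζ - y) * pd j Mx y * u ζ - Bij γ i j (ζ - y) * (sqrtM y * u y) * (ζ j * sqrtM ζ)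
      - Bij γ i j (ζ - y) * pd j (fun ζ => sqrtM ζ * u ζ) y * sqrtM ζ) := by
    rw [integral_finsetSum]
    · unfold Jf cv
      refine Finset.sum_congr rfl fun j _ => ?_
      rw [← integral_mul_const, ← integral_mul_const, ← integral_mul_const, ← integral_mul_const,
        ← integral_sub (i1' j) (i2 j), ← integral_sub (int_sub' (i1' j) (i2 j)) (i3 j),
        ← integral_sub (int_sub' (int_sub' (i1' j) (i2 j)) (i3 j)) (i4 j)]
    · intro j _; exact (((i1' j).sub (i2 j)).sub (i3 j)).sub (i4 j)
  have e2 : ∑ j, (cv γ i j Mx ζ * Uf u j ζ - sqrtM ζ * cv γ i j (fun y => sqrtM y * Uf u j y) ζ) =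
      ∫ y, ∑ j, (Bij γ i j (ζ - y) * Mx y * Uf u j ζ
        - sqrtM ζ * (Bij γ i j (ζ - y) * (sqrtM y * Uf u j y))) := by
    rw [integral_finsetSum]
    · unfold cv
      refine Finset.sum_congr rfl fun j _ => ?_
      rw [← integral_mul_const, ← integral_const_mul, ← integral_sub (i1 j) (i5 j)]
    · intro j _; exact (i1 j).sub (i5 j)
  rw [e1, e2]
  congr 1; funext y
  have hB := Bij_mul γ i (ζ - y)
  have e3 : ∀ j, pd j (fun ζ => sqrtM ζ * u ζ) y = sqrtM y * (Uf u j y - y j * u y) := fun j =>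
    congrFun (pd_sqrtM_mul h j) y
  rw [← sub_eq_zero, ← Finset.sum_sub_distrib]
  have : ∀ j, (Bij γ i j (ζ - y) * Mx y * (Uf u j ζ - ζ j * u ζ)
      - Bij γ i j (ζ - y) * pd j Mx y * u ζ - Bij γ i j (ζ - y) * (sqrtM y * u y) * (ζ j * sqrtM ζ)
      - Bij γ i j (ζ - y) * pd j (fun ζ => sqrtM ζ * u ζ) y * sqrtM ζ)
      - (Bij γ i j (ζ - y) * Mx y * Uf u j ζ
        - sqrtM ζ * (Bij γ i j (ζ - y) * (sqrtM y * Uf u j y)))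
      = (Bij γ i j (ζ - y) * (ζ - y) j) * (- (Mx y * u ζ) - sqrtM y * sqrtM ζ * u y) := by
    intro j
    rw [e3, pd_Mx]
    have : (ζ - y) j = ζ j - y j := rfl
    rw [this]; ring
  rw [Finset.sum_congr rfl fun j _ => this j, ← Finset.sum_mul, hB, zero_mul]

/-- kernel elements are annihilated -/
theorem Lop_kernel (hγ1 : -3 ≤ γ) (hγ2 : γ < -2) {u : E3 → ℝ} (h : RD2 u) (b : Fin 3 → ℝ) (c : ℝ)
    (hU : ∀ j x, Uf u j x = (b j + c * x j) * sqrtM x) (ξ : E3) : Lop γ u ξ = 0 := by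
  have hJ : ∀ i, Jf γ u i = fun _ => 0 := by
    intro i; funext ζ
    rw [Jf_eq hγ1 hγ2 h.r]
    unfold cv
    have d1 : ∀ j, Dec (fun y => sqrtM y * Uf u j y) := fun j => dec_sqrtM.mul (h.r.Uf_dec j).pg
    have m1 : ∀ j, Measurable (fun y => sqrtM y * Uf u j y) := fun j =>
      diff_sqrtM.continuous.measurable.mul (h.r.Uf_meas j)
    have i1 := fun j => (cv_integrable hγ1 hγ2 i j rd1_Mx.dec rd1_Mx.cont.aestronglyMeasurable ζ).mul_const (Uf u j ζ)
    have i5 := fun j => (cv_integrable hγ1 hγ2 i j (d1 j) (m1 j).aestronglyMeasurable ζ).const_mul (sqrtM ζ)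
    simp only [← integral_mul_const, ← integral_const_mul]
    simp only [← integral_sub (i1 _) (i5 _)]
    rw [← integral_finsetSum _ (fun j _ => int_sub' (i1 j) (i5 j))]
    refine (integral_congr_ae (Filter.Eventually.of_forall fun y => ?_)).trans (integral_zero E3 ℝ)
    have : ∀ j, (Bij γ i j (ζ - y) * Mx y * Uf u j ζ
        - sqrtM ζ * (Bij γ i j (ζ - y) * (sqrtM y * Uf u j y)))
        = (Bij γ i j (ζ - y) * (ζ - y) j) * (c * Mx y * sqrtM ζ) := by
      intro j
      have e : (ζ - y) j = ζ j - y j := rfl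
      rw [e, hU, hU, ← sqrtM_mul_self]; ring
    simp only [this]
    rw [← Finset.sum_mul, Bij_mul, zero_mul]
  rw [Lop_eq hγ1 hγ2 h]
  simp [hJ, pd_const']
end

/-! ### The symmetric quadratic form -/
theorem prod_int {γ : ℝ} (hγ1 : -3 ≤ γ) (hγ2 : γ < -2) (i j : Fin 3) {φ ψ : E3 → ℝ}
    (hφ : Dec φ) (hφm : Measurable φ) (hψ : Dec ψ) (hψm : Measurable ψ) :
    Integrable (fun p : E3 × E3 => Bij γ i j (p.1 - p.2) * (φ p.1 * ψ p.2)) (volume.prod volume) := by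
  have hB := meas_Bij γ i j
  have hm : Measurable (fun p : E3 × E3 => Bij γ i j (p.1 - p.2) * (φ p.1 * ψ p.2)) := by
    have h1 : Measurable (fun p : E3 × E3 => Bij γ i j (p.1 - p.2)) :=
      hB.comp (measurable_fst.sub measurable_snd)
    exact h1.mul ((hφm.comp measurable_fst).mul (hψm.comp measurable_snd))
  obtain ⟨C, hC0, hC⟩ := kb_int hγ1 hψ hψm.aestronglyMeasurable
  have e : ∀ x, (fun y => Bij γ i j (x - y) * (φ x * ψ y)) = fun y => φ x * (Bij γ i j (x - y) * ψ y) := by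
    intro x; funext y; ring
  rw [integrable_prod_iff hm.aestronglyMeasurable]
  constructor
  · refine Filter.Eventually.of_forall fun x => ?_
    simp only [e]
    exact (cv_integrable hγ1 hγ2 i j hψ hψm.aestronglyMeasurable x).const_mul _
  · have hi := (hφ.integrable hφm.aestronglyMeasurable).abs.mul_const C
    refine hi.mono' ?_ (Filter.Eventually.of_forall fun x => ?_)
    · exact (hm.norm.aestronglyMeasurable (μ := (volume : Measure E3).prod volume)).integral_prod_right'
    · rw [Real.norm_eq_abs, abs_of_nonneg (integral_nonneg fun y => norm_nonneg _)]
      have : ∀ y, ‖Bij γ i j (x - y) * (φ x * ψ y)‖ = |φ x| * (|Bij γ i j (x - y)| * |ψ y|) := by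
        intro y; rw [Real.norm_eq_abs, abs_mul, abs_mul]; ring
      simp only [this]
      rw [integral_const_mul]
      refine mul_le_mul_of_nonneg_left ?_ (abs_nonneg _)
      refine le_trans (integral_mono_of_nonneg (Filter.Eventually.of_forall fun y => by positivity) (hC x).1
        (Filter.Eventually.of_forall fun y => ?_)) (hC x).2
      exact mul_le_mul_of_nonneg_right (Bij_abs_le hγ2 i j _) (abs_nonneg _)

/-- `w = M'^{1/2} U - M^{1/2} U'` -/
noncomputable def wf (u : E3 → ℝ) (i : Fin 3) (p : E3 × E3) : ℝ :=
  sqrtM p.2 * Uf u i p.1 - sqrtM p.1 * Uf u i p.2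

noncomputable def Tf (γ : ℝ) (u v : E3 → ℝ) (p : E3 × E3) : ℝ :=
  ∑ i, ∑ j, Bij γ i j (p.1 - p.2) * (wf v i p * wf u j p)

section
variable {γ : ℝ}

theorem Af_int (hγ1 : -3 ≤ γ) (hγ2 : γ < -2) (i j : Fin 3) {u v : E3 → ℝ} (hu : RD1 u) (hv : RD1 v) :
    Integrable (fun p : E3 × E3 => Bij γ i j (p.1 - p.2) * ((Uf v i p.1 * Uf u j p.1) * Mx p.2)) (volume.prod volume) :=
  prod_int hγ1 hγ2 i j ((hv.Uf_dec i).mul (hu.Uf_dec j).pg) ((hv.Uf_meas i).mul (hu.Uf_meas j)) rd1_Mx.dec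
    rd1_Mx.cont.measurable

theorem Cf_int (hγ1 : -3 ≤ γ) (hγ2 : γ < -2) (i j : Fin 3) {u v : E3 → ℝ} (hu : RD1 u) (hv : RD1 v) :
    Integrable (fun p : E3 × E3 => Bij γ i j (p.1 - p.2) * ((sqrtM p.1 * Uf v i p.1) * (sqrtM p.2 * Uf u j p.2)))
      (volume.prod volume) :=
  prod_int hγ1 hγ2 i j (φ := fun x => sqrtM x * Uf v i x) (ψ := fun x => sqrtM x * Uf u j x)
    (dec_sqrtM.mul (hv.Uf_dec i).pg) (diff_sqrtM.continuous.measurable.mul (hv.Uf_meas i))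
    (dec_sqrtM.mul (hu.Uf_dec j).pg) (diff_sqrtM.continuous.measurable.mul (hu.Uf_meas j))

theorem Tf_eq (γ : ℝ) (u v : E3 → ℝ) (p : E3 × E3) :
    Tf γ u v p = ∑ i, ∑ j, (
      (Bij γ i j (p.1 - p.2) * ((Uf v i p.1 * Uf u j p.1) * Mx p.2)
       - Bij γ i j (p.1 - p.2) * ((sqrtM p.1 * Uf v i p.1) * (sqrtM p.2 * Uf u j p.2))) +
      (Bij γ i j (p.swap.1 - p.swap.2) * ((Uf v i p.swap.1 * Uf u j p.swap.1) * Mx p.swap.2)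
       - Bij γ i j (p.swap.1 - p.swap.2) * ((sqrtM p.swap.1 * Uf v i p.swap.1) * (sqrtM p.swap.2 * Uf u j p.swap.2)))) := by
  unfold Tf wf
  refine Finset.sum_congr rfl fun i _ => Finset.sum_congr rfl fun j _ => ?_
  have : Bij γ i j (p.swap.1 - p.swap.2) = Bij γ i j (p.1 - p.2) := by
    rw [← Bij_neg]; simp
  rw [this, ← sqrtM_mul_self, ← sqrtM_mul_self]
  simp only [Prod.fst_swap, Prod.snd_swap]
  ring

theorem swap_int {f : E3 × E3 → ℝ} (h : Integrable f (volume.prod volume)) :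
    Integrable (fun p => f p.swap) ((volume : Measure E3).prod volume) := h.swap
theorem swapE_integral (f : E3 × E3 → ℝ) :
    ∫ p, f p.swap ∂((volume : Measure E3).prod volume) = ∫ p, f p ∂((volume : Measure E3).prod volume) :=
  integral_prod_swap f

theorem Tf_int (hγ1 : -3 ≤ γ) (hγ2 : γ < -2) {u v : E3 → ℝ} (hu : RD1 u) (hv : RD1 v) :
    Integrable (Tf γ u v) (volume.prod volume) := by
  have : Tf γ u v = fun p => _ := funext (Tf_eq γ u v)
  rw [this]
  refine integrable_finsetSum _ fun i _ => integrable_finsetSum _ fun j _ => ?_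
  exact int_add' (int_sub' (Af_int hγ1 hγ2 i j hu hv) (Cf_int hγ1 hγ2 i j hu hv))
    (swap_int (int_sub' (Af_int hγ1 hγ2 i j hu hv) (Cf_int hγ1 hγ2 i j hu hv)))

theorem form_eq (hγ1 : -3 ≤ γ) (hγ2 : γ < -2) {u v : E3 → ℝ} (hu : RD2 u) (hv : RD1 v) :
    ipv (Lop γ u) v = 1 / 2 * ∫ p, Tf γ u v p ∂(volume.prod volume) := by
  have iA := fun i j => Af_int hγ1 hγ2 i j hu.r hv
  have iC := fun i j => Cf_int hγ1 hγ2 i j hu.r hv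
  have iAC := fun i j => int_sub' (iA i j) (iC i j)
  rw [ipv_eq hγ1 hγ2 hu hv]
  simp only [Tf_eq]
  rw [integral_finsetSum _ fun i _ => integrable_finsetSum _ fun j _ =>
    int_add' (iAC i j) (swap_int (iAC i j)), Finset.mul_sum]
  refine Finset.sum_congr rfl fun i _ => ?_
  rw [integral_finsetSum _ fun j _ => int_add' (iAC i j) (swap_int (iAC i j)), Finset.mul_sum]
  have e : ∀ j, 1 / 2 * ∫ p, ((Bij γ i j (p.1 - p.2) * ((Uf v i p.1 * Uf u j p.1) * Mx p.2)
       - Bij γ i j (p.1 - p.2) * ((sqrtM p.1 * Uf v i p.1) * (sqrtM p.2 * Uf u j p.2))) +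
      (Bij γ i j (p.swap.1 - p.swap.2) * ((Uf v i p.swap.1 * Uf u j p.swap.1) * Mx p.swap.2)
       - Bij γ i j (p.swap.1 - p.swap.2) * ((sqrtM p.swap.1 * Uf v i p.swap.1) * (sqrtM p.swap.2 * Uf u j p.swap.2))))
         ∂((volume : Measure E3).prod volume)
      = ∫ ξ, (cv γ i j Mx ξ * Uf u j ξ - sqrtM ξ * cv γ i j (fun y => sqrtM y * Uf u j y) ξ) * Uf v i ξ := by
    intro j
    rw [integral_add (iAC i j) (swap_int (iAC i j)),
      swapE_integral (fun p => (Bij γ i j (p.1 - p.2) * ((Uf v i p.1 * Uf u j p.1) * Mx p.2)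
       - Bij γ i j (p.1 - p.2) * ((sqrtM p.1 * Uf v i p.1) * (sqrtM p.2 * Uf u j p.2)))),
       integral_prod _ (iAC i j)]
    rw [← two_mul, ← mul_assoc]; norm_num
    congr 1; funext ξ
    have h1 := (cv_integrable hγ1 hγ2 i j rd1_Mx.dec rd1_Mx.cont.aestronglyMeasurable ξ).mul_const (Uf v i ξ * Uf u j ξ)
    have h2 := (cv_integrable hγ1 hγ2 i j (f := fun y => sqrtM y * Uf u j y) (dec_sqrtM.mul (hu.r.Uf_dec j).pg)
      (diff_sqrtM.continuous.measurable.mul (hu.r.Uf_meas j)).aestronglyMeasurable ξ).mul_const (sqrtM ξ * Uf v i ξ)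
    unfold cv
    calc _ = ∫ y, (Bij γ i j (ξ - y) * Mx y * (Uf v i ξ * Uf u j ξ) - 
          Bij γ i j (ξ - y) * (sqrtM y * Uf u j y) * (sqrtM ξ * Uf v i ξ)) := by
            congr 1; funext y; ring
      _ = _ := by
        rw [integral_sub h1 h2, integral_mul_const, integral_mul_const]; ring
  rw [Finset.sum_congr rfl fun j _ => e j, ← integral_finsetSum]
  · congr 1; funext ξ
    rw [Jf_eq hγ1 hγ2 hu.r, Finset.sum_mul]
  · intro j _
    have d1 : Dec (fun y => sqrtM y * Uf u j y) := dec_sqrtM.mul (hu.r.Uf_dec j).pg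
    have c1 := cv_pg1 hγ1 hγ2 i j (rd1_sqrtM.mul (hu.Uf_rd1 j).pg1)
    have c2 := cv_pg1 hγ1 hγ2 i j rd1_Mx
    have := ((RD1.mul' c2 (hu.Uf_rd1 j)).sub (rd1_sqrtM.mul c1))
    exact rd1_int this.dec (hv.Uf_dec i).pg this.cont.measurable (hv.Uf_meas i)

theorem Tf_symm (γ : ℝ) (u v : E3 → ℝ) (p : E3 × E3) : Tf γ u v p = Tf γ v u p := by
  unfold Tf
  rw [Finset.sum_comm]
  refine Finset.sum_congr rfl fun i _ => Finset.sum_congr rfl fun j _ => ?_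
  rw [Bij_symm]; ring

/-- squared cross product -/
def cr (z w : Fin 3 → ℝ) : ℝ :=
  (z 1 * w 2 - z 2 * w 1) ^ 2 + (z 2 * w 0 - z 0 * w 2) ^ 2 + (z 0 * w 1 - z 1 * w 0) ^ 2
theorem cr_nonneg (z w : Fin 3 → ℝ) : 0 ≤ cr z w := by unfold cr; positivity

theorem Bij_quad (hγ2 : γ < -2) (z : E3) (w : Fin 3 → ℝ) :
    ∑ i, ∑ j, Bij γ i j z * (w i * w j) = ‖z‖ ^ γ * cr z w := by
  by_cases hz : z = 0
  · subst hz
    simp [Bij, cr, Real.zero_rpow (by linarith : γ + 2 ≠ 0)]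
  have h : ‖z‖ ^ 2 ≠ 0 := by positivity
  have h3 := normsq3 z
  have e : ‖z‖ ^ (γ + 2) = ‖z‖ ^ γ * ‖z‖ ^ 2 := by
    rw [Real.rpow_add (by positivity)]; norm_num
  simp only [Bij, Fin.sum_univ_three, cr, e]
  generalize ‖z‖ ^ γ = A
  simp
  field_simp
  rw [h3]; ring

theorem Tf_self (hγ2 : γ < -2) (u : E3 → ℝ) (p : E3 × E3) :
    Tf γ u u p = ‖p.1 - p.2‖ ^ γ * cr (p.1 - p.2 : E3) (fun i => wf u i p) :=
  Bij_quad hγ2 _ _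

theorem Lop_symm (hγ1 : -3 ≤ γ) (hγ2 : γ < -2) {u v : E3 → ℝ} (hu : RD2 u) (hv : RD2 v) :
    ipv (Lop γ u) v = ipv u (Lop γ v) := by
  have : ipv u (Lop γ v) = ipv (Lop γ v) u := by
    unfold ipv; congr 1; funext x; ring
  rw [this, form_eq hγ1 hγ2 hu hv.r, form_eq hγ1 hγ2 hv hu.r]
  simp only [Tf_symm γ u v]

theorem Lop_nonneg (hγ1 : -3 ≤ γ) (hγ2 : γ < -2) {u : E3 → ℝ} (hu : RD2 u) :
    0 ≤ ipv (Lop γ u) u := by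
  rw [form_eq hγ1 hγ2 hu hu.r]
  refine mul_nonneg (by norm_num) (integral_nonneg fun p => ?_)
  rw [Tf_self hγ2]
  exact mul_nonneg (by positivity) (cr_nonneg _ _)
end

/-! ### Finite rank argument (averaging against moments) -/
section
variable {α : Type*} [MeasurableSpace α] {μ : Measure α}

set_option linter.unusedSectionVars false
theorem l2_mul {f g : α → ℝ} (hf : MemLp f 2 μ) (hg : MemLp g 2 μ) : Integrable (fun x => f x * g x) μ :=
  hf.integrable_mul hg
theorem l2_sq {f : α → ℝ} (hf : MemLp f 2 μ) : Integrable (fun x => f x ^ 2) μ := hf.integrable_sq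

theorem cs_int {f g : α → ℝ} (hf : MemLp f 2 μ) (hg : MemLp g 2 μ) :
    (∫ x, f x * g x ∂μ) ^ 2 ≤ (∫ x, f x ^ 2 ∂μ) * ∫ x, g x ^ 2 ∂μ := by
  have h : ∀ t : ℝ, 0 ≤ (∫ x, g x ^ 2 ∂μ) * (t * t) + (2 * ∫ x, f x * g x ∂μ) * t + ∫ x, f x ^ 2 ∂μ := by
    intro t
    have e : ∫ x, (f x + t * g x) ^ 2 ∂μ =
        (∫ x, g x ^ 2 ∂μ) * (t * t) + (2 * ∫ x, f x * g x ∂μ) * t + ∫ x, f x ^ 2 ∂μ := by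
      have : ∀ x, (f x + t * g x) ^ 2 = (g x ^ 2 * (t * t) + (f x * g x) * (2 * t)) + f x ^ 2 := by intro x; ring
      simp only [this]
      rw [integral_add (int_add' ((l2_sq hg).mul_const _) ((l2_mul hf hg).mul_const _)) (l2_sq hf),
        integral_add ((l2_sq hg).mul_const _) ((l2_mul hf hg).mul_const _), integral_mul_const, integral_mul_const]
      ring
    rw [← e]; exact integral_nonneg fun x => sq_nonneg _
  have := discrim_le_zero h
  unfold discrim at this
  nlinarith

theorem l2_prod [SFinite μ] {f g : α → ℝ} (hf : MemLp f 2 μ) (hg : MemLp g 2 μ) :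
    MemLp (fun p : α × α => f p.1 * g p.2) 2 (μ.prod μ) := by
  have hm : AEStronglyMeasurable (fun p : α × α => f p.1 * g p.2) (μ.prod μ) := hf.1.comp_fst.mul hg.1.comp_snd
  rw [memLp_two_iff_integrable_sq hm]
  have := (l2_sq hf).mul_prod (l2_sq hg)
  refine this.congr (Filter.Eventually.of_forall fun p => ?_)
  simp only; ring
end

noncomputable def Hf (G : Fin 3 → E3 → ℝ) (a b : Fin 3) (x y : E3) : ℝ :=
  (x a - y a) * (G b x - G b y) - (x b - y b) * (G a x - G a y)
noncomputable def Df (μ : Measure E3) (G : Fin 3 → E3 → ℝ) (a b : Fin 3) : ℝ := ∫ x, ∫ y, Hf G a b x y ^ 2 ∂μ ∂μ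

structure Adm (μ : Measure E3) (G : Fin 3 → E3 → ℝ) : Prop where
  x : ∀ a, MemLp (fun x : E3 => x a) 2 μ
  g : ∀ a, MemLp (G a) 2 μ
  xg : ∀ a b, MemLp (fun x : E3 => x a * G b x) 2 μ

section
variable {μ : Measure E3} [IsFiniteMeasure μ] {G : Fin 3 → E3 → ℝ}

theorem Adm.H_y (h : Adm μ G) (a b : Fin 3) (x : E3) : MemLp (fun y => Hf G a b x y) 2 μ := by
  have c : ∀ c : ℝ, MemLp (fun _ : E3 => c) 2 μ := fun c => memLp_const c
  have : (fun y => Hf G a b x y) = fun y => ((x a * G b x - x b * G a x) - x a * G b y - G b x * y a + y a * G b y)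
      + x b * G a y + G a x * y b - y b * G a y := by
    funext y; unfold Hf; ring
  rw [this]
  exact ((((((c _).sub ((h.g b).const_mul _)).sub ((h.x a).const_mul _)).add (h.xg a b)).add
    ((h.g a).const_mul _)).add ((h.x b).const_mul _)).sub (h.xg b a)

theorem Adm.H_p (h : Adm μ G) (a b : Fin 3) : MemLp (fun p : E3 × E3 => Hf G a b p.1 p.2) 2 (μ.prod μ) := by
  have c : MemLp (fun _ : E3 => (1:ℝ)) 2 μ := memLp_const 1
  have t : ∀ a b, MemLp (fun p : E3 × E3 => (p.1 a - p.2 a) * (G b p.1 - G b p.2)) 2 (μ.prod μ) := by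
    intro a b
    have : (fun p : E3 × E3 => (p.1 a - p.2 a) * (G b p.1 - G b p.2)) = fun p : E3 × E3 => 
        (p.1 a * G b p.1) * 1 - p.1 a * G b p.2 - G b p.1 * p.2 a + 1 * (p.2 a * G b p.2) := by
      funext p; ring
    rw [this]
    exact (((l2_prod (h.xg a b) c).sub (l2_prod (h.x a) (h.g b))).sub (l2_prod (h.g b) (h.x a))).add
      (l2_prod c (h.xg a b))
  exact (t a b).sub (t b a)

theorem Df_eq (h : Adm μ G) (a b : Fin 3) :
    Df μ G a b = ∫ p, Hf G a b p.1 p.2 ^ 2 ∂(μ.prod μ) := by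
  rw [integral_prod _ (l2_sq (h.H_p a b))]; rfl

theorem Df_nonneg (a b : Fin 3) : 0 ≤ Df μ G a b := 
  integral_nonneg fun _ => integral_nonneg fun _ => sq_nonneg _

/-- averaging in the second variable -/
theorem avg_le (h : Adm μ G) (a b : Fin 3) {φ : E3 → ℝ} (hφ : MemLp φ 2 μ) {F : E3 → ℝ} 
    (hF : ∀ x, ∫ y, φ y * Hf G a b x y ∂μ = F x) :
    ∫ x, F x ^ 2 ∂μ ≤ (∫ y, φ y ^ 2 ∂μ) * Df μ G a b := by
  unfold Df
  rw [← integral_const_mul]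
  refine integral_mono_of_nonneg (Filter.Eventually.of_forall fun x => sq_nonneg _) ?_
    (Filter.Eventually.of_forall fun x => ?_)
  · exact ((l2_sq (h.H_p a b)).integral_prod_left).const_mul _
  · simp only
    rw [← hF]
    exact cs_int hφ (h.H_y a b x)

theorem H_expand (h : Adm μ G) (a b : Fin 3) {φ : E3 → ℝ} (hφ : MemLp φ 2 μ) (x : E3) :
    ∫ y, φ y * Hf G a b x y ∂μ = (x a * G b x - x b * G a x) * (∫ y, φ y ∂μ) - x a * (∫ y, φ y * G b y ∂μ)
      - G b x * (∫ y, φ y * y a ∂μ) + (∫ y, φ y * (y a * G b y) ∂μ) + x b * (∫ y, φ y * G a y ∂μ)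
      + G a x * (∫ y, φ y * y b ∂μ) - ∫ y, φ y * (y b * G a y) ∂μ := by
  have i0 : Integrable φ μ := hφ.integrable (by norm_num)
  have i1 := (i0.const_mul (x a * G b x - x b * G a x))
  have i2 := (l2_mul hφ (h.g b)).const_mul (x a)
  have i3 := (l2_mul hφ (h.x a)).const_mul (G b x)
  have i4 := l2_mul hφ (h.xg a b)
  have i5 := (l2_mul hφ (h.g a)).const_mul (x b)
  have i6 := (l2_mul hφ (h.x b)).const_mul (G a x)
  have i7 := l2_mul hφ (h.xg b a)
  have e : ∀ y, φ y * Hf G a b x y = (x a * G b x - x b * G a x) * φ y - x a * (φ y * G b y)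
      - G b x * (φ y * y a) + φ y * (y a * G b y) + x b * (φ y * G a y) + G a x * (φ y * y b) - φ y * (y b * G a y) := by
    intro y; unfold Hf; ring
  simp only [e]
  rw [integral_sub (int_add' (int_add' (int_add' (int_sub' (int_sub' i1 i2) i3) i4) i5) i6) i7,
    integral_add (int_add' (int_add' (int_sub' (int_sub' i1 i2) i3) i4) i5) i6,
    integral_add (int_add' (int_sub' (int_sub' i1 i2) i3) i4) i5,
    integral_add (int_sub' (int_sub' i1 i2) i3) i4,
    integral_sub (int_sub' i1 i2) i3, integral_sub i1 i2]
  simp only [integral_const_mul]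

structure Mom (μ : Measure E3) (m0 s : ℝ) : Prop where
  m0pos : 0 < m0
  spos : 0 < s
  h0 : ∫ _, (1:ℝ) ∂μ = m0
  h1 : ∀ a, ∫ x : E3, x a ∂μ = 0
  h2 : ∀ a b, ∫ x : E3, x a * x b ∂μ = if a = b then s else 0

variable {m0 s : ℝ}

theorem F_le (h : Adm μ G) (hm : Mom μ m0 s) (hG : ∀ j, ∫ x, G j x ∂μ = 0) (k a b : Fin 3) :
    ∫ x : E3, (- x a * (∫ y, y k * G b y ∂μ) - (if k = a then s else 0) * G b x + x b * (∫ y, y k * G a y ∂μ)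
      + (if k = b then s else 0) * G a x) ^ 2 ∂μ ≤ s * Df μ G a b := by
  set F : E3 → ℝ := fun x => - x a * (∫ y, y k * G b y ∂μ) - (if k = a then s else 0) * G b x + x b * (∫ y, y k * G a y ∂μ)
      + (if k = b then s else 0) * G a x with hFdef
  have e1 : ∀ x, ∫ y, y k * Hf G a b x y ∂μ = F x + ((∫ y, y k * (y a * G b y) ∂μ) - ∫ y, y k * (y b * G a y) ∂μ) := by
    intro x
    rw [H_expand h a b (h.x k), hm.h1, hm.h2, hm.h2, hFdef]
    ring
  have h3 := avg_le h a b (h.x k) e1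
  have e2 : ∫ y : E3, y k ^ 2 ∂μ = s := by
    have := hm.h2 k k
    simpa [sq] using this
  rw [e2] at h3
  refine le_trans ?_ h3
  generalize (∫ y, y k * (y a * G b y) ∂μ) - ∫ y, y k * (y b * G a y) ∂μ = τ
  have i1 := (h.x a).neg.mul_const (∫ y, y k * G b y ∂μ)
  have i2 := (h.g b).const_mul (if k = a then s else 0)
  have i3 := (h.x b).mul_const (∫ y, y k * G a y ∂μ)
  have i4 := (h.g a).const_mul (if k = b then s else 0)
  have hF : MemLp F 2 μ := ((i1.sub i2).add i3).add i4
  have hF0 : ∫ x, F x ∂μ = 0 := by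
    have t : ∀ {f : E3 → ℝ}, MemLp f 2 μ → Integrable f μ := fun h => h.integrable (by norm_num)
    have j1 : Integrable (fun x : E3 => - x a * (∫ y, y k * G b y ∂μ)) μ := t i1
    have j2 := t i2
    have j3 := t i3
    have j4 := t i4
    rw [hFdef]
    rw [integral_add (int_add' (int_sub' j1 j2) j3) j4, integral_add (int_sub' j1 j2) j3, integral_sub j1 j2]
    simp only [integral_const_mul, integral_mul_const, hG, hm.h1, integral_neg]
    ring
  have e3 : ∫ x, (F x + τ) ^ 2 ∂μ = ∫ x, F x ^ 2 ∂μ + τ ^ 2 * m0 := by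
    have : ∀ x, (F x + τ) ^ 2 = (F x ^ 2 + F x * (2 * τ)) + (τ ^ 2) * 1 := by intro x; ring
    simp only [this]
    rw [integral_add (int_add' (l2_sq hF) ((hF.integrable (by norm_num)).mul_const _)) (integrable_const _),
      integral_add (l2_sq hF) ((hF.integrable (by norm_num)).mul_const _), integral_mul_const, hF0,
      integral_const_mul, hm.h0]
    ring
  rw [e3]
  have := hm.m0pos
  have : 0 ≤ τ ^ 2 * m0 := by positivity
  linarith

theorem P_le (h : Adm μ G) (hm : Mom μ m0 s) (hG : ∀ j, ∫ x, G j x ∂μ = 0) (a b : Fin 3) :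
    ∫ x : E3, (m0 * (x a * G b x - x b * G a x) + ((∫ y, y a * G b y ∂μ) - ∫ y, y b * G a y ∂μ)) ^ 2 ∂μ
      ≤ m0 * Df μ G a b := by
  have c : MemLp (fun _ : E3 => (1:ℝ)) 2 μ := memLp_const 1
  have := avg_le h a b c (F := fun x => m0 * (x a * G b x - x b * G a x) + ((∫ y, y a * G b y ∂μ) - ∫ y, y b * G a y ∂μ)) ?_
  · simpa [hm.h0] using this
  · intro x
    rw [H_expand h a b c, hm.h0]
    simp only [one_mul, hG, hm.h1]
    ring

/-- two-term quadratic -/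
theorem quad_x (h : Adm μ G) (hm : Mom μ m0 s) {a b : Fin 3} (hab : a ≠ b) (p q : ℝ) :
    ∫ x : E3, (x a * p + x b * q) ^ 2 ∂μ = s * (p ^ 2 + q ^ 2) := by
  have : ∀ x : E3, (x a * p + x b * q) ^ 2 = (x a * x a) * p ^ 2 + (x b * x b) * q ^ 2 + (x a * x b) * (2 * p * q) := by
    intro x; ring
  simp only [this]
  have i := fun a b => l2_mul (h.x a) (h.x b)
  rw [integral_add (int_add' ((i _ _).mul_const _) ((i _ _).mul_const _)) ((i _ _).mul_const _),
    integral_add ((i _ _).mul_const _) ((i _ _).mul_const _)]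
  simp only [integral_mul_const, hm.h2, hab, if_true, if_false]
  ring

set_option maxHeartbeats 1000000 in
theorem lemA (h : Adm μ G) (hm : Mom μ m0 s) (hG : ∀ j, ∫ x, G j x ∂μ = 0) (h00 : ∫ y, y 0 * G 0 y ∂μ = 0) :
    s * ∫ x, (G 0 x ^ 2 + G 1 x ^ 2 + G 2 x ^ 2) ∂μ ≤ 26 * (Df μ G 1 2 + Df μ G 2 0 + Df μ G 0 1) := by
  have hs := hm.spos
  set D := Df μ G 1 2 + Df μ G 2 0 + Df μ G 0 1 with hD
  have n1 : 0 ≤ Df μ G 1 2 := Df_nonneg _ _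
  have n2 : 0 ≤ Df μ G 2 0 := Df_nonneg _ _
  have n3 : 0 ≤ Df μ G 0 1 := Df_nonneg _ _
  have a1 := F_le h hm hG 0 1 2
  have a2 := F_le h hm hG 1 2 0
  have a3 := F_le h hm hG 0 2 0
  have a4 := F_le h hm hG 0 0 1
  have a5 := F_le h hm hG 1 0 1
  simp only [h00, show (0:Fin 3) ≠ 1 by decide, show (0:Fin 3) ≠ 2 by decide, show (1:Fin 3) ≠ 2 by decide,
    show (1:Fin 3) ≠ 0 by decide, if_true, if_false, zero_mul, mul_zero, add_zero, sub_zero, zero_add] at a1 a2 a3 a4 a5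
  have q1 := quad_x h hm (show (1:Fin 3) ≠ 2 by decide) (-∫ y, y 0 * G 2 y ∂μ) (∫ y, y 0 * G 1 y ∂μ)
  have q2 := quad_x h hm (show (2:Fin 3) ≠ 0 by decide) (-∫ y, y 1 * G 0 y ∂μ) (∫ y, y 1 * G 2 y ∂μ)
  have c22 := cs_int (h.x 1) (h.g 1)
  generalize (∫ y, y 0 * G 2 y ∂μ) = m02 at *
  generalize (∫ y, y 0 * G 1 y ∂μ) = m01 at *
  generalize (∫ y, y 1 * G 0 y ∂μ) = m10 at *
  generalize (∫ y, y 1 * G 2 y ∂μ) = m12 at *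
  generalize (∫ y, y 1 * G 1 y ∂μ) = m11 at *
  have e1 : ∀ x : E3, x 1 * -m02 + x 2 * m01 = -x 1 * m02 + x 2 * m01 := fun x => by ring
  have e2 : ∀ x : E3, x 2 * -m10 + x 0 * m12 = -x 2 * m10 + x 0 * m12 := fun x => by ring
  simp only [e1] at q1
  simp only [e2] at q2
  rw [q1] at a1
  rw [q2] at a2
  have b1 : m02 ^ 2 + m01 ^ 2 ≤ D := by
    have := le_of_mul_le_mul_left a1 hs
    rw [neg_sq] at this; linarith
  have b2 : m10 ^ 2 ≤ D := by
    have := le_of_mul_le_mul_left a2 hs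
    rw [neg_sq] at this; nlinarith [sq_nonneg m12]
  have hx2 : ∀ a, ∫ x : E3, x a ^ 2 ∂μ = s := fun a => by
    have := hm.h2 a a
    simpa [sq] using this
  have ixx : ∀ a, Integrable (fun x : E3 => x a ^ 2) μ := fun a => l2_sq (h.x a)
  have hsD : ∀ i, Integrable (fun x => G i x ^ 2) μ := fun i => l2_sq (h.g i)
  have c2 : s * ∫ x, G 2 x ^ 2 ∂μ ≤ 4 * D := by
    have hh : MemLp (fun x : E3 => x 0 * m02 + s * G 2 x) 2 μ := ((h.x 0).mul_const m02).add ((h.g 2).const_mul s)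
    have : s ^ 2 * ∫ x, G 2 x ^ 2 ∂μ ≤ ∫ x : E3, (2 * (x 0 * m02 + s * G 2 x) ^ 2 + 2 * m02 ^ 2 * x 0 ^ 2) ∂μ := by
      rw [← integral_const_mul]
      refine integral_mono ((hsD 2).const_mul _) (int_add' ((l2_sq hh).const_mul 2)
        ((ixx 0).const_mul _)) fun x => ?_
      simp only
      nlinarith [sq_nonneg ((x 0 * m02 + s * G 2 x) + x 0 * m02)]
    rw [integral_add ((l2_sq hh).const_mul 2)
        ((ixx 0).const_mul _), integral_const_mul, integral_const_mul, hx2] at this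
    have a3' : ∫ x : E3, (x 0 * m02 + s * G 2 x) ^ 2 ∂μ ≤ s * Df μ G 2 0 := a3
    have : s * (s * ∫ x, G 2 x ^ 2 ∂μ) ≤ s * (4 * D) := by
      have : (2 * m02 ^ 2) * s ≤ 2 * D * s := by gcongr; nlinarith [sq_nonneg m01]
      have : s * Df μ G 2 0 ≤ s * D := by gcongr; linarith
      rw [← mul_assoc, ← sq]; linarith
    exact le_of_mul_le_mul_left this hs
  have c1 : s * ∫ x, G 1 x ^ 2 ∂μ ≤ 4 * D := by
    have hh : MemLp (fun x : E3 => -x 0 * m01 - s * G 1 x) 2 μ := (((h.x 0).neg.mul_const m01).sub ((h.g 1).const_mul s))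
    have : s ^ 2 * ∫ x, G 1 x ^ 2 ∂μ ≤ ∫ x : E3, (2 * (-x 0 * m01 - s * G 1 x) ^ 2 + 2 * m01 ^ 2 * x 0 ^ 2) ∂μ := by
      rw [← integral_const_mul]
      refine integral_mono ((hsD 1).const_mul _) (int_add' ((l2_sq hh).const_mul 2)
        ((ixx 0).const_mul _)) fun x => ?_
      simp only
      nlinarith [sq_nonneg ((-x 0 * m01 - s * G 1 x) - x 0 * m01)]
    rw [integral_add ((l2_sq hh).const_mul 2)
        ((ixx 0).const_mul _), integral_const_mul, integral_const_mul, hx2] at this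
    have : s * (s * ∫ x, G 1 x ^ 2 ∂μ) ≤ s * (4 * D) := by
      have : (2 * m01 ^ 2) * s ≤ 2 * D * s := by gcongr; nlinarith [sq_nonneg m02]
      have : s * Df μ G 0 1 ≤ s * D := by gcongr; linarith
      rw [← mul_assoc, ← sq]; linarith
    exact le_of_mul_le_mul_left this hs
  have b3 : m11 ^ 2 ≤ 4 * D := by
    rw [hx2] at c22; linarith
  have c0 : s * ∫ x, G 0 x ^ 2 ∂μ ≤ 18 * D := by
    have hh : MemLp (fun x : E3 => -x 0 * m11 + x 1 * m10 + s * G 0 x) 2 μ :=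
      (((h.x 0).neg.mul_const m11).add ((h.x 1).mul_const m10)).add ((h.g 0).const_mul s)
    have j1 := int_add' ((ixx 0).const_mul (3 * m11 ^ 2)) ((ixx 1).const_mul (3 * m10 ^ 2))
    have : s ^ 2 * ∫ x, G 0 x ^ 2 ∂μ ≤ ∫ x : E3, (3 * (-x 0 * m11 + x 1 * m10 + s * G 0 x) ^ 2 + (3 * m11 ^ 2 * x 0 ^ 2 + 3 * m10 ^ 2 * x 1 ^ 2)) ∂μ := by
      rw [← integral_const_mul]
      refine integral_mono ((hsD 0).const_mul _) (int_add' ((l2_sq hh).const_mul 3) j1) fun x => ?_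
      simp only
      have t : ∀ p q r : ℝ, (p + q + r) ^ 2 ≤ 3 * p ^ 2 + 3 * q ^ 2 + 3 * r ^ 2 := by
        intro p q r; nlinarith [sq_nonneg (p - q), sq_nonneg (p - r), sq_nonneg (q - r)]
      have := t (-x 0 * m11 + x 1 * m10 + s * G 0 x) (x 0 * m11) (-(x 1 * m10))
      calc s ^ 2 * G 0 x ^ 2 = (-x 0 * m11 + x 1 * m10 + s * G 0 x + x 0 * m11 + -(x 1 * m10)) ^ 2 := by ring
        _ ≤ _ := this
        _ = _ := by ring
    rw [integral_add ((l2_sq hh).const_mul 3) j1, integral_const_mul,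
      integral_add ((ixx 0).const_mul (3 * m11 ^ 2)) ((ixx 1).const_mul (3 * m10 ^ 2)), integral_const_mul,
      integral_const_mul, hx2, hx2] at this
    have : s * (s * ∫ x, G 0 x ^ 2 ∂μ) ≤ s * (18 * D) := by
      have : (3 * m11 ^ 2) * s ≤ 12 * D * s := mul_le_mul_of_nonneg_right (by linarith) hs.le
      have : (3 * m10 ^ 2) * s ≤ 3 * D * s := mul_le_mul_of_nonneg_right (by linarith) hs.le
      have : s * Df μ G 0 1 ≤ s * D := by gcongr; linarith
      rw [← mul_assoc, ← sq]; linarith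
    exact le_of_mul_le_mul_left this hs
  rw [integral_add (int_add' (hsD 0) (hsD 1)) (hsD 2), integral_add (hsD 0) (hsD 1)]
  linarith

theorem lemB1 (h : Adm μ G) (hm : Mom μ m0 s) (hG : ∀ j, ∫ x, G j x ∂μ = 0) (a b : Fin 3) :
    m0 ^ 2 * ∫ x : E3, (x a * G b x - x b * G a x) ^ 2 ∂μ ≤ 
      3 * m0 * (Df μ G a b + s * ((∫ x, G a x ^ 2 ∂μ) + ∫ x, G b x ^ 2 ∂μ)) := by
  have hp := P_le h hm hG a b
  have hx2 : ∀ a, ∫ x : E3, x a ^ 2 ∂μ = s := fun a => by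
    have := hm.h2 a a
    simpa [sq] using this
  have k1 := cs_int (h.x a) (h.g b)
  have k2 := cs_int (h.x b) (h.g a)
  rw [hx2] at k1 k2
  generalize (∫ y, y a * G b y ∂μ) = p at *
  generalize (∫ y, y b * G a y ∂μ) = q at *
  have hc : MemLp (fun x : E3 => x a * G b x - x b * G a x) 2 μ := (h.xg a b).sub (h.xg b a)
  have hh : MemLp (fun x : E3 => m0 * (x a * G b x - x b * G a x) + (p - q)) 2 μ :=
    (hc.const_mul m0).add (memLp_const _)
  have : m0 ^ 2 * ∫ x : E3, (x a * G b x - x b * G a x) ^ 2 ∂μ ≤ 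
      ∫ x : E3, (3 * (m0 * (x a * G b x - x b * G a x) + (p - q)) ^ 2 + (3 * p ^ 2 + 3 * q ^ 2) * 1) ∂μ := by
    rw [← integral_const_mul]
    refine integral_mono ((l2_sq hc).const_mul _) (int_add' ((l2_sq hh).const_mul 3) (integrable_const _)) fun x => ?_
    simp only
    have t : ∀ p q r : ℝ, (p + q + r) ^ 2 ≤ 3 * p ^ 2 + 3 * q ^ 2 + 3 * r ^ 2 := by
      intro p q r; nlinarith [sq_nonneg (p - q), sq_nonneg (p - r), sq_nonneg (q - r)]
    have := t (m0 * (x a * G b x - x b * G a x) + (p - q)) (-p) q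
    calc m0 ^ 2 * (x a * G b x - x b * G a x) ^ 2 = (m0 * (x a * G b x - x b * G a x) + (p - q) + -p + q) ^ 2 := by ring
        _ ≤ _ := this
        _ = _ := by ring
  rw [integral_add ((l2_sq hh).const_mul 3) (integrable_const _), integral_const_mul, integral_const_mul, hm.h0] at this
  have := hm.m0pos
  nlinarith

theorem lemAB (h : Adm μ G) (hm : Mom μ m0 s) (hG : ∀ j, ∫ x, G j x ∂μ = 0) (h00 : ∫ y, y 0 * G 0 y ∂μ = 0) :
    ∫ x, ((G 0 x ^ 2 + G 1 x ^ 2 + G 2 x ^ 2) + cr x (fun i => G i x)) ∂μ ≤ 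
      (26 / s + 3 / m0 * (1 + 52)) * (Df μ G 1 2 + Df μ G 2 0 + Df μ G 0 1) := by
  have hA := lemA h hm hG h00
  have b1 := lemB1 h hm hG 1 2
  have b2 := lemB1 h hm hG 2 0
  have b3 := lemB1 h hm hG 0 1
  have hs := hm.spos
  have hm0 := hm.m0pos
  have hsD : ∀ i, Integrable (fun x => G i x ^ 2) μ := fun i => l2_sq (h.g i)
  have hc : ∀ a b, Integrable (fun x : E3 => (x a * G b x - x b * G a x) ^ 2) μ := fun a b => l2_sq ((h.xg a b).sub (h.xg b a))
  have e : ∫ x, (G 0 x ^ 2 + G 1 x ^ 2 + G 2 x ^ 2) ∂μ = (∫ x, G 0 x ^ 2 ∂μ) + (∫ x, G 1 x ^ 2 ∂μ) + ∫ x, G 2 x ^ 2 ∂μ := by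
    rw [integral_add (int_add' (hsD 0) (hsD 1)) (hsD 2), integral_add (hsD 0) (hsD 1)]
  unfold cr
  rw [integral_add (int_add' (int_add' (hsD 0) (hsD 1)) (hsD 2)) (int_add' (int_add' (hc 1 2) (hc 2 0)) (hc 0 1)),
    integral_add (int_add' (hc 1 2) (hc 2 0)) (hc 0 1), integral_add (hc 1 2) (hc 2 0), e]
  rw [e] at hA
  generalize ∫ x, G 0 x ^ 2 ∂μ = g0 at *
  generalize ∫ x, G 1 x ^ 2 ∂μ = g1 at *
  generalize ∫ x, G 2 x ^ 2 ∂μ = g2 at *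
  generalize ∫ x : E3, (x 1 * G 2 x - x 2 * G 1 x) ^ 2 ∂μ = k1 at *
  generalize ∫ x : E3, (x 2 * G 0 x - x 0 * G 2 x) ^ 2 ∂μ = k2 at *
  generalize ∫ x : E3, (x 0 * G 1 x - x 1 * G 0 x) ^ 2 ∂μ = k3 at *
  have n1 : 0 ≤ Df μ G 1 2 := Df_nonneg _ _
  have n2 : 0 ≤ Df μ G 2 0 := Df_nonneg _ _
  have n3 : 0 ≤ Df μ G 0 1 := Df_nonneg _ _
  generalize Df μ G 1 2 = d1 at *
  generalize Df μ G 2 0 = d2 at *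
  generalize Df μ G 0 1 = d3 at *
  have r1 : g0 + g1 + g2 ≤ 26 / s * (d1 + d2 + d3) := by
    rw [div_mul_eq_mul_div, le_div_iff₀ hs]; linarith
  have r2 : k1 + k2 + k3 ≤ 3 / m0 * (1 + 52) * (d1 + d2 + d3) := by
    have : m0 ^ 2 * (k1 + k2 + k3) ≤ 3 * m0 * (53 * (d1 + d2 + d3)) := by
      have : 3 * m0 * ((d1 + d2 + d3) + 2 * (s * (g0 + g1 + g2))) ≤ 3 * m0 * (53 * (d1 + d2 + d3)) := by
        gcongr; linarith
      nlinarith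
    have h2 : m0 * (m0 * (k1 + k2 + k3)) ≤ m0 * (3 * (53 * (d1 + d2 + d3))) := by nlinarith
    have h3 := le_of_mul_le_mul_left h2 hm0
    have : 3 / m0 * (1 + 52) * (d1 + d2 + d3) = (3 * (53 * (d1 + d2 + d3))) / m0 := by ring
    rw [this, le_div_iff₀ hm0]; linarith
  linarith
end

/-! ### Radial moments and the weight -/
theorem isom_integral (e : E3 ≃ₗᵢ[ℝ] E3) (f : E3 → ℝ) : ∫ x, f (e x) = ∫ x, f x :=
  e.measurePreserving.integral_comp e.toHomeomorph.measurableEmbedding f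

noncomputable def flipE (a : Fin 3) : E3 ≃ₗᵢ[ℝ] E3 :=
  LinearIsometryEquiv.piLpCongrRight 2 (fun i => if i = a then LinearIsometryEquiv.neg ℝ else LinearIsometryEquiv.refl ℝ ℝ)
theorem flipE_apply (a i : Fin 3) (x : E3) : flipE a x i = if i = a then - x i else x i := by
  unfold flipE
  rw [LinearIsometryEquiv.piLpCongrRight_apply]
  by_cases h : i = a <;> simp [h]
noncomputable def swp (a b : Fin 3) : E3 ≃ₗᵢ[ℝ] E3 := LinearIsometryEquiv.piLpCongrLeft 2 ℝ ℝ (Equiv.swap a b)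
theorem swp_apply (a b : Fin 3) (x : E3) : swp a b x a = x b := by
  unfold swp
  rw [LinearIsometryEquiv.piLpCongrLeft_apply]
  simp [Equiv.piCongrLeft']

def Radial (ρ : E3 → ℝ) : Prop := ∀ x y, ‖x‖ = ‖y‖ → ρ x = ρ y

theorem Radial.isom {ρ : E3 → ℝ} (h : Radial ρ) (e : E3 ≃ₗᵢ[ℝ] E3) (x : E3) : ρ (e x) = ρ x :=
  h _ _ (e.norm_map x)

theorem Radial.mom1 {ρ : E3 → ℝ} (h : Radial ρ) (a : Fin 3) : ∫ x, ρ x * x a = 0 := by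
  have := isom_integral (flipE a) (fun x => ρ x * x a)
  simp only [h.isom, flipE_apply, if_true, mul_neg, integral_neg] at this
  linarith

theorem Radial.mom2 {ρ : E3 → ℝ} (h : Radial ρ) {a b : Fin 3} (hab : a ≠ b) : ∫ x, ρ x * (x a * x b) = 0 := by
  have := isom_integral (flipE a) (fun x => ρ x * (x a * x b))
  simp only [h.isom, flipE_apply, if_true, hab.symm, if_false, mul_neg, neg_mul, integral_neg] at this
  linarith

theorem Radial.mom2_eq {ρ : E3 → ℝ} (h : Radial ρ) (a b : Fin 3) :
    ∫ x, ρ x * (x a * x a) = ∫ x, ρ x * (x b * x b) := by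
  have := isom_integral (swp a b) (fun x => ρ x * (x a * x a))
  simp only [h.isom, swp_apply] at this
  exact this.symm

theorem int_pos' {f : E3 → ℝ} (hc : Continuous f) (hi : Integrable f) (h0 : ∀ x, 0 ≤ f x) {x0 : E3} (hx : f x0 ≠ 0) :
    0 < ∫ x, f x := by
  rw [integral_pos_iff_support_of_nonneg h0 hi]
  exact hc.isOpen_support.measure_pos volume ⟨x0, hx⟩

/-- the weight `⟨ξ⟩^γ` -/
noncomputable def Ww (γ : ℝ) (x : E3) : ℝ := (1 + ‖x‖ ^ 2) ^ (γ / 2)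

theorem Ww_pos (γ : ℝ) (x : E3) : 0 < Ww γ x := by unfold Ww; positivity
theorem Ww_le_one {γ : ℝ} (hγ : γ < -2) (x : E3) : Ww γ x ≤ 1 := 
  Real.rpow_le_one_of_one_le_of_nonpos (by nlinarith [sq_nonneg ‖x‖]) (by linarith)
theorem Ww_cont (γ : ℝ) : Continuous (Ww γ) := by
  unfold Ww
  refine Continuous.rpow_const (by fun_prop) fun x => Or.inl (by positivity)
theorem Ww_pg {γ : ℝ} (hγ : γ < -2) : PG (Ww γ) :=
  ⟨0, 1, fun x => by rw [abs_of_pos (Ww_pos γ x)]; simpa using Ww_le_one hγ x⟩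
theorem Ww_radial (γ : ℝ) : Radial (Ww γ) := fun x y h => by unfold Ww; rw [h]
theorem Mx_radial : Radial Mx := fun x y h => by unfold Mx; rw [h]

theorem rpow_anti {a b z : ℝ} (ha : 0 < a) (hab : a ≤ b) (hz : z ≤ 0) : b ^ z ≤ a ^ z :=
  Real.rpow_le_rpow_of_nonpos ha hab hz

theorem Ww_low {γ : ℝ} (hγ : γ < -2) {x y : E3} (hxy : x ≠ y) :
    2 ^ (γ / 2) * (Ww γ x * Ww γ y) ≤ ‖x - y‖ ^ γ := by
  have hz : 0 < ‖x - y‖ := norm_pos_iff.2 (sub_ne_zero.2 hxy)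
  have e : ‖x - y‖ ^ γ = (‖x - y‖ ^ 2) ^ (γ / 2) := by
    rw [← Real.rpow_natCast, ← Real.rpow_mul hz.le]; congr 1; push_cast; ring
  unfold Ww
  rw [e, ← Real.mul_rpow (by positivity) (by positivity), ← Real.mul_rpow (by norm_num) (by positivity)]
  refine rpow_anti (by positivity) ?_ (by linarith)
  have := norm_sub_le x y
  have : ‖x - y‖ ^ 2 ≤ (‖x‖ + ‖y‖) ^ 2 := by gcongr
  nlinarith [sq_nonneg (‖x‖ - ‖y‖), sq_nonneg (‖x‖ * ‖y‖)]

noncomputable def rho (γ : ℝ) (x : E3) : ℝ := Ww γ x * Mx x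
theorem rho_pos (γ : ℝ) (x : E3) : 0 < rho γ x := mul_pos (Ww_pos γ x) (Mx_pos x)
theorem rho_cont (γ : ℝ) : Continuous (rho γ) := (Ww_cont γ).mul rd1_Mx.cont
theorem rho_radial (γ : ℝ) : Radial (rho γ) := fun x y h => by
  unfold rho; rw [Ww_radial γ x y h, Mx_radial x y h]
theorem rho_dec {γ : ℝ} (hγ : γ < -2) : Dec (rho γ) := Dec.mul' (Ww_pg hγ) rd1_Mx.dec

noncomputable def mu (γ : ℝ) : Measure E3 := volume.withDensity (fun x => ENNReal.ofReal (rho γ x))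

theorem mu_meas (γ : ℝ) : Measurable (fun x => ENNReal.ofReal (rho γ x)) := (rho_cont γ).measurable.ennreal_ofReal

theorem mu_integral (γ : ℝ) (f : E3 → ℝ) : ∫ x, f x ∂(mu γ) = ∫ x, rho γ x * f x := by
  unfold mu
  rw [integral_withDensity_eq_integral_toReal_smul (mu_meas γ) (Filter.Eventually.of_forall fun x => ENNReal.ofReal_lt_top)]
  simp only [ENNReal.toReal_ofReal (rho_pos γ _).le, smul_eq_mul]

theorem mu_integrable (γ : ℝ) {f : E3 → ℝ} (hf : Integrable (fun x => rho γ x * f x)) : Integrable f (mu γ) := by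
  unfold mu
  rw [integrable_withDensity_iff_integrable_smul' (mu_meas γ) (Filter.Eventually.of_forall fun x => ENNReal.ofReal_lt_top)]
  simpa only [ENNReal.toReal_ofReal (rho_pos γ _).le, smul_eq_mul] using hf

theorem mu_l2 (γ : ℝ) {f : E3 → ℝ} (hm : Measurable f) (hf : Dec (fun x => rho γ x * f x ^ 2)) : MemLp f 2 (mu γ) := by
  rw [memLp_two_iff_integrable_sq hm.aestronglyMeasurable]
  exact mu_integrable γ (hf.integrable ((rho_cont γ).measurable.mul (hm.pow_const 2)).aestronglyMeasurable)

theorem mu_finite {γ : ℝ} (hγ : γ < -2) : IsFiniteMeasure (mu γ) :=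
  isFiniteMeasure_withDensity_ofReal ((rho_dec hγ).integrable (rho_cont γ).aestronglyMeasurable).2

theorem mu_mom {γ : ℝ} (hγ : γ < -2) : ∃ m0 s, Mom (mu γ) m0 s := by
  have hc := rho_cont γ
  refine ⟨∫ x, rho γ x, ∫ x, rho γ x * (x 0 * x 0), ?_, ?_, ?_, ?_, ?_⟩
  · exact int_pos' hc ((rho_dec hγ).integrable hc.aestronglyMeasurable) (fun x => (rho_pos γ x).le)
      (x0 := 0) (rho_pos γ 0).ne'
  · have hc2 : Continuous (fun x : E3 => rho γ x * (x 0 * x 0)) := by fun_prop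
    refine int_pos' hc2 (((rho_dec hγ).mul ((PG.coord 0).mul (PG.coord 0))).integrable hc2.aestronglyMeasurable)
      (fun x => mul_nonneg (rho_pos γ x).le (mul_self_nonneg _)) (x0 := EuclideanSpace.single 0 1) ?_
    have := (rho_pos γ (EuclideanSpace.single 0 1)).ne'
    simpa using this
  · rw [mu_integral]; simp
  · intro a; rw [mu_integral]; exact (rho_radial γ).mom1 a
  · intro a b; rw [mu_integral]
    split_ifs with h
    · subst h; exact (rho_radial γ).mom2_eq _ _
    · exact (rho_radial γ).mom2 h

/-! ### Coercivity up to the kernel -/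
section
variable {γ : ℝ}
noncomputable def Gf (u : E3 → ℝ) (i : Fin 3) (x : E3) : ℝ := Uf u i x / sqrtM x

theorem Gf_meas {u : E3 → ℝ} (h : RD1 u) (i : Fin 3) : Measurable (Gf u i) :=
  (h.Uf_meas i).div diff_sqrtM.continuous.measurable

theorem rho_G (γ : ℝ) (u : E3 → ℝ) (i : Fin 3) (x : E3) : rho γ x * Gf u i x ^ 2 = Ww γ x * Uf u i x ^ 2 := by
  unfold rho Gf
  rw [← sqrtM_sq]
  have := (sqrtM_pos x).ne'
  field_simp

theorem adm_xa (hγ2 : γ < -2) {f : E3 → ℝ} (hf : PG f) (hm : Measurable f) : MemLp f 2 (mu γ) :=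
  mu_l2 γ hm ((rho_dec hγ2).mul (hf.pow 2))

theorem Gf_adm (hγ2 : γ < -2) {u : E3 → ℝ} (h : RD1 u) : Adm (mu γ) (Gf u) := by
  refine ⟨fun a => adm_xa hγ2 (PG.coord a) (by fun_prop), fun a => mu_l2 γ (Gf_meas h a) ?_, fun a b => mu_l2 γ ?_ ?_⟩
  · simp only [rho_G]
    exact Dec.mul' (Ww_pg hγ2) (by simpa [sq] using (h.Uf_dec a).mul (h.Uf_dec a).pg)
  · have := Gf_meas h b; fun_prop
  · have : ∀ x : E3, rho γ x * (x a * Gf u b x) ^ 2 = (x a) ^ 2 * (Ww γ x * Uf u b x ^ 2) := by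
      intro x; rw [← rho_G]; ring
    simp only [this]
    exact Dec.mul' ((PG.coord a).pow 2) (Dec.mul' (Ww_pg hγ2) (by simpa [sq] using (h.Uf_dec b).mul (h.Uf_dec b).pg))

theorem rho_H (γ : ℝ) (u : E3 → ℝ) (a b : Fin 3) (x y : E3) : rho γ x * (rho γ y * Hf (Gf u) a b x y ^ 2) =
    Ww γ x * Ww γ y * ((x a - y a) * wf u b (x, y) - (x b - y b) * wf u a (x, y)) ^ 2 := by
  have e : ∀ i, wf u i (x, y) = sqrtM x * sqrtM y * (Gf u i x - Gf u i y) := by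
    intro i; unfold wf Gf
    have := (sqrtM_pos x).ne'
    have := (sqrtM_pos y).ne'
    simp only
    field_simp
  rw [e, e]
  unfold rho Hf
  rw [← sqrtM_sq, ← sqrtM_sq]; ring

theorem pair_le_cr (z w : Fin 3 → ℝ) (a b : Fin 3) : (z a * w b - z b * w a) ^ 2 ≤ cr z w := by
  unfold cr
  fin_cases a <;> fin_cases b <;> simp <;> nlinarith [sq_nonneg (z 1 * w 2 - z 2 * w 1),
    sq_nonneg (z 2 * w 0 - z 0 * w 2), sq_nonneg (z 0 * w 1 - z 1 * w 0)]

theorem Df_le (hγ1 : -3 ≤ γ) (hγ2 : γ < -2) {u : E3 → ℝ} (hu : RD2 u) (a b : Fin 3) :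
    Df (mu γ) (Gf u) a b ≤ 2 / 2 ^ (γ / 2) * ipv (Lop γ u) u := by
  have hc : (0:ℝ) < 2 ^ (γ / 2) := by positivity
  rw [form_eq hγ1 hγ2 hu hu.r]
  have e0 : 2 / (2:ℝ) ^ (γ / 2) * (1 / 2 * ∫ p, Tf γ u u p ∂(volume.prod volume)) =
      ∫ p, (1 / 2 ^ (γ / 2)) * Tf γ u u p ∂(volume.prod volume) := by
    rw [integral_const_mul]; ring
  have hTi := (Tf_int hγ1 hγ2 hu.r hu.r).const_mul (1 / 2 ^ (γ / 2))
  have hpt : ∀ p : E3 × E3, rho γ p.1 * (rho γ p.2 * Hf (Gf u) a b p.1 p.2 ^ 2) ≤ (1 / 2 ^ (γ / 2)) * Tf γ u u p := by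
    rintro ⟨x, y⟩
    rw [Tf_self hγ2, rho_H]
    by_cases hxy : x = y
    · subst hxy; simp; exact mul_nonneg (by positivity) (mul_nonneg (by positivity) (cr_nonneg _ _))
    · have h1 := Ww_low hγ2 hxy
      have h2 := pair_le_cr (x - y : E3) (fun i => wf u i (x, y)) a b
      have h3 : Ww γ x * Ww γ y ≤ 1 / 2 ^ (γ / 2) * ‖x - y‖ ^ γ := by
        rw [one_div, ← div_eq_inv_mul, le_div_iff₀ hc]; linarith
      rw [← mul_assoc]
      exact mul_le_mul h3 h2 (sq_nonneg _) (by positivity)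
  have hGm : ∀ i, Measurable (Gf u i) := Gf_meas hu.r
  have hHm : Measurable (fun p : E3 × E3 => rho γ p.1 * (rho γ p.2 * Hf (Gf u) a b p.1 p.2 ^ 2)) := by
    unfold Hf
    have := hGm a
    have := hGm b
    have := (rho_cont γ).measurable
    fun_prop
  have hHi : Integrable (fun p : E3 × E3 => rho γ p.1 * (rho γ p.2 * Hf (Gf u) a b p.1 p.2 ^ 2)) (volume.prod volume) := by
    refine hTi.mono' hHm.aestronglyMeasurable (Filter.Eventually.of_forall fun p => ?_)
    rw [Real.norm_of_nonneg]
    · exact hpt p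
    · have := rho_pos γ p.1; have := rho_pos γ p.2; positivity
  rw [e0]
  refine le_trans (le_of_eq ?_) (integral_mono hHi hTi hpt)
  rw [integral_prod _ hHi]
  unfold Df
  simp only [mu_integral, integral_const_mul]

/-- Coercivity of the form in the gradient variable, modulo the kernel -/
theorem coer1 (hγ1 : -3 ≤ γ) (hγ2 : γ < -2) : ∃ C : ℝ, 0 < C ∧ ∀ u : E3 → ℝ, RD2 u → ∃ a : Fin 3 → ℝ, ∃ c : ℝ,
    ∫ x, Ww γ x * ((∑ i, (Uf u i x - (a i + c * x i) * sqrtM x) ^ 2) +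
      cr x (fun i => Uf u i x - (a i + c * x i) * sqrtM x)) ≤ C * ipv (Lop γ u) u := by
  obtain ⟨m0, s, hm⟩ := mu_mom hγ2
  have hm0 := hm.m0pos
  have hs := hm.spos
  have := mu_finite hγ2
  refine ⟨(26 / s + 3 / m0 * (1 + 52)) * (3 * (2 / 2 ^ (γ / 2))), by positivity, fun u hu => ?_⟩
  have hA := Gf_adm hγ2 hu.r
  refine ⟨fun i => (∫ x, Gf u i x ∂(mu γ)) / m0, (∫ x, x 0 * Gf u 0 x ∂(mu γ)) / s, ?_⟩
  set a : Fin 3 → ℝ := fun i => (∫ x, Gf u i x ∂(mu γ)) / m0 with ha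
  set c := (∫ x, x 0 * Gf u 0 x ∂(mu γ)) / s with hcdef
  let G : Fin 3 → E3 → ℝ := fun i x => Gf u i x - (a i + c * x i)
  have l1 : ∀ i, MemLp (fun x : E3 => a i + c * x i) 2 (mu γ) := fun i =>
    adm_xa hγ2 ((PG.const _).add ((PG.const _).mul (PG.coord i))) (by fun_prop)
  have l2 : ∀ i j, MemLp (fun x : E3 => x j * (a i + c * x i)) 2 (mu γ) := fun i j =>
    adm_xa hγ2 ((PG.coord j).mul ((PG.const _).add ((PG.const _).mul (PG.coord i)))) (by fun_prop)
  have hG : Adm (mu γ) G := by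
    refine ⟨hA.x, fun i => (hA.g i).sub (l1 i), fun j i => ?_⟩
    have : (fun x : E3 => x j * G i x) = fun x => x j * Gf u i x - x j * (a i + c * x i) := by
      funext x; simp only [G]; ring
    rw [this]; exact (hA.xg j i).sub (l2 i j)
  have t : ∀ {f : E3 → ℝ}, MemLp f 2 (mu γ) → Integrable f (mu γ) := fun h => h.integrable (by norm_num)
  have hG0 : ∀ i, ∫ x, G i x ∂(mu γ) = 0 := by
    intro i
    simp only [G]
    rw [integral_sub (t (hA.g i)) (t (l1 i)), integral_add (integrable_const _) ((t (hA.x i)).const_mul c),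
      integral_const_mul, hm.h1]
    have : ∫ _ : E3, a i ∂(mu γ) = a i * m0 := by rw [← hm.h0, ← integral_const_mul]; simp
    rw [this, ha]; field_simp; ring
  have hG00 : ∫ x, x 0 * G 0 x ∂(mu γ) = 0 := by
    have e : ∀ x : E3, x 0 * G 0 x = x 0 * Gf u 0 x - (a 0 * x 0 + c * (x 0 * x 0)) := by
      intro x; simp only [G]; ring
    simp only [e]
    have j1 := (t (hA.x 0)).const_mul (a 0)
    have j2 := (l2_mul (hA.x 0) (hA.x 0)).const_mul c
    rw [integral_sub (t (hA.xg 0 0)) (int_add' j1 j2), integral_add j1 j2, integral_const_mul, integral_const_mul,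
      hm.h1, hm.h2, if_pos rfl, hcdef]
    field_simp; ring
  have key := lemAB hG hm hG0 hG00
  have hD : ∀ i j, Df (mu γ) G i j = Df (mu γ) (Gf u) i j := by
    intro i j
    have : ∀ x y, Hf G i j x y = Hf (Gf u) i j x y := by
      intro x y; simp only [Hf, G]; ring
    unfold Df; simp only [this]
  simp only [hD] at key
  have d1 := Df_le hγ1 hγ2 hu 1 2
  have d2 := Df_le hγ1 hγ2 hu 2 0
  have d3 := Df_le hγ1 hγ2 hu 0 1
  rw [mu_integral] at key
  have e : ∀ x, rho γ x * (G 0 x ^ 2 + G 1 x ^ 2 + G 2 x ^ 2 + cr x (fun i => G i x)) = 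
      Ww γ x * ((∑ i, (Uf u i x - (a i + c * x i) * sqrtM x) ^ 2) +
      cr x (fun i => Uf u i x - (a i + c * x i) * sqrtM x)) := by
    intro x
    have e1 : ∀ i, Uf u i x - (a i + c * x i) * sqrtM x = sqrtM x * G i x := by
      intro i; simp only [G, Gf]
      have := (sqrtM_pos x).ne'
      field_simp
    simp only [e1, Fin.sum_univ_three, cr, rho, ← sqrtM_sq]
    ring
  simp only [e] at key
  refine key.trans ?_
  rw [mul_assoc, mul_assoc]
  refine mul_le_mul_of_nonneg_left ?_ (by positivity)
  linarith
end

/-! ### Upper bound for sigma -/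
section
variable {γ : ℝ}

theorem cr_le_sq (z : E3) (g : Fin 3 → ℝ) : cr z g ≤ ‖z‖ ^ 2 * ∑ i, g i ^ 2 := by
  rw [normsq3, Fin.sum_univ_three]; unfold cr
  nlinarith [sq_nonneg (z 0 * g 0 + z 1 * g 1 + z 2 * g 2)]

theorem cr_sub_le (x y : E3) (g : Fin 3 → ℝ) : cr (x - y : E3) g ≤ 2 * (1 + ‖y‖) ^ 2 * ((∑ i, g i ^ 2) + cr x g) := by
  have h1 : cr (x - y : E3) g ≤ 2 * cr x g + 2 * cr y g := by
    unfold cr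
    simp only [PiLp.sub_apply]
    nlinarith [sq_nonneg ((x 1 + y 1) * g 2 - (x 2 + y 2) * g 1),
      sq_nonneg ((x 2 + y 2) * g 0 - (x 0 + y 0) * g 2), sq_nonneg ((x 0 + y 0) * g 1 - (x 1 + y 1) * g 0)]
  have h2 := cr_le_sq y g
  have h3 := cr_nonneg x g
  have h4 : 0 ≤ ∑ i, g i ^ 2 := by positivity
  have h5 : ‖y‖ ^ 2 ≤ (1 + ‖y‖) ^ 2 := by gcongr; linarith
  have h6 : 1 ≤ (1 + ‖y‖) ^ 2 := by nlinarith [norm_nonneg y]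
  have h7 := mul_le_mul_of_nonneg_right h5 h4
  have h8 := mul_le_mul_of_nonneg_right h6 h3
  nlinarith

theorem Ww_shift (hγ1 : -3 ≤ γ) (hγ2 : γ < -2) (x : E3) {s k : ℝ} (hs : 0 < s) (hk : 1 ≤ k) (h : 1 + ‖x‖ ^ 2 ≤ k * s) :
    s ^ (γ / 2) ≤ k ^ 2 * Ww γ x := by
  have h1 : (k * s) ^ (γ / 2) ≤ Ww γ x := rpow_anti (by positivity) h (by linarith)
  have hk0 : 0 < k := by linarith
  rw [Real.mul_rpow hk0.le hs.le] at h1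
  have h2 : k ^ 2 * k ^ (γ / 2) = k ^ (2 + γ / 2) := by
    rw [Real.rpow_add hk0]; norm_num
  have h3 : 1 ≤ k ^ (2 + γ / 2) := Real.one_le_rpow hk (by linarith)
  have h4 : 0 < s ^ (γ / 2) := by positivity
  calc s ^ (γ / 2) ≤ k ^ (2 + γ / 2) * s ^ (γ / 2) := by nlinarith
    _ = k ^ 2 * (k ^ (γ / 2) * s ^ (γ / 2)) := by rw [← h2]; ring
    _ ≤ _ := by gcongr

theorem ker_ub (hγ1 : -3 ≤ γ) (hγ2 : γ < -2) (x y : E3) (g : Fin 3 → ℝ) :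
    ‖x - y‖ ^ γ * cr (x - y : E3) g ≤ kb γ (x - y) * (32 * (1 + ‖y‖) ^ 6) * (Ww γ x * ((∑ i, g i ^ 2) + cr x g)) := by
  have hg : 0 ≤ ∑ i, g i ^ 2 := by positivity
  have hc := cr_nonneg x g
  have hW := Ww_pos γ x
  have hkb := kb_nonneg γ (x - y)
  have hkb2 : 2 ≤ kb γ (x - y) := by unfold kb; linarith [b1_nonneg γ (x - y)]
  have hny := norm_nonneg y
  have hnx := norm_nonneg x
  by_cases h0 : x - y = 0
  · rw [h0] at hkb ⊢
    have : cr (0 : E3) g = 0 := by simp [cr]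
    rw [this, mul_zero]
    positivity
  have hz : 0 < ‖x - y‖ := norm_pos_iff.2 h0
  have hp : 1 + ‖x‖ ≤ (1 + ‖x - y‖) * (1 + ‖y‖) := by
    have : ‖x‖ ≤ ‖x - y‖ + ‖y‖ := by simpa using norm_add_le (x - y) y
    nlinarith
  have hk1 : 1 ≤ 4 * (1 + ‖y‖) ^ 2 := by nlinarith
  have e : ‖x - y‖ ^ γ = (‖x - y‖ ^ 2) ^ (γ / 2) := by
    rw [← Real.rpow_natCast, ← Real.rpow_mul hz.le]; congr 1; push_cast; ring
  rcases le_or_gt 1 ‖x - y‖ with h | h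
  · have h1 : 1 + ‖x‖ ≤ 2 * (1 + ‖y‖) * ‖x - y‖ := by nlinarith
    have h2 : 1 + ‖x‖ ^ 2 ≤ (4 * (1 + ‖y‖) ^ 2) * ‖x - y‖ ^ 2 := by
      have : (1 + ‖x‖) ^ 2 ≤ (2 * (1 + ‖y‖) * ‖x - y‖) ^ 2 := by gcongr
      nlinarith
    have h3 := Ww_shift hγ1 hγ2 x (by positivity : 0 < ‖x - y‖ ^ 2) hk1 h2
    rw [← e] at h3
    have h4 := mul_le_mul h3 (cr_sub_le x y g) (cr_nonneg _ _) (by positivity)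
    refine h4.trans ?_
    have h5 : 0 ≤ 32 * (1 + ‖y‖) ^ 6 * (Ww γ x * ((∑ i, g i ^ 2) + cr x g)) := by positivity
    calc _ = 1 * (32 * (1 + ‖y‖) ^ 6 * (Ww γ x * ((∑ i, g i ^ 2) + cr x g))) := by ring
      _ ≤ kb γ (x - y) * (32 * (1 + ‖y‖) ^ 6 * (Ww γ x * ((∑ i, g i ^ 2) + cr x g))) := by
        gcongr; linarith
      _ = _ := by ring
  · have h2 : 1 + ‖x‖ ^ 2 ≤ (4 * (1 + ‖y‖) ^ 2) * 1 := by
      have : (1 + ‖x‖) ^ 2 ≤ (2 * (1 + ‖y‖)) ^ 2 := by gcongr; nlinarith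
      nlinarith
    have h3 := Ww_shift hγ1 hγ2 x one_pos hk1 h2
    rw [Real.one_rpow] at h3
    have h4 : ‖x - y‖ ^ γ * cr (x - y : E3) g ≤ kb γ (x - y) * ∑ i, g i ^ 2 := by
      calc _ ≤ ‖x - y‖ ^ γ * (‖x - y‖ ^ 2 * ∑ i, g i ^ 2) := by gcongr; exact cr_le_sq _ _
        _ = ‖x - y‖ ^ (γ + 2) * ∑ i, g i ^ 2 := by
          rw [Real.rpow_add hz, ← mul_assoc]; norm_num
        _ ≤ _ := by
          gcongr; have := norm_rpow_le_kb hγ2 (x - y)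
          have : 0 ≤ ‖x - y‖ ^ (γ + 2) := by positivity
          linarith
    refine h4.trans ?_
    have h6 : 16 * (1 + ‖y‖) ^ 4 ≤ 32 * (1 + ‖y‖) ^ 6 := by
      have : (1 + ‖y‖) ^ 4 ≤ (1 + ‖y‖) ^ 6 := pow_le_pow_right₀ (by linarith) (by norm_num)
      have : 0 ≤ (1 + ‖y‖) ^ 6 := by positivity
      linarith
    have h7 : 1 ≤ 32 * (1 + ‖y‖) ^ 6 * Ww γ x := by
      refine h3.trans (le_trans (le_of_eq ?_) (mul_le_mul_of_nonneg_right h6 hW.le)); ring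
    have h8 : ∑ i, g i ^ 2 ≤ (32 * (1 + ‖y‖) ^ 6 * Ww γ x) * ((∑ i, g i ^ 2) + cr x g) := by
      have := mul_le_mul_of_nonneg_right h7 (by positivity : 0 ≤ (∑ i, g i ^ 2) + cr x g)
      linarith
    calc _ ≤ kb γ (x - y) * ((32 * (1 + ‖y‖) ^ 6 * Ww γ x) * ((∑ i, g i ^ 2) + cr x g)) := by gcongr
      _ = _ := by ring

theorem sig_quad (hγ1 : -3 ≤ γ) (hγ2 : γ < -2) (x : E3) (g : Fin 3 → ℝ) :
    ∑ i, ∑ j, sigmaij γ i j x * (g i * g j) = ∫ y, ‖x - y‖ ^ γ * cr (x - y : E3) g * Mx y := by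
  have hi : ∀ i j, Integrable (fun y => Bij γ i j (x - y) * Mx y * (g i * g j)) := fun i j =>
    (cv_integrable hγ1 hγ2 i j rd1_Mx.dec rd1_Mx.cont.aestronglyMeasurable x).mul_const _
  simp only [sigmaij, ← integral_mul_const]
  have : ∀ y, ‖x - y‖ ^ γ * cr (x - y : E3) g * Mx y = ∑ i, ∑ j, Bij γ i j (x - y) * Mx y * (g i * g j) := by
    intro y; rw [← Bij_quad hγ2, Finset.sum_mul]
    refine Finset.sum_congr rfl fun i _ => ?_
    rw [Finset.sum_mul]
    refine Finset.sum_congr rfl fun j _ => ?_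
    ring
  simp only [this]
  rw [integral_finsetSum _ fun i _ => integrable_finsetSum _ fun j _ => hi i j]
  refine Finset.sum_congr rfl fun i _ => ?_
  rw [integral_finsetSum _ fun j _ => hi i j]

theorem sig_ub (hγ1 : -3 ≤ γ) (hγ2 : γ < -2) : ∃ C : ℝ, 0 ≤ C ∧ ∀ (x : E3) (g : Fin 3 → ℝ),
    ∑ i, ∑ j, sigmaij γ i j x * (g i * g j) ≤ C * (Ww γ x * ((∑ i, g i ^ 2) + cr x g)) := by
  have hpg : PG (fun y : E3 => 32 * (1 + ‖y‖) ^ 6) :=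
    (PG.const 32).mul (((PG.const 1).add PG.norm).pow 6)
  have hd : Dec (fun y => 32 * (1 + ‖y‖) ^ 6 * Mx y) := Dec.mul' hpg rd1_Mx.dec
  have hcM := rd1_Mx.cont
  have hm : AEStronglyMeasurable (fun y : E3 => 32 * (1 + ‖y‖) ^ 6 * Mx y) :=
    Continuous.aestronglyMeasurable (by fun_prop)
  obtain ⟨C, hC0, hC⟩ := kb_int hγ1 hd hm
  refine ⟨C, hC0, fun x g => ?_⟩
  have hg : 0 ≤ Ww γ x * ((∑ i, g i ^ 2) + cr x g) := by
    have := Ww_pos γ x; have := cr_nonneg x g; positivity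
  rw [sig_quad hγ1 hγ2]
  refine le_trans ?_ (mul_le_mul_of_nonneg_right (hC x).2 hg)
  rw [← integral_mul_const]
  refine integral_mono_of_nonneg (Filter.Eventually.of_forall fun y => ?_) ((hC x).1.mul_const _)
    (Filter.Eventually.of_forall fun y => ?_)
  · exact mul_nonneg (mul_nonneg (by positivity) (cr_nonneg _ _)) (Mx_pos y).le
  · simp only
    have h := mul_le_mul_of_nonneg_right (ker_ub hγ1 hγ2 x y g) (Mx_pos y).le
    have hM := Mx_pos y
    rw [abs_of_nonneg (by positivity)]
    refine h.trans (le_of_eq (by ring))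

noncomputable def Qf (γ : ℝ) (f : E3 → ℝ) (x : E3) : ℝ :=
  Ww γ x * ((∑ i, Uf f i x ^ 2) + cr x (fun i => Uf f i x) + (1 + ‖x‖ ^ 2) * f x ^ 2)

theorem Dec.sq {f : E3 → ℝ} (h : Dec f) : Dec (fun x => f x ^ 2) := by
  simpa [_root_.sq] using h.mul h.pg

theorem Qf_int (hγ2 : γ < -2) {f : E3 → ℝ} (h : RD1 f) : Integrable (Qf γ f) := by
  have hW := (Ww_cont γ).measurable
  have hU := h.Uf_meas
  have hf := h.cont.measurable
  refine Dec.integrable ?_ ?_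
  · have d : ∀ i j : Fin 3, Dec (fun x : E3 => x i * Uf f j x) := fun i j => Dec.mul' (PG.coord i) (h.Uf_dec j)
    refine Dec.mul' (Ww_pg hγ2) (Dec.add (Dec.add ?_ ?_) ?_)
    · exact Dec.sum Finset.univ fun i => (h.Uf_dec i).sq
    · unfold cr
      exact Dec.add (Dec.add (Dec.sq (Dec.sub (d 1 2) (d 2 1))) (Dec.sq (Dec.sub (d 2 0) (d 0 2)))) (Dec.sq (Dec.sub (d 0 1) (d 1 0)))
    · exact Dec.mul' ((PG.const 1).add (PG.norm.pow 2)) h.dec.sq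
  · unfold Qf cr
    have := hU 0; have := hU 1; have := hU 2
    simp only [Fin.sum_univ_three]
    exact Measurable.aestronglyMeasurable (by fun_prop)

theorem Qf_nonneg (γ : ℝ) (f : E3 → ℝ) (x : E3) : 0 ≤ Qf γ f x := by
  unfold Qf
  have := Ww_pos γ x; have := cr_nonneg x (fun i => Uf f i x); positivity

theorem wt_one (γ : ℝ) (x : E3) : wt γ 0 0 1 0 x = 1 := by simp [wt]

theorem vsig_ub (hγ1 : -3 ≤ γ) (hγ2 : γ < -2) : ∃ C : ℝ, 0 ≤ C ∧ ∀ f : E3 → ℝ, RD1 f →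
    vsigSq γ 0 0 1 0 f ≤ C * ∫ x, Qf γ f x := by
  obtain ⟨C, hC0, hC⟩ := sig_ub hγ1 hγ2
  refine ⟨2 * C, by positivity, fun f h => ?_⟩
  have hsig : ∀ i j, PG1 (sigmaij γ i j) := fun i j => cv_pg1 hγ1 hγ2 i j rd1_Mx
  have hI : ∀ i j, Integrable (fun x => (wt γ 0 0 1 0 x) ^ 2 * (sigmaij γ i j x * pd i f x * pd j f x +
        sigmaij γ i j x * (x i / 2) * (x j / 2) * (f x) ^ 2)) := by
    intro i j
    simp only [wt_one, one_pow, one_mul]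
    have hm := (hsig i j).cont.measurable
    have hp := meas_pd i f
    have hp' := meas_pd j f
    have hf := h.cont.measurable
    refine Dec.integrable (Dec.add ?_ ?_) (Measurable.aestronglyMeasurable (by fun_prop))
    · exact Dec.mul (Dec.mul' (hsig i j).pg (h.pdec i)) (h.pdec j).pg
    · exact Dec.mul' (((hsig i j).pg.mul (PG1.half i).pg).mul (PG1.half j).pg) h.dec.sq
  unfold vsigSq
  have e1 : ∀ i, ∑ j, ∫ x, (wt γ 0 0 1 0 x) ^ 2 * (sigmaij γ i j x * pd i f x * pd j f x +
        sigmaij γ i j x * (x i / 2) * (x j / 2) * (f x) ^ 2) = ∫ x, ∑ j, (wt γ 0 0 1 0 x) ^ 2 * (sigmaij γ i j x * pd i f x * pd j f x +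
        sigmaij γ i j x * (x i / 2) * (x j / 2) * (f x) ^ 2) := fun i => (integral_finsetSum _ fun j _ => hI i j).symm
  simp only [e1]
  rw [← integral_finsetSum _ fun i _ => integrable_finsetSum _ fun j _ => hI i j, ← integral_const_mul]
  refine integral_mono (integrable_finsetSum _ fun i _ => integrable_finsetSum _ fun j _ => hI i j)
    ((Qf_int hγ2 h).const_mul _) fun x => ?_
  have k1 := hC x (fun i => pd i f x)
  have k2 := hC x (fun i => x i / 2)
  have c2 : cr x (fun i => x i / 2) = 0 := by unfold cr; ring
  have c1 : cr x (fun i => pd i f x) = cr x (fun i => Uf f i x) := by unfold cr Uf; ring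
  rw [c2, add_zero] at k2
  rw [c1] at k1
  have hf2 := sq_nonneg (f x)
  have k3 := mul_le_mul_of_nonneg_right k2 hf2
  have eL : ∑ i, ∑ j, (wt γ 0 0 1 0 x) ^ 2 * (sigmaij γ i j x * pd i f x * pd j f x +
        sigmaij γ i j x * (x i / 2) * (x j / 2) * (f x) ^ 2) =
      (∑ i, ∑ j, sigmaij γ i j x * (pd i f x * pd j f x)) + (∑ i, ∑ j, sigmaij γ i j x * (x i / 2 * (x j / 2))) * f x ^ 2 := by
    simp only [wt_one, Fin.sum_univ_three]; ring
  rw [eL]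
  refine (add_le_add k1 k3).trans ?_
  have hW := Ww_pos γ x
  have hcr := cr_nonneg x (fun i => Uf f i x)
  have s1 : ∑ i, pd i f x ^ 2 ≤ 2 * (∑ i, Uf f i x ^ 2) + 1 / 2 * (‖x‖ ^ 2 * f x ^ 2) := by
    rw [normsq3]; simp only [Fin.sum_univ_three]
    have : ∀ i, pd i f x ^ 2 ≤ 2 * Uf f i x ^ 2 + 1 / 2 * (x i ^ 2 * f x ^ 2) := by
      intro i; unfold Uf; nlinarith [sq_nonneg (pd i f x + x i * f x)]
    have h0 := this 0; have h1 := this 1; have h2 := this 2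
    linarith
  have s2 : ∑ i, (x i / 2) ^ 2 = ‖x‖ ^ 2 / 4 := by rw [normsq3]; simp only [Fin.sum_univ_three]; ring
  rw [s2]
  have s3 : (∑ i, pd i f x ^ 2) + cr x (fun i => Uf f i x) + ‖x‖ ^ 2 / 4 * f x ^ 2 ≤
    2 * ((∑ i, Uf f i x ^ 2) + cr x (fun i => Uf f i x) + (1 + ‖x‖ ^ 2) * f x ^ 2) := by
    have : 0 ≤ ‖x‖ ^ 2 * f x ^ 2 := by positivity
    linarith
  have s4 := mul_le_mul_of_nonneg_left s3 (mul_nonneg hC0 hW.le)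
  unfold Qf
  linarith
end

/-! ### A Gaussian Poincare inequality -/
section

theorem int_cs {φ : ℝ → ℝ} (h : Continuous φ) :
    (∫ t in (1/2:ℝ)..1, φ t) ^ 2 ≤ 1 / 2 * ∫ t in (1/2:ℝ)..1, φ t ^ 2 := by
  set I := ∫ t in (1/2:ℝ)..1, φ t with hI
  have h0 : 0 ≤ ∫ t in (1/2:ℝ)..1, (φ t - 2 * I) ^ 2 :=
    intervalIntegral.integral_nonneg (by norm_num) fun t _ => sq_nonneg _
  have e : ∀ t, (φ t - 2 * I) ^ 2 = φ t ^ 2 - (4 * I) * φ t + 4 * I ^ 2 := fun t => by ring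
  simp only [e] at h0
  rw [intervalIntegral.integral_add ((by fun_prop : Continuous fun t => φ t ^ 2 - 4 * I * φ t).intervalIntegrable _ _)
    (continuous_const.intervalIntegrable _ _),
    intervalIntegral.integral_sub ((by fun_prop : Continuous fun t => φ t ^ 2).intervalIntegrable _ _)
    ((by fun_prop : Continuous fun t => 4 * I * φ t).intervalIntegrable _ _),
    intervalIntegral.integral_const_mul, intervalIntegral.integral_const, ← hI] at h0
  norm_num at h0
  linarith

noncomputable def Dg (h : E3 → ℝ) (x : E3) : ℝ := ∑ i, pd i h x ^ 2

theorem Dg_cont {h : E3 → ℝ} (hc : ∀ i, Continuous (pd i h)) : Continuous (Dg h) := by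
  unfold Dg
  exact continuous_finsetSum _ fun i _ => (hc i).pow 2

theorem seg_bound {h : E3 → ℝ} (hd : Differentiable ℝ h) (hc : ∀ i, Continuous (pd i h)) (x y : E3) :
    (h x - h (y + (1/2:ℝ) • (x - y))) ^ 2 ≤ 1 / 2 * ∫ t in (1/2:ℝ)..1, ‖x - y‖ ^ 2 * Dg h (y + t • (x - y)) := by
  have hder : ∀ t : ℝ, HasDerivAt (fun t : ℝ => h (y + t • (x - y))) (∑ i, (x - y) i * pd i h (y + t • (x - y))) t := by
    intro t
    rw [← fderiv_eq_sum]
    have h1 : HasDerivAt (fun t : ℝ => y + t • (x - y)) (x - y) t := by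
      simpa using ((hasDerivAt_id t).smul_const (x - y)).const_add y
    exact (hd _).hasFDerivAt.comp_hasDerivAt t h1
  have hφ : Continuous (fun t : ℝ => ∑ i, (x - y) i * pd i h (y + t • (x - y))) := by
    refine continuous_finsetSum _ fun i _ => continuous_const.mul ((hc i).comp (by fun_prop))
  have hD := Dg_cont hc
  have ftc := intervalIntegral.integral_eq_sub_of_hasDerivAt (a := (1/2:ℝ)) (b := 1) (fun t _ => hder t)
    (hφ.intervalIntegrable _ _)
  have e1 : y + (1:ℝ) • (x - y) = x := by simp
  rw [e1] at ftc
  rw [← ftc]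
  refine (int_cs hφ).trans ?_
  refine mul_le_mul_of_nonneg_left ?_ (by norm_num)
  refine intervalIntegral.integral_mono_on (by norm_num) ((hφ.pow 2).intervalIntegrable _ _)
    (Continuous.intervalIntegrable (by fun_prop) _ _) fun t _ => ?_
  simp only [Pi.pow_apply, Dg]
  rw [normsq3]
  simp only [Fin.sum_univ_three]
  set p := (x - y) 0
  set q := (x - y) 1
  set r := (x - y) 2
  set a := pd 0 h (y + t • (x - y))
  set b := pd 1 h (y + t • (x - y))
  set c := pd 2 h (y + t • (x - y))
  nlinarith [sq_nonneg (p * b - q * a), sq_nonneg (p * c - r * a), sq_nonneg (q * c - r * b)]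

noncomputable def nu (x : E3) : ℝ := Real.exp (-4 * ‖x‖ ^ 2)
noncomputable def ga (x : E3) : ℝ := Real.exp (-1 * ‖x‖ ^ 2)

theorem nu_cont : Continuous nu := by unfold nu; fun_prop
theorem ga_cont : Continuous ga := by unfold ga; fun_prop
theorem nu_pos (x : E3) : 0 < nu x := Real.exp_pos _
theorem ga_pos (x : E3) : 0 < ga x := Real.exp_pos _
theorem ga_int : Integrable ga := (exp_dec one_pos).integrable ga_cont.aestronglyMeasurable
theorem nu_dec : Dec nu := exp_dec (by norm_num)
theorem nu_int : Integrable nu := nu_dec.integrable nu_cont.aestronglyMeasurable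

theorem nu_seg (x y : E3) {t : ℝ} (h0 : 0 ≤ t) (h1 : t ≤ 1) :
    nu x * nu y * ‖x - y‖ ^ 2 ≤ 2 * (ga y * ga (y + t • (x - y))) := by
  have hc : ‖y + t • (x - y)‖ ^ 2 ≤ ‖x‖ ^ 2 + ‖y‖ ^ 2 := by
    have : ‖y + t • (x - y)‖ ≤ t * ‖x‖ + (1 - t) * ‖y‖ := by
      calc _ = ‖t • x + (1 - t) • y‖ := by congr 1; module
        _ ≤ _ := (norm_add_le _ _).trans (by rw [norm_smul, norm_smul, Real.norm_of_nonneg h0, Real.norm_of_nonneg (by linarith)])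
    have h2 : ‖y + t • (x - y)‖ ^ 2 ≤ (t * ‖x‖ + (1 - t) * ‖y‖) ^ 2 := by gcongr
    have h3 : (t * ‖x‖ + (1 - t) * ‖y‖) ^ 2 ≤ t * ‖x‖ ^ 2 + (1 - t) * ‖y‖ ^ 2 := by
      have : 0 ≤ t * (1 - t) * (‖x‖ - ‖y‖) ^ 2 := mul_nonneg (mul_nonneg h0 (by linarith)) (sq_nonneg _)
      nlinarith
    nlinarith [sq_nonneg ‖x‖, sq_nonneg ‖y‖]
  have hs : ‖x - y‖ ^ 2 ≤ 2 * Real.exp (‖x‖ ^ 2 + ‖y‖ ^ 2) := by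
    have h2 : ‖x - y‖ ^ 2 ≤ (‖x‖ + ‖y‖) ^ 2 := by gcongr; exact norm_sub_le x y
    have := Real.add_one_le_exp (‖x‖ ^ 2 + ‖y‖ ^ 2)
    nlinarith [sq_nonneg (‖x‖ - ‖y‖)]
  have e1 : nu x * nu y = Real.exp (-4 * (‖x‖ ^ 2 + ‖y‖ ^ 2)) := by
    unfold nu; rw [← Real.exp_add]; congr 1; ring
  calc _ ≤ nu x * nu y * (2 * Real.exp (‖x‖ ^ 2 + ‖y‖ ^ 2)) := by
        gcongr; exact mul_nonneg (nu_pos x).le (nu_pos y).le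
    _ = 2 * Real.exp (-3 * (‖x‖ ^ 2 + ‖y‖ ^ 2)) := by
        rw [e1, mul_left_comm, ← Real.exp_add]; congr 2; ring
    _ ≤ _ := by
        unfold ga; rw [← Real.exp_add]
        gcongr
        nlinarith [sq_nonneg ‖x‖, sq_nonneg ‖y‖]

/-- the pointwise bound, with values in `ENNReal` -/
theorem seg_l {h : E3 → ℝ} (hd : Differentiable ℝ h) (hc : ∀ i, Continuous (pd i h)) (x y : E3) :
    ENNReal.ofReal (nu x * nu y * (h x - h (y + (1/2:ℝ) • (x - y))) ^ 2) ≤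
    ∫⁻ t in Set.Ioc (1/2:ℝ) 1, ENNReal.ofReal (ga y * (ga (y + t • (x - y)) * Dg h (y + t • (x - y)))) := by
  have hD := Dg_cont hc
  have hg := ga_cont
  have hD0 : ∀ z, 0 ≤ Dg h z := fun z => by unfold Dg; positivity
  have hcont : Continuous (fun t : ℝ => ga y * (ga (y + t • (x - y)) * Dg h (y + t • (x - y)))) := by fun_prop
  rw [← ofReal_integral_eq_lintegral_ofReal]
  rotate_left
  · exact (hcont.integrableOn_Icc (a := 1/2) (b := 1)).mono_set Set.Ioc_subset_Icc_self
  · exact Filter.Eventually.of_forall fun t => mul_nonneg (ga_pos _).le (mul_nonneg (ga_pos _).le (hD0 _))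
  refine ENNReal.ofReal_le_ofReal ?_
  rw [← intervalIntegral.integral_of_le (by norm_num)]
  have hnn : 0 ≤ nu x * nu y := mul_nonneg (nu_pos x).le (nu_pos y).le
  refine (mul_le_mul_of_nonneg_left (seg_bound hd hc x y) hnn).trans ?_
  rw [← intervalIntegral.integral_const_mul, ← intervalIntegral.integral_const_mul]
  refine intervalIntegral.integral_mono_on (by norm_num) (Continuous.intervalIntegrable (by fun_prop) _ _)
    (hcont.intervalIntegrable _ _) fun t ht => ?_
  have := mul_le_mul_of_nonneg_right (nu_seg x y (by linarith [ht.1] : 0 ≤ t) ht.2) (hD0 (y + t • (x - y)))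
  linarith

theorem scale_l {g : E3 → ℝ} (hi : Integrable g) (h0 : ∀ x, 0 ≤ g x) (y : E3) {t : ℝ} (ht : 1 / 2 ≤ t) :
    ∫⁻ x, ENNReal.ofReal (g (y + t • (x - y))) ≤ ENNReal.ofReal (8 * ∫ x, g x) := by
  have e : ∀ x, y + t • (x - y) = t • x + (y - t • y) := fun x => by module
  simp only [e]
  have h1 : Integrable (fun x => g (x + (y - t • y))) := hi.comp_add_right _
  have h2 : Integrable (fun x => g (t • x + (y - t • y))) := h1.comp_smul (by linarith : t ≠ 0)
  rw [← ofReal_integral_eq_lintegral_ofReal h2 (Filter.Eventually.of_forall fun x => h0 _)]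
  refine ENNReal.ofReal_le_ofReal ?_
  rw [Measure.integral_comp_smul volume (fun x => g (x + (y - t • y))), integral_add_right_eq_self]
  rw [finrank_euclideanSpace_fin, smul_eq_mul]
  have hg : 0 ≤ ∫ x, g x := integral_nonneg h0
  gcongr
  have h3 : (1/2:ℝ) ^ 3 ≤ t ^ 3 := by gcongr
  rw [abs_of_nonneg (by positivity)]
  calc (t ^ 3)⁻¹ ≤ ((1/2:ℝ) ^ 3)⁻¹ := by gcongr
    _ = 8 := by norm_num

theorem half_l {h : E3 → ℝ} (hd : Differentiable ℝ h) (hc : ∀ i, Continuous (pd i h))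
    (hi : Integrable (fun x => ga x * Dg h x)) :
    ∫⁻ y : E3, ∫⁻ x : E3, ENNReal.ofReal (nu x * nu y * (h x - h (y + (1/2:ℝ) • (x - y))) ^ 2) ≤
      ENNReal.ofReal ((∫ x, ga x) * (4 * ∫ x, ga x * Dg h x)) := by
  have hD := Dg_cont hc
  have hg := ga_cont
  have hD0 : ∀ z, 0 ≤ ga z * Dg h z := fun z => mul_nonneg (ga_pos z).le (by unfold Dg; positivity)
  have hI : 0 ≤ ∫ x, ga x * Dg h x := integral_nonneg hD0
  have step : ∀ y : E3, ∫⁻ x : E3, ENNReal.ofReal (nu x * nu y * (h x - h (y + (1/2:ℝ) • (x - y))) ^ 2) ≤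
      ENNReal.ofReal (ga y) * ENNReal.ofReal (4 * ∫ x, ga x * Dg h x) := by
    intro y
    refine (lintegral_mono fun x => seg_l hd hc x y).trans ?_
    rw [lintegral_lintegral_swap]
    · have : ∀ t ∈ Set.Ioc (1/2:ℝ) 1, ∫⁻ x : E3, ENNReal.ofReal (ga y * (ga (y + t • (x - y)) * Dg h (y + t • (x - y)))) ≤
          ENNReal.ofReal (ga y) * ENNReal.ofReal (8 * ∫ x, ga x * Dg h x) := by
        intro t ht
        simp only [ENNReal.ofReal_mul (ga_pos y).le]
        rw [lintegral_const_mul' _ _ ENNReal.ofReal_ne_top]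
        gcongr
        exact scale_l hi hD0 y ht.1.le
      refine (setLIntegral_mono measurable_const this).trans ?_
      rw [setLIntegral_const, Real.volume_Ioc, mul_assoc, ← ENNReal.ofReal_mul (by positivity)]
      refine mul_le_mul_right (ENNReal.ofReal_le_ofReal ?_) _
      linarith
    · refine Measurable.aemeasurable ?_
      refine Measurable.ennreal_ofReal (Continuous.measurable ?_)
      show Continuous (fun p : E3 × ℝ => ga y * (ga (y + p.2 • (p.1 - y)) * Dg h (y + p.2 • (p.1 - y))))
      fun_prop
  refine (lintegral_mono step).trans ?_
  rw [lintegral_mul_const' _ _ ENNReal.ofReal_ne_top, ← ofReal_integral_eq_lintegral_ofReal ga_int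
    (Filter.Eventually.of_forall fun x => (ga_pos x).le), ← ENNReal.ofReal_mul]
  exact integral_nonneg fun x => (ga_pos x).le

theorem full_l {h : E3 → ℝ} (hd : Differentiable ℝ h) (hc : ∀ i, Continuous (pd i h))
    (hi : Integrable (fun x => ga x * Dg h x)) :
    ∫⁻ p : E3 × E3, ENNReal.ofReal (nu p.1 * nu p.2 * (h p.1 - h p.2) ^ 2) ∂(volume.prod volume) ≤
      ENNReal.ofReal ((∫ x, ga x) * (16 * ∫ x, ga x * Dg h x)) := by
  have hn := nu_cont
  have hcont := hd.continuous
  let A : E3 × E3 → ENNReal := fun p => ENNReal.ofReal (nu p.2 * nu p.1 * (h p.2 - h (p.1 + (1/2:ℝ) • (p.2 - p.1))) ^ 2)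
  have hAm : Measurable A := Measurable.ennreal_ofReal (Continuous.measurable (by fun_prop))
  have hA : ∫⁻ p, A p ∂(volume.prod volume) ≤ ENNReal.ofReal ((∫ x, ga x) * (4 * ∫ x, ga x * Dg h x)) := by
    rw [lintegral_prod _ hAm.aemeasurable]
    exact half_l hd hc hi
  have hpt : ∀ p : E3 × E3, ENNReal.ofReal (nu p.1 * nu p.2 * (h p.1 - h p.2) ^ 2) ≤ ENNReal.ofReal 2 * (A p + A p.swap) := by
    intro p
    have hnn : 0 ≤ nu p.1 * nu p.2 := mul_nonneg (nu_pos _).le (nu_pos _).le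
    have hnn' : 0 ≤ nu p.2 * nu p.1 := mul_nonneg (nu_pos _).le (nu_pos _).le
    simp only [A, Prod.fst_swap, Prod.snd_swap]
    have e : p.2 + (1/2:ℝ) • (p.1 - p.2) = p.1 + (1/2:ℝ) • (p.2 - p.1) := by module
    rw [e, ← ENNReal.ofReal_add (by positivity) (by positivity)]
    rw [← ENNReal.ofReal_mul (by norm_num)]
    refine ENNReal.ofReal_le_ofReal ?_
    set m := h (p.1 + (1/2:ℝ) • (p.2 - p.1))
    have : (h p.1 - h p.2) ^ 2 ≤ 2 * ((h p.2 - m) ^ 2 + (h p.1 - m) ^ 2) := by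
      nlinarith [sq_nonneg (h p.1 + h p.2 - 2 * m)]
    have := mul_le_mul_of_nonneg_left this hnn
    linarith
  refine (lintegral_mono hpt).trans ?_
  rw [lintegral_const_mul' _ _ ENNReal.ofReal_ne_top, lintegral_add_left hAm, lintegral_prod_swap]
  refine (mul_le_mul_right (add_le_add hA hA) _).trans ?_
  have h0 : 0 ≤ (∫ x, ga x) * (4 * ∫ x, ga x * Dg h x) := 
    mul_nonneg (integral_nonneg fun x => (ga_pos x).le) (mul_nonneg (by norm_num)
      (integral_nonneg fun z => mul_nonneg (ga_pos z).le (by unfold Dg; positivity)))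
  rw [← ENNReal.ofReal_add h0 h0]
  rw [← ENNReal.ofReal_mul (by norm_num)]
  refine ENNReal.ofReal_le_ofReal (le_of_eq (by ring))

theorem poinc {h : E3 → ℝ} (hd : Differentiable ℝ h) (hc : ∀ i, Continuous (pd i h))
    (hi : Integrable (fun x => ga x * Dg h x)) (i1 : Integrable (fun x => nu x * h x))
    (i2 : Integrable (fun x => nu x * h x ^ 2)) (hz : ∫ x, nu x * h x = 0) :
    (∫ x, nu x) * ∫ x, nu x * h x ^ 2 ≤ (∫ x, ga x) * (8 * ∫ x, ga x * Dg h x) := by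
  have j1 := nu_int.mul_prod i2
  have j2 := i2.mul_prod nu_int
  have j3 := i1.mul_prod i1
  have e : ∀ p : E3 × E3, nu p.1 * nu p.2 * (h p.1 - h p.2) ^ 2 =
    nu p.1 * (nu p.2 * h p.2 ^ 2) + nu p.1 * h p.1 ^ 2 * nu p.2 - 2 * (nu p.1 * h p.1 * (nu p.2 * h p.2)) := by
    intro p; ring
  have hprod : Integrable (fun p : E3 × E3 => nu p.1 * nu p.2 * (h p.1 - h p.2) ^ 2) (volume.prod volume) := by
    simp only [e]
    exact int_sub' (int_add' j1 j2) (j3.const_mul 2)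
  have hL := full_l hd hc hi
  have h0 : 0 ≤ (∫ x, ga x) * (16 * ∫ x, ga x * Dg h x) := 
    mul_nonneg (integral_nonneg fun x => (ga_pos x).le) (mul_nonneg (by norm_num)
      (integral_nonneg fun z => mul_nonneg (ga_pos z).le (by unfold Dg; positivity)))
  rw [← ofReal_integral_eq_lintegral_ofReal hprod (Filter.Eventually.of_forall fun p =>
    mul_nonneg (mul_nonneg (nu_pos _).le (nu_pos _).le) (sq_nonneg _)), ENNReal.ofReal_le_ofReal_iff h0] at hL
  simp only [e] at hL
  rw [integral_sub (int_add' j1 j2) (j3.const_mul 2), integral_add j1 j2, integral_const_mul,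
    integral_prod_mul (μ := volume) (ν := volume) nu (fun y => nu y * h y ^ 2),
    integral_prod_mul (μ := volume) (ν := volume) (fun y => nu y * h y ^ 2) nu,
    integral_prod_mul (μ := volume) (ν := volume) (fun y => nu y * h y) (fun y => nu y * h y), hz] at hL
  linarith
end

/-! ### Weighted Poincare -/
section
variable {γ : ℝ}

theorem Ww_hasFDerivAt (γ : ℝ) (x : E3) : HasFDerivAt (Ww γ)
    ((γ / 2 * (1 + ‖x‖ ^ 2) ^ (γ / 2 - 1)) • (2 • (innerSL ℝ x))) x := by
  have h1 : HasFDerivAt (fun y : E3 => 1 + ‖y‖ ^ 2) (2 • (innerSL ℝ x)) x :=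
    (hasStrictFDerivAt_norm_sq x).hasFDerivAt.const_add 1
  have h2 := h1.rpow_const (p := γ / 2) (Or.inl (by positivity))
  exact h2

theorem pd_Ww (γ : ℝ) (i : Fin 3) (x : E3) : pd i (Ww γ) x = γ * (1 + ‖x‖ ^ 2) ^ (γ / 2 - 1) * x i := by
  unfold pd
  rw [(Ww_hasFDerivAt γ x).fderiv]
  simp [EuclideanSpace.inner_single_right]
  ring

theorem Ww_pg1 (hγ2 : γ < -2) : PG1 (Ww γ) := by
  refine ⟨fun x => (Ww_hasFDerivAt γ x).differentiableAt, Ww_pg hγ2, fun i => ?_⟩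
  have e : pd i (Ww γ) = fun x => γ * (1 + ‖x‖ ^ 2) ^ (γ / 2 - 1) * x i := funext (pd_Ww γ i)
  rw [e]
  refine PG.mul (PG.mul (PG.const γ) ⟨0, 1, fun x => ?_⟩) (PG.coord i)
  rw [abs_of_nonneg (by positivity)]
  simpa using Real.rpow_le_one_of_one_le_of_nonpos (by nlinarith [sq_nonneg ‖x‖] : (1:ℝ) ≤ 1 + ‖x‖ ^ 2) (by linarith : γ / 2 - 1 ≤ 0)

theorem ibp {f g : E3 → ℝ} (hf : RD1 f) (hg : RD1 g) (i : Fin 3) : ∫ x, f x * pd i g x = - ∫ x, pd i f x * g x := by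
  have hf' := hf.cont.measurable
  have hg' := hg.cont.measurable
  exact integral_mul_fderiv_eq_neg_fderiv_mul_of_integrable (rd1_int (hf.pdec i) hg.dec.pg (meas_pd i f) hg')
    (rd1_int hf.dec (hg.pdec i).pg hf' (meas_pd i g)) (rd1_int hf.dec hg.dec.pg hf' hg')
    (fun x _ => hf.diff x) (fun x _ => hg.diff x)

theorem wx_bound (hγ2 : γ < -2) {f : E3 → ℝ} (hf : RD1 f) :
    ∫ x, Ww γ x * (‖x‖ ^ 2 * f x ^ 2) ≤ 6 * (∫ x, Ww γ x * f x ^ 2) + 4 * ∫ x, Ww γ x * ∑ i, Uf f i x ^ 2 := by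
  have hW := (Ww_cont γ).measurable
  have hW' := Ww_cont γ
  have hfm := hf.cont.measurable
  have hfc := hf.cont
  have hU := hf.Uf_meas
  have hp := fun i => meas_pd i f
  have hxW : ∀ i, PG1 (fun x : E3 => Ww γ x * x i) := fun i => (Ww_pg1 hγ2).mul (PG1.coord i)
  have hgi : ∀ i, RD1 (fun x : E3 => Ww γ x * x i * f x) := fun i => RD1.mul' (hxW i) hf
  have iA : Integrable (fun x => Ww γ x * (‖x‖ ^ 2 * f x ^ 2)) :=
    (Dec.mul' (Ww_pg hγ2) (Dec.mul' (PG.norm.pow 2) hf.dec.sq)).integrable (Measurable.aestronglyMeasurable (by fun_prop))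
  have iB : Integrable (fun x => Ww γ x * f x ^ 2) :=
    (Dec.mul' (Ww_pg hγ2) hf.dec.sq).integrable (Measurable.aestronglyMeasurable (by fun_prop))
  have iF : Integrable (fun x => Ww γ x * ∑ i, Uf f i x ^ 2) :=
    (Dec.mul' (Ww_pg hγ2) (Dec.sum Finset.univ fun i => (hf.Uf_dec i).sq)).integrable
      (Measurable.aestronglyMeasurable (by
        have := hU 0; have := hU 1; have := hU 2
        simp only [Fin.sum_univ_three]; fun_prop))
  have i1 : ∀ i, Integrable (fun x => f x * pd i (fun x : E3 => Ww γ x * x i * f x) x) := fun i =>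
    rd1_int hf.dec ((hgi i).pdec i).pg hfm (meas_pd i _)
  have i2 : ∀ i, Integrable (fun x => pd i f x * (Ww γ x * x i * f x)) := fun i =>
    rd1_int (hf.pdec i) (hgi i).dec.pg (meas_pd i _) (by fun_prop)
  have i3 : ∀ i, Integrable (fun x => f x * pd i (fun x : E3 => Ww γ x * x i * f x) x + pd i f x * (Ww γ x * x i * f x)) :=
    fun i => int_add' (i1 i) (i2 i)
  have z : ∫ x, ∑ i, (f x * pd i (fun x : E3 => Ww γ x * x i * f x) x + pd i f x * (Ww γ x * x i * f x)) = 0 := by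
    rw [integral_finsetSum _ fun i _ => i3 i]
    refine Finset.sum_eq_zero fun i _ => ?_
    rw [integral_add (i1 i) (i2 i), ibp hf (hgi i) i]; ring
  have pt : ∀ x, 1 / 2 * (Ww γ x * (‖x‖ ^ 2 * f x ^ 2)) ≤ 3 * (Ww γ x * f x ^ 2) + 2 * (Ww γ x * ∑ i, Uf f i x ^ 2)
      - ∑ i, (f x * pd i (fun x : E3 => Ww γ x * x i * f x) x + pd i f x * (Ww γ x * x i * f x)) := by
    intro x
    have e : ∀ i, pd i (fun x : E3 => Ww γ x * x i * f x) x =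
        (γ * (1 + ‖x‖ ^ 2) ^ (γ / 2 - 1) * x i * x i + Ww γ x) * f x + Ww γ x * x i * pd i f x := by
      intro i
      rw [pd_mul' (hxW i).diff hf.diff, pd_mul' (Ww_pg1 hγ2).diff (diff_coord i), pd_Ww, pd_coord, if_pos rfl, mul_one]
    simp only [e]
    have hpf : ∀ i, pd i f x = Uf f i x - x i / 2 * f x := fun i => by unfold Uf; ring
    simp only [hpf, Fin.sum_univ_three]
    have hq : 0 ≤ (-γ) * (1 + ‖x‖ ^ 2) ^ (γ / 2 - 1) := mul_nonneg (by linarith) (by positivity)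
    have hq2 := mul_nonneg hq (by positivity : 0 ≤ (x 0 ^ 2 + x 1 ^ 2 + x 2 ^ 2) * f x ^ 2)
    have sqs := mul_nonneg (Ww_pos γ x).le (by positivity : 0 ≤ (x 0 * f x - 2 * Uf f 0 x) ^ 2 + (x 1 * f x - 2 * Uf f 1 x) ^ 2 + (x 2 * f x - 2 * Uf f 2 x) ^ 2)
    generalize hr : (1 + ‖x‖ ^ 2) ^ (γ / 2 - 1) = r at *
    rw [normsq3]
    linarith
  have k := integral_mono (iA.const_mul (1/2)) (int_sub' (int_add' (iB.const_mul 3) (iF.const_mul 2))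
    (integrable_finsetSum _ fun i _ => i3 i)) pt
  rw [integral_sub (int_add' (iB.const_mul 3) (iF.const_mul 2)) (integrable_finsetSum _ fun i _ => i3 i), z,
    integral_add (iB.const_mul 3) (iF.const_mul 2), integral_const_mul, integral_const_mul, integral_const_mul] at k
  linarith

noncomputable def hh (f : E3 → ℝ) (x : E3) : ℝ := f x / sqrtM x

theorem hh_diff {f : E3 → ℝ} (hf : Differentiable ℝ f) : Differentiable ℝ (hh f) := by
  intro x
  have e : hh f = fun x => f x * (sqrtM x)⁻¹ := by funext x; unfold hh; rw [div_eq_mul_inv]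
  rw [e]
  exact (hf x).mul (DifferentiableAt.fun_inv (diff_sqrtM x) (sqrtM_pos x).ne')

theorem hh_pd {f : E3 → ℝ} (hf : Differentiable ℝ f) (i : Fin 3) (x : E3) : pd i (hh f) x = Uf f i x / sqrtM x := by
  have e : f = fun x => sqrtM x * hh f x := by
    funext x; unfold hh; have := (sqrtM_pos x).ne'; field_simp
  have h1 : pd i f x = pd i sqrtM x * hh f x + sqrtM x * pd i (hh f) x := by
    conv_lhs => rw [e]
    rw [pd_mul' diff_sqrtM (hh_diff hf)]
  have h2 : f x = sqrtM x * hh f x := congrFun e x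
  have h3 := (sqrtM_pos x).ne'
  unfold Uf
  rw [h1, pd_sqrtM, h2]
  field_simp
  ring

theorem Mx_exp (x : E3) : Mx x = cM ^ 2 * Real.exp (-(1/2) * ‖x‖ ^ 2) := by
  rw [← sqrtM_sq, sqrtM_eq, mul_pow, ← Real.exp_nat_mul]
  congr 2; push_cast; ring

theorem exp_div_M (a : ℝ) (x : E3) : Real.exp (-a * ‖x‖ ^ 2) / Mx x = 1 / cM ^ 2 * Real.exp (-(a - 1/2) * ‖x‖ ^ 2) := by
  rw [Mx_exp]
  have := cM_pos
  rw [div_eq_iff (by positivity)]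
  have : Real.exp (-a * ‖x‖ ^ 2) = Real.exp (-(a - 1/2) * ‖x‖ ^ 2) * Real.exp (-(1/2) * ‖x‖ ^ 2) := by
    rw [← Real.exp_add]; congr 1; ring
  rw [this]; field_simp

theorem exp_div_dec {a : ℝ} (ha : 1 / 2 < a) : Dec (fun x => Real.exp (-a * ‖x‖ ^ 2) / Mx x) := by
  simp only [exp_div_M]
  exact Dec.mul' (PG.const _) (exp_dec (by linarith))

theorem nu_hh2 (f : E3 → ℝ) (x : E3) : nu x * hh f x ^ 2 = nu x / Mx x * f x ^ 2 := by
  unfold hh; rw [div_pow, sqrtM_sq]; ring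

theorem ga_Dg {f : E3 → ℝ} (hf : Differentiable ℝ f) (x : E3) : ga x * Dg (hh f) x = ga x / Mx x * ∑ i, Uf f i x ^ 2 := by
  unfold Dg
  simp only [hh_pd hf, div_pow, sqrtM_sq, ← Finset.sum_div]
  ring

theorem ga_le (hγ1 : -3 ≤ γ) : ∃ C : ℝ, 0 ≤ C ∧ ∀ x, ga x / Mx x ≤ C * Ww γ x := by
  obtain ⟨C, hC0, hC⟩ := gauss_bound 4 (by norm_num : (0:ℝ) < 1/2)
  have := cM_pos
  refine ⟨1 / cM ^ 2 * C, by positivity, fun x => ?_⟩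
  unfold ga
  rw [exp_div_M, mul_assoc]
  refine mul_le_mul_of_nonneg_left ?_ (by positivity)
  have h1 := hC ‖x‖ (norm_nonneg x)
  have hb : (1:ℝ) ≤ 1 + ‖x‖ ^ 2 := by nlinarith [sq_nonneg ‖x‖]
  have h2 : (1 + ‖x‖ ^ 2) ^ (-2:ℝ) ≤ Ww γ x := by
    unfold Ww; exact Real.rpow_le_rpow_of_exponent_le hb (by linarith)
  have h3 : (1 + ‖x‖ ^ 2) ^ (-2:ℝ) = ((1 + ‖x‖ ^ 2) ^ 2)⁻¹ := by
    rw [Real.rpow_neg (by positivity)]; norm_num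
  have h4 : (1 + ‖x‖ ^ 2) ^ 2 ≤ (1 + ‖x‖) ^ 4 := by
    have : 1 + ‖x‖ ^ 2 ≤ (1 + ‖x‖) ^ 2 := by nlinarith [norm_nonneg x]
    calc (1 + ‖x‖ ^ 2) ^ 2 ≤ ((1 + ‖x‖) ^ 2) ^ 2 := by gcongr
      _ = _ := by ring
  have h5 : (1 + ‖x‖ ^ 2) ^ 2 * Real.exp (-(1/2) * ‖x‖ ^ 2) ≤ C :=
    (mul_le_mul_of_nonneg_right h4 (Real.exp_pos _).le).trans h1
  have h6 : Real.exp (-(1 - 1/2) * ‖x‖ ^ 2) ≤ C * ((1 + ‖x‖ ^ 2) ^ 2)⁻¹ := by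
    rw [← div_eq_mul_inv, le_div_iff₀ (by positivity), mul_comm]
    have : (-(1 - 1/2) : ℝ) = -(1/2) := by norm_num
    rw [this]; exact h5
  refine h6.trans ?_
  rw [← h3]; gcongr

theorem wpoinc (hγ1 : -3 ≤ γ) (hγ2 : γ < -2) : ∃ C : ℝ, 0 ≤ C ∧ ∀ f : E3 → ℝ, RD2 f → ∫ x, nu x * hh f x = 0 →
    ∫ x, Ww γ x * ((1 + ‖x‖ ^ 2) * f x ^ 2) ≤ C * ∫ x, Ww γ x * ∑ i, Uf f i x ^ 2 := by
  obtain ⟨C1, hC1, hga⟩ := ga_le hγ1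
  have hN : 0 < ∫ x, nu x := int_pos' nu_cont nu_int (fun x => (nu_pos x).le) (nu_pos 0).ne'
  have hG : 0 ≤ ∫ x, ga x := integral_nonneg fun x => (ga_pos x).le
  have hcM := cM_pos
  set K := cM ^ 2 * Real.exp 48 with hK
  have hK0 : 0 < K := by positivity
  set C2 := (∫ x, ga x) * (8 * C1) / (∫ x, nu x) with hC2
  have hC20 : 0 ≤ C2 := by positivity
  refine ⟨9 + 14 * K * C2, by positivity, fun f hf2 hz => ?_⟩
  have hf := hf2.r
  have hW := (Ww_cont γ).measurable
  have hW' := Ww_cont γ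
  have hfm := hf.cont.measurable
  have hfc := hf.cont
  have hU := hf.Uf_meas
  have hMc := rd1_Mx.cont
  have hMm := hMc.measurable
  have hsc := diff_sqrtM.continuous.measurable
  have hnc := nu_cont.measurable
  have hgc := ga_cont.measurable
  have mF : Measurable (fun x => ∑ i, Uf f i x ^ 2) := by
    have := hU 0; have := hU 1; have := hU 2
    simp only [Fin.sum_univ_three]; fun_prop
  have dF : Dec (fun x => ∑ i, Uf f i x ^ 2) := Dec.sum Finset.univ fun i => (hf.Uf_dec i).sq
  have iA : Integrable (fun x => Ww γ x * (‖x‖ ^ 2 * f x ^ 2)) :=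
    (Dec.mul' (Ww_pg hγ2) (Dec.mul' (PG.norm.pow 2) hf.dec.sq)).integrable (Measurable.aestronglyMeasurable (by fun_prop))
  have iB : Integrable (fun x => Ww γ x * f x ^ 2) :=
    (Dec.mul' (Ww_pg hγ2) hf.dec.sq).integrable (Measurable.aestronglyMeasurable (by fun_prop))
  have iF : Integrable (fun x => Ww γ x * ∑ i, Uf f i x ^ 2) :=
    (Dec.mul' (Ww_pg hγ2) dF).integrable (hW.mul mF).aestronglyMeasurable
  have iN : Integrable (fun x => nu x * hh f x ^ 2) := by
    simp only [nu_hh2]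
    exact (Dec.mul (exp_div_dec (by norm_num)) hf.dec.sq.pg).integrable (Measurable.aestronglyMeasurable (by fun_prop))
  have iN1 : Integrable (fun x => nu x * hh f x) := by
    refine (iN.add nu_int).mono' ?_ (Filter.Eventually.of_forall fun x => ?_)
    · unfold hh; exact Measurable.aestronglyMeasurable (by fun_prop)
    · rw [Real.norm_eq_abs, abs_mul, abs_of_pos (nu_pos x)]
      simp only [Pi.add_apply]
      have h1 := nu_pos x
      have h2 : |hh f x| ≤ hh f x ^ 2 + 1 := by
        rw [← sq_abs]; nlinarith [sq_nonneg (|hh f x| - 1), abs_nonneg (hh f x)]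
      have := mul_le_mul_of_nonneg_left h2 h1.le
      linarith
  have iG : Integrable (fun x => ga x * Dg (hh f) x) := by
    simp only [ga_Dg hf.diff]
    exact (Dec.mul (exp_div_dec (by norm_num)) dF.pg).integrable ((hgc.div hMm).mul mF).aestronglyMeasurable
  have hcp : ∀ i, Continuous (pd i (hh f)) := fun i => by
    have : pd i (hh f) = fun x => Uf f i x / sqrtM x := funext (hh_pd hf.diff i)
    rw [this]
    exact (hf2.Uf_rd1 i).cont.div diff_sqrtM.continuous fun x => (sqrtM_pos x).ne'
  have P := poinc (hh_diff hf.diff) hcp iG iN1 iN hz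
  have hg2 : ∫ x, ga x * Dg (hh f) x ≤ C1 * ∫ x, Ww γ x * ∑ i, Uf f i x ^ 2 := by
    rw [← integral_const_mul]
    refine integral_mono iG (iF.const_mul _) fun x => ?_
    simp only [ga_Dg hf.diff]
    have := mul_le_mul_of_nonneg_right (hga x) (by positivity : 0 ≤ ∑ i, Uf f i x ^ 2)
    linarith
  have hB : ∫ x, Ww γ x * f x ^ 2 ≤ 1 / 12 * (∫ x, Ww γ x * (‖x‖ ^ 2 * f x ^ 2)) + K * ∫ x, nu x * hh f x ^ 2 := by
    rw [← integral_const_mul, ← integral_const_mul, ← integral_add (iA.const_mul _) (iN.const_mul _)]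
    refine integral_mono iB (int_add' (iA.const_mul _) (iN.const_mul _)) fun x => ?_
    simp only
    have hw := Ww_pos γ x
    have hn := nu_pos x
    rcases le_or_gt 12 (‖x‖ ^ 2) with h | h
    · have h1 : Ww γ x * (12 * f x ^ 2) ≤ Ww γ x * (‖x‖ ^ 2 * f x ^ 2) := by gcongr
      have h2 : 0 ≤ K * (nu x * hh f x ^ 2) := by positivity
      linarith
    · have h1 : 0 ≤ 1 / 12 * (Ww γ x * (‖x‖ ^ 2 * f x ^ 2)) := by positivity
      have h2 : Ww γ x * f x ^ 2 ≤ 1 * f x ^ 2 := by gcongr; exact Ww_le_one hγ2 x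
      have h3 : f x ^ 2 = Mx x * hh f x ^ 2 := by
        unfold hh; rw [div_pow, sqrtM_sq]; have := (Mx_pos x).ne'; field_simp
      have h4 : Mx x ≤ K * nu x := by
        rw [Mx_exp, hK, mul_assoc]
        unfold nu
        rw [← Real.exp_add]
        gcongr
        nlinarith [sq_nonneg ‖x‖]
      have h5 := mul_le_mul_of_nonneg_right h4 (sq_nonneg (hh f x))
      linarith
  have hA := wx_bound hγ2 hf
  have hNF : ∫ x, nu x * hh f x ^ 2 ≤ C2 * ∫ x, Ww γ x * ∑ i, Uf f i x ^ 2 := by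
    have h1 : (∫ x, nu x) * ∫ x, nu x * hh f x ^ 2 ≤ (∫ x, ga x) * (8 * (C1 * ∫ x, Ww γ x * ∑ i, Uf f i x ^ 2)) :=
      P.trans (by gcongr)
    rw [hC2, div_mul_eq_mul_div, le_div_iff₀ hN]
    linarith
  have hKN := mul_le_mul_of_nonneg_left hNF hK0.le
  have eT : ∫ x, Ww γ x * ((1 + ‖x‖ ^ 2) * f x ^ 2) = (∫ x, Ww γ x * f x ^ 2) + ∫ x, Ww γ x * (‖x‖ ^ 2 * f x ^ 2) := by
    rw [← integral_add iB iA]; congr 1; funext x; ring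
  rw [eT]
  have hF0 : 0 ≤ ∫ x, Ww γ x * ∑ i, Uf f i x ^ 2 := integral_nonneg fun x => mul_nonneg (Ww_pos γ x).le (by positivity)
  have : 0 ≤ K * (C2 * ∫ x, Ww γ x * ∑ i, Uf f i x ^ 2) := by positivity
  linarith
end

/-! ### Hydrodynamic functions and the projection -/
section
variable {γ : ℝ}

noncomputable def pl (a c : ℝ) (b : Fin 3 → ℝ) (x : E3) : ℝ := a + (∑ i : Fin 3, b i * x i) + c * ‖x‖ ^ 2
noncomputable def kf (a c : ℝ) (b : Fin 3 → ℝ) (x : E3) : ℝ := pl a c b x * sqrtM x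

theorem pl_pg1 (a c : ℝ) (b : Fin 3 → ℝ) : PG1 (pl a c b) := by
  have e : pl a c b = fun x => a + (b 0 * x 0 + b 1 * x 1 + b 2 * x 2) + c * ‖x‖ ^ 2 := by
    funext x; unfold pl; rw [Fin.sum_univ_three]
  rw [e]
  exact ((PG1.const a).add ((((PG1.const _).mul (PG1.coord 0)).add ((PG1.const _).mul (PG1.coord 1))).add
    ((PG1.const _).mul (PG1.coord 2)))).add ((PG1.const c).mul PG1.normsq)

theorem pl_pd (a c : ℝ) (b : Fin 3 → ℝ) (i : Fin 3) (x : E3) : pd i (pl a c b) x = b i + 2 * c * x i := by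
  have hc : ∀ k (j : Fin 3), PG1 (fun x : E3 => k * x j) := fun k j => (PG1.const k).mul (PG1.coord j)
  have hs : Differentiable ℝ (fun x : E3 => ∑ k : Fin 3, b k * x k) :=
    Differentiable.fun_sum fun k _ => (hc (b k) k).diff
  have h0 : ∀ k (j : Fin 3), pd i (fun x : E3 => k * x j) x = k * if i = j then 1 else 0 := by
    intro k j
    rw [pd_mul' (PG1.const k).diff (diff_coord j), pd_const', pd_coord]; ring
  unfold pl
  rw [pd_add' ((PG1.const a).diff.fun_add hs) ((PG1.const c).mul PG1.normsq).diff, pd_add' (PG1.const a).diff hs,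
    pd_const', pd_sum' _ (fun k => (hc (b k) k).diff), pd_mul' (PG1.const c).diff diff_normsq, pd_const', pd_normsq]
  simp only [h0]
  simp
  ring

theorem kf_rd1 (a c : ℝ) (b : Fin 3 → ℝ) : RD1 (kf a c b) := RD1.mul' (pl_pg1 a c b) rd1_sqrtM

theorem kf_pd (a c : ℝ) (b : Fin 3 → ℝ) (i : Fin 3) :
    pd i (kf a c b) = fun x => (b i + 2 * c * x i - pl a c b x * (x i / 2)) * sqrtM x := by
  funext x
  unfold kf
  rw [pd_mul' (pl_pg1 a c b).diff diff_sqrtM, pl_pd, pd_sqrtM]; ring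

theorem kf_rd2 (a c : ℝ) (b : Fin 3 → ℝ) : RD2 (kf a c b) := by
  refine ⟨kf_rd1 a c b, fun i => ?_⟩
  rw [kf_pd]
  exact RD1.mul' (((PG1.const _).add ((PG1.const _).mul (PG1.coord i))).sub ((pl_pg1 a c b).mul (PG1.half i))) rd1_sqrtM

theorem kf_Uf (a c : ℝ) (b : Fin 3 → ℝ) (i : Fin 3) (x : E3) : Uf (kf a c b) i x = (b i + 2 * c * x i) * sqrtM x := by
  unfold Uf; rw [kf_pd]; unfold kf; ring

theorem Uf_sub {f g : E3 → ℝ} (hf : Differentiable ℝ f) (hg : Differentiable ℝ g) (i : Fin 3) (x : E3) :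
    Uf (fun y => f y - g y) i x = Uf f i x - Uf g i x := by
  unfold Uf; rw [pd_sub' hf hg]; ring

theorem RD2.sub {f g : E3 → ℝ} (hf : RD2 f) (hg : RD2 g) : RD2 (fun x => f x - g x) := by
  refine ⟨hf.r.sub hg.r, fun i => ?_⟩
  have : pd i (fun x => f x - g x) = fun x => pd i f x - pd i g x := funext (pd_sub' hf.r.diff hg.r.diff i)
  rw [this]; exact (hf.d i).sub (hg.d i)

theorem Mx_int_pg {p : E3 → ℝ} (hp : PG p) (hm : Measurable p) : Integrable (fun x => Mx x * p x) :=
  rd1_int rd1_Mx.dec hp rd1_Mx.cont.measurable hm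

theorem stein {p : E3 → ℝ} (hp : PG1 p) (i : Fin 3) : ∫ x, Mx x * (x i * p x) = ∫ x, Mx x * pd i p x := by
  have h := ibp rd1_sqrtM (rd1_sqrtM.mul hp) i
  have e1 : ∀ x, sqrtM x * pd i (fun x => sqrtM x * p x) x = Mx x * pd i p x - 1/2 * (Mx x * (x i * p x)) := by
    intro x
    rw [pd_mul' diff_sqrtM hp.diff, pd_sqrtM, ← sqrtM_mul_self]; ring
  have e2 : ∀ x, pd i sqrtM x * (sqrtM x * p x) = - (1/2) * (Mx x * (x i * p x)) := by
    intro x; rw [pd_sqrtM, ← sqrtM_mul_self]; ring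
  simp only [e1, e2] at h
  have iA : Integrable (fun x => Mx x * pd i p x) := Mx_int_pg (hp.ppg i) (meas_pd i p)
  have iB : Integrable (fun x => Mx x * (x i * p x)) :=
    Mx_int_pg ((PG.coord i).mul hp.pg) ((PG1.coord i).cont.measurable.mul hp.cont.measurable)
  rw [integral_sub iA (iB.const_mul _), integral_const_mul, integral_const_mul] at h
  linarith

theorem Mx_total : ∫ x, Mx x = 1 := by
  have h := GaussianFourier.integral_rexp_neg_mul_sq_norm (V := E3) (b := 1/2) (by norm_num)
  have e : ∀ x : E3, Mx x = (2 * π) ^ (-(3 : ℝ) / 2) * rexp (-(1/2) * ‖x‖ ^ 2) := by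
    intro x; unfold Mx; congr 2; ring
  simp only [e]
  rw [integral_const_mul, h]
  have : π / (1/2) = 2 * π := by ring
  rw [this, finrank_euclideanSpace_fin, ← Real.rpow_add (by positivity)]
  norm_num

theorem Mx_pl (a c : ℝ) (b : Fin 3 → ℝ) : ∫ x, Mx x * pl a c b x = a + 3 * c := by
  have hM := rd1_Mx.cont.measurable
  have i0 : Integrable Mx := rd1_Mx.dec.integrable hM.aestronglyMeasurable
  have i1 : ∀ i : Fin 3, Integrable (fun x : E3 => Mx x * x i) := fun i => Mx_int_pg (PG.coord i) (PG1.coord i).cont.measurable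
  have i2 : ∀ i : Fin 3, Integrable (fun x : E3 => Mx x * (x i * x i)) := fun i =>
    Mx_int_pg ((PG.coord i).mul (PG.coord i)) ((PG1.coord i).mul (PG1.coord i)).cont.measurable
  have m2 : ∀ i : Fin 3, ∫ x : E3, Mx x * (x i * x i) = 1 := by
    intro i
    rw [stein (PG1.coord i) i]
    simp only [pd_coord, if_true, mul_one, Mx_total]
  have e : ∀ x, Mx x * pl a c b x = a * Mx x + ∑ i, (b i * (Mx x * x i) + c * (Mx x * (x i * x i))) := by
    intro x; unfold pl; rw [normsq3]; simp only [Fin.sum_univ_three]; ring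
  simp only [e]
  have i3 : ∀ i : Fin 3, Integrable (fun x : E3 => b i * (Mx x * x i) + c * (Mx x * (x i * x i))) :=
    fun i => int_add' ((i1 i).const_mul _) ((i2 i).const_mul _)
  rw [integral_add (i0.const_mul a) (integrable_finsetSum _ fun i _ => i3 i), integral_const_mul, Mx_total,
    integral_finsetSum _ fun i _ => i3 i]
  have : ∀ i, ∫ x : E3, (b i * (Mx x * x i) + c * (Mx x * (x i * x i))) = c := by
    intro i
    rw [integral_add ((i1 i).const_mul _) ((i2 i).const_mul _), integral_const_mul, integral_const_mul, m2, Mx_radial.mom1]; ring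
  simp only [this]
  simp

theorem aC_kf (a c : ℝ) (b : Fin 3 → ℝ) : aC (kf a c b) = a + 3 * c := by
  unfold aC kf
  rw [← Mx_pl a c b]
  congr 1; funext x; rw [← sqrtM_mul_self]; ring

theorem bC_kf (a c : ℝ) (b : Fin 3 → ℝ) (i : Fin 3) : bC i (kf a c b) = b i := by
  have h := stein (pl_pg1 a c b) i
  have e : ∀ x : E3, x i * sqrtM x * kf a c b x = Mx x * (x i * pl a c b x) := by
    intro x; unfold kf; rw [← sqrtM_mul_self]; ring
  unfold bC
  simp only [e]
  rw [h]
  have e2 : ∀ x, Mx x * pd i (pl a c b) x = Mx x * pl (b i) 0 (fun j => if j = i then 2 * c else 0) x := by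
    intro x; rw [pl_pd]; unfold pl; simp
  simp only [e2]
  rw [Mx_pl]; ring

theorem cC_kf (a c : ℝ) (b : Fin 3 → ℝ) : cC (kf a c b) = c := by
  have hp := pl_pg1 a c b
  have iq : Integrable (fun x => Mx x * pl a c b x) := Mx_int_pg hp.pg hp.cont.measurable
  have hxp : ∀ i, PG1 (fun x : E3 => x i * pl a c b x) := fun i => (PG1.coord i).mul hp
  have i1 : ∀ i, Integrable (fun x : E3 => Mx x * (x i * (x i * pl a c b x))) := fun i =>
    Mx_int_pg ((PG1.coord i).mul (hxp i)).pg ((PG1.coord i).mul (hxp i)).cont.measurable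
  have hr : ∀ i, PG1 (fun x : E3 => b i + 2 * c * x i) := fun i => (PG1.const _).add ((PG1.const _).mul (PG1.coord i))
  have i2 : ∀ i, Integrable (fun x : E3 => Mx x * (x i * (b i + 2 * c * x i))) := fun i =>
    Mx_int_pg ((PG1.coord i).mul (hr i)).pg ((PG1.coord i).mul (hr i)).cont.measurable
  have s2 : ∀ i, ∫ x : E3, Mx x * (x i * (b i + 2 * c * x i)) = 2 * c := by
    intro i
    rw [stein (hr i)]
    have : ∀ x, pd i (fun x : E3 => b i + 2 * c * x i) x = 2 * c := by
      intro x
      rw [pd_add' (PG1.const _).diff ((PG1.const _).mul (PG1.coord i)).diff, pd_const', pd_mul' (PG1.const _).diff (diff_coord i),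
        pd_const', pd_coord, if_pos rfl]; ring
    simp only [this]
    rw [integral_mul_const, Mx_total, one_mul]
  have s1 : ∀ i, ∫ x : E3, Mx x * (x i * (x i * pl a c b x)) = (∫ x, Mx x * pl a c b x) + 2 * c := by
    intro i
    rw [stein (hxp i)]
    have : ∀ x, Mx x * pd i (fun x : E3 => x i * pl a c b x) x = Mx x * pl a c b x + Mx x * (x i * (b i + 2 * c * x i)) := by
      intro x
      rw [pd_mul' (diff_coord i) hp.diff, pd_coord, if_pos rfl, pl_pd]; ring
    simp only [this]
    rw [integral_add iq (i2 i), s2]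
  have e : ∀ x : E3, (‖x‖ ^ 2 - 3) * sqrtM x * kf a c b x = (∑ i : Fin 3, Mx x * (x i * (x i * pl a c b x))) - 3 * (Mx x * pl a c b x) := by
    intro x; unfold kf; rw [← sqrtM_mul_self, normsq3, Fin.sum_univ_three]; ring
  unfold cC
  simp only [e]
  rw [integral_sub (integrable_finsetSum _ fun i _ => i1 i) (iq.const_mul 3), integral_finsetSum _ fun i _ => i1 i,
    integral_const_mul]
  simp only [s1, Fin.sum_univ_three]
  ring

theorem Pv_eq (u : E3 → ℝ) : Pv u = kf (aC u - 3 * cC u) (cC u) (fun i => bC i u) := by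
  funext x; unfold Pv kf pl; ring

theorem Pv_kf (a c : ℝ) (b : Fin 3 → ℝ) : Pv (kf a c b) = kf a c b := by
  rw [Pv_eq, aC_kf, cC_kf]
  simp only [bC_kf]
  congr 1; ring

theorem lin_int {f g p : E3 → ℝ} (hf : RD1 f) (hg : RD1 g) (hp : PG1 p) :
    ∫ x, p x * (f x - g x) = (∫ x, p x * f x) - ∫ x, p x * g x := by
  have t : ∀ {h}, RD1 h → Integrable (fun x => p x * h x) := fun h =>
    (RD1.mul' hp h).dec.integrable (RD1.mul' hp h).cont.aestronglyMeasurable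
  rw [← integral_sub (t hf) (t hg)]
  congr 1; funext x; ring

theorem Pv_sub {f g : E3 → ℝ} (hf : RD1 f) (hg : RD1 g) (x : E3) : Pv (fun y => f y - g y) x = Pv f x - Pv g x := by
  have hs := rd1_sqrtM.pg1
  have h1 : aC (fun y => f y - g y) = aC f - aC g := lin_int hf hg hs
  have h2 : ∀ i, bC i (fun y => f y - g y) = bC i f - bC i g := fun i => lin_int hf hg ((PG1.coord i).mul hs)
  have h3 : cC (fun y => f y - g y) = cC f - cC g := by
    unfold cC
    have := lin_int hf hg ((PG1.normsq.sub (PG1.const 3)).mul hs)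
    rw [this]; ring
  unfold Pv
  rw [h1, h3]
  simp only [h2, Fin.sum_univ_three]
  ring

theorem IPv_shift {f : E3 → ℝ} (hf : RD1 f) (a c : ℝ) (b : Fin 3 → ℝ) :
    IPv (fun y => f y - kf a c b y) = IPv f := by
  funext x
  unfold IPv
  rw [Pv_sub hf (kf_rd1 a c b), Pv_kf]; ring

theorem Qf_sub {f g : E3 → ℝ} (hf : Differentiable ℝ f) (hg : Differentiable ℝ g) (x : E3) :
    Qf γ (fun y => f y - g y) x ≤ 2 * Qf γ f x + 2 * Qf γ g x := by
  unfold Qf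
  simp only [Uf_sub hf hg]
  have hW := (Ww_pos γ x).le
  have key : (∑ i, (Uf f i x - Uf g i x) ^ 2) + cr x (fun i => Uf f i x - Uf g i x) + (1 + ‖x‖ ^ 2) * (f x - g x) ^ 2 ≤
      2 * ((∑ i, Uf f i x ^ 2) + cr x (fun i => Uf f i x) + (1 + ‖x‖ ^ 2) * f x ^ 2) +
      2 * ((∑ i, Uf g i x ^ 2) + cr x (fun i => Uf g i x) + (1 + ‖x‖ ^ 2) * g x ^ 2) := by
    have sq2 : ∀ p q : ℝ, (p - q) ^ 2 ≤ 2 * p ^ 2 + 2 * q ^ 2 := fun p q => by nlinarith [sq_nonneg (p + q)]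
    have s1 : (∑ i, (Uf f i x - Uf g i x) ^ 2) ≤ 2 * (∑ i, Uf f i x ^ 2) + 2 * (∑ i, Uf g i x ^ 2) := by
      rw [Finset.mul_sum, Finset.mul_sum, ← Finset.sum_add_distrib]
      exact Finset.sum_le_sum fun i _ => sq2 _ _
    have s2 : cr x (fun i => Uf f i x - Uf g i x) ≤ 2 * cr x (fun i => Uf f i x) + 2 * cr x (fun i => Uf g i x) := by
      unfold cr
      have t1 := sq2 (x 1 * Uf f 2 x - x 2 * Uf f 1 x) (x 1 * Uf g 2 x - x 2 * Uf g 1 x)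
      have t2 := sq2 (x 2 * Uf f 0 x - x 0 * Uf f 2 x) (x 2 * Uf g 0 x - x 0 * Uf g 2 x)
      have t3 := sq2 (x 0 * Uf f 1 x - x 1 * Uf f 0 x) (x 0 * Uf g 1 x - x 1 * Uf g 0 x)
      linarith
    have s3 := mul_le_mul_of_nonneg_left (sq2 (f x) (g x)) (by positivity : 0 ≤ 1 + ‖x‖ ^ 2)
    linarith
  have := mul_le_mul_of_nonneg_left key hW
  linarith

theorem memL2_dec {f : E3 → ℝ} (h : Dec f) (hm : Measurable f) : MemLp f 2 := by
  rw [memLp_two_iff_integrable_sq hm.aestronglyMeasurable]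
  exact h.sq.integrable (hm.pow_const 2).aestronglyMeasurable

theorem Ww_lower (hγ1 : -3 ≤ γ) (x : E3) : 1 ≤ Ww γ x * (1 + ‖x‖ ^ 2) ^ 2 := by
  have h1 : (1:ℝ) ≤ 1 + ‖x‖ ^ 2 := by nlinarith [sq_nonneg ‖x‖]
  unfold Ww
  rw [← Real.rpow_natCast (1 + ‖x‖ ^ 2) 2, ← Real.rpow_add (by positivity)]
  exact Real.one_le_rpow h1 (by push_cast; linarith)

theorem coef_bd (hγ1 : -3 ≤ γ) (hγ2 : γ < -2) {p : E3 → ℝ} (hp : PG p) (hpm : Measurable p) :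
    ∃ K : ℝ, 0 ≤ K ∧ ∀ f : E3 → ℝ, RD1 f → (∫ x, p x * sqrtM x * f x) ^ 2 ≤ K * ∫ x, Qf γ f x := by
  have hsm := rd1_sqrtM.cont.measurable
  refine ⟨∫ x, ((1 + ‖x‖ ^ 2) * p x * sqrtM x) ^ 2, integral_nonneg fun x => sq_nonneg _, fun f hf => ?_⟩
  have hfm := hf.cont.measurable
  have d1 : Dec (fun x : E3 => (1 + ‖x‖ ^ 2) * p x * sqrtM x) :=
    Dec.mul' (((PG.const 1).add (PG.norm.pow 2)).mul hp) dec_sqrtM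
  have d2 : Dec (fun x : E3 => f x / (1 + ‖x‖ ^ 2)) := by
    refine hf.dec.mono fun x => ?_
    rw [abs_div]
    refine div_le_self (abs_nonneg _) ?_
    rw [abs_of_nonneg (by positivity)]; nlinarith [sq_nonneg ‖x‖]
  have m1 : Measurable (fun x : E3 => (1 + ‖x‖ ^ 2) * p x * sqrtM x) := by fun_prop
  have m2 : Measurable (fun x : E3 => f x / (1 + ‖x‖ ^ 2)) := by fun_prop
  have h := cs_int (memL2_dec d1 m1) (memL2_dec d2 m2)
  have e : ∀ x : E3, (1 + ‖x‖ ^ 2) * p x * sqrtM x * (f x / (1 + ‖x‖ ^ 2)) = p x * sqrtM x * f x := by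
    intro x; have : 1 + ‖x‖ ^ 2 ≠ 0 := by positivity
    field_simp
  simp only [e] at h
  refine h.trans (mul_le_mul_of_nonneg_left ?_ (integral_nonneg fun x => sq_nonneg _))
  refine integral_mono (d2.sq.integrable (m2.pow_const 2).aestronglyMeasurable) (Qf_int hγ2 hf) fun x => ?_
  have hW := Ww_lower hγ1 x
  have hW0 := Ww_pos γ x
  have hn : 0 < 1 + ‖x‖ ^ 2 := by positivity
  have hn1 : 1 ≤ 1 + ‖x‖ ^ 2 := by nlinarith [sq_nonneg ‖x‖]
  have a1 : (f x / (1 + ‖x‖ ^ 2)) ^ 2 ≤ Ww γ x * f x ^ 2 := by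
    rw [div_pow, div_le_iff₀ (by positivity)]
    have := mul_le_mul_of_nonneg_right hW (sq_nonneg (f x))
    linarith
  refine a1.trans ?_
  unfold Qf
  refine mul_le_mul_of_nonneg_left ?_ hW0.le
  have b1 := cr_nonneg x (fun i => Uf f i x)
  have b2 : 0 ≤ ∑ i, Uf f i x ^ 2 := Finset.sum_nonneg fun i _ => sq_nonneg _
  have b3 := mul_le_mul_of_nonneg_right hn1 (sq_nonneg (f x))
  linarith

theorem Qf_kf (hγ2 : γ < -2) : ∃ D : ℝ, 0 ≤ D ∧ ∀ a c b, ∫ x, Qf γ (kf a c b) x ≤ D * (a ^ 2 + c ^ 2 + ∑ i, b i ^ 2) := by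
  have hd : PG1 (fun x : E3 => (1 + ‖x‖ ^ 2) * (9 + 9 * ‖x‖ ^ 2 + ‖x‖ ^ 2 * ‖x‖ ^ 2)) :=
    ((PG1.const 1).add PG1.normsq).mul (((PG1.const 9).add ((PG1.const 9).mul PG1.normsq)).add (PG1.normsq.mul PG1.normsq))
  refine ⟨∫ x, Mx x * ((1 + ‖x‖ ^ 2) * (9 + 9 * ‖x‖ ^ 2 + ‖x‖ ^ 2 * ‖x‖ ^ 2)),
    integral_nonneg fun x => mul_nonneg (Mx_pos x).le (by positivity), fun a c b => ?_⟩
  rw [← integral_mul_const]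
  refine integral_mono (Qf_int hγ2 (kf_rd1 a c b)) ((Mx_int_pg hd.pg hd.cont.measurable).mul_const _) fun x => ?_
  show Qf γ (kf a c b) x ≤ Mx x * ((1 + ‖x‖ ^ 2) * (9 + 9 * ‖x‖ ^ 2 + ‖x‖ ^ 2 * ‖x‖ ^ 2)) * (a ^ 2 + c ^ 2 + ∑ i, b i ^ 2)
  have hcr := cr_le_sq x (fun i => Uf (kf a c b) i x)
  have hW0 := Ww_pos γ x
  have hW1 := Ww_le_one hγ2 x
  have hU : (∑ i, Uf (kf a c b) i x ^ 2) ≤ Mx x * (8 * (1 + ‖x‖ ^ 2)) * (a ^ 2 + c ^ 2 + ∑ i, b i ^ 2) := by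
    simp only [kf_Uf, mul_pow, sqrtM_sq]
    rw [← Finset.sum_mul, mul_comm, mul_assoc]
    refine mul_le_mul_of_nonneg_left ?_ (Mx_pos x).le
    have t : ∀ p q : ℝ, (p + 2 * c * q) ^ 2 ≤ 2 * p ^ 2 + 8 * (c ^ 2 * q ^ 2) := fun p q => by
      nlinarith [sq_nonneg (p - 2 * c * q)]
    rw [normsq3]
    simp only [Fin.sum_univ_three]
    have t0 := t (b 0) (x 0); have t1 := t (b 1) (x 1); have t2 := t (b 2) (x 2)
    have p1 : 0 ≤ (x 0 ^ 2 + x 1 ^ 2 + x 2 ^ 2) * (a ^ 2 + (b 0 ^ 2 + b 1 ^ 2 + b 2 ^ 2)) := by positivity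
    have p2 : 0 ≤ a ^ 2 + c ^ 2 + b 0 ^ 2 + b 1 ^ 2 + b 2 ^ 2 := by positivity
    have p3 : 0 ≤ a ^ 2 := by positivity
    have p4 : 0 ≤ c ^ 2 := by positivity
    linarith
  have hk : kf a c b x ^ 2 ≤ Mx x * (1 + ‖x‖ ^ 2 + ‖x‖ ^ 2 * ‖x‖ ^ 2) * (a ^ 2 + c ^ 2 + ∑ i, b i ^ 2) := by
    unfold kf
    rw [mul_pow, sqrtM_sq, mul_comm, mul_assoc]
    refine mul_le_mul_of_nonneg_left ?_ (Mx_pos x).le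
    have cs : (∑ i, b i * x i) ^ 2 ≤ (∑ i, b i ^ 2) * ‖x‖ ^ 2 := by
      rw [EuclideanSpace.norm_sq_eq]
      simpa using Finset.sum_mul_sq_le_sq_mul_sq Finset.univ b (fun i => x i)
    have hB : 0 ≤ ∑ i, b i ^ 2 := Finset.sum_nonneg fun i _ => sq_nonneg _
    unfold pl
    generalize (∑ i, b i * x i) = s at *
    generalize (∑ i, b i ^ 2) = B at *
    have hr := norm_nonneg x
    generalize ‖x‖ = r at *
    -- (a·1 + s + c r²)² with s² ≤ B r²
    have hs : s ^ 2 ≤ B * r ^ 2 := cs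
    by_cases hr0 : r = 0
    · subst hr0
      have hs0 : s = 0 := by
        have : s ^ 2 ≤ 0 := by simpa using hs
        exact pow_eq_zero_iff (two_ne_zero) |>.1 (le_antisymm this (sq_nonneg _))
      rw [hs0]; nlinarith [sq_nonneg c]
    · have hrp : 0 < r := lt_of_le_of_ne hr (Ne.symm hr0)
      have hs' : (s / r) ^ 2 ≤ B := by
        rw [div_pow, div_le_iff₀ (by positivity)]; exact hs
      have e : s = s / r * r := by field_simp
      set t := s / r
      rw [e]
      have q : (a + t * r + c * r ^ 2) ^ 2 ≤ (1 + r ^ 2 + r ^ 2 * r ^ 2) * (a ^ 2 + c ^ 2 + t ^ 2) := by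
        nlinarith [sq_nonneg (a * r - t), sq_nonneg (a * r ^ 2 - c), sq_nonneg (t * r ^ 2 - c * r)]
      refine q.trans (mul_le_mul_of_nonneg_left (by linarith) (by positivity))
  have hS : 0 ≤ a ^ 2 + c ^ 2 + ∑ i, b i ^ 2 := by
    have : 0 ≤ ∑ i, b i ^ 2 := Finset.sum_nonneg fun i _ => sq_nonneg _
    positivity
  generalize a ^ 2 + c ^ 2 + ∑ i, b i ^ 2 = S at *
  unfold Qf
  have hn : 0 ≤ 1 + ‖x‖ ^ 2 := by positivity
  have k1 := mul_le_mul_of_nonneg_left hU hn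
  have k2 := mul_le_mul_of_nonneg_left hk hn
  have tot : (∑ i, Uf (kf a c b) i x ^ 2) + cr x (fun i => Uf (kf a c b) i x) + (1 + ‖x‖ ^ 2) * kf a c b x ^ 2 ≤
      Mx x * ((1 + ‖x‖ ^ 2) * (9 + 9 * ‖x‖ ^ 2 + ‖x‖ ^ 2 * ‖x‖ ^ 2)) * S := by linarith
  have t0 : 0 ≤ (∑ i, Uf (kf a c b) i x ^ 2) + cr x (fun i => Uf (kf a c b) i x) + (1 + ‖x‖ ^ 2) * kf a c b x ^ 2 := by
    have b1 := cr_nonneg x (fun i => Uf (kf a c b) i x)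
    have b2 : 0 ≤ ∑ i, Uf (kf a c b) i x ^ 2 := Finset.sum_nonneg fun i _ => sq_nonneg _
    positivity
  exact (mul_le_of_le_one_left t0 hW1).trans tot

/-- The projection is bounded for the dissipation functional. -/
theorem IPv_bd (hγ1 : -3 ≤ γ) (hγ2 : γ < -2) : ∃ C : ℝ, 0 ≤ C ∧ ∀ f : E3 → ℝ, RD1 f →
    ∫ x, Qf γ (IPv f) x ≤ C * ∫ x, Qf γ f x := by
  obtain ⟨D, hD0, hD⟩ := Qf_kf hγ2
  obtain ⟨Ka, hKa0, hKa⟩ := coef_bd hγ1 hγ2 (PG.const 1) measurable_const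
  obtain ⟨Kc, hKc0, hKc⟩ := coef_bd hγ1 hγ2 (PG1.normsq.sub (PG1.const 3)).pg (PG1.normsq.sub (PG1.const 3)).cont.measurable
  have hb := fun i => coef_bd hγ1 hγ2 (PG.coord i) (PG1.coord i).cont.measurable
  choose Kb hKb0 hKb using hb
  have hKs : 0 ≤ ∑ i, Kb i := Finset.sum_nonneg fun i _ => hKb0 i
  refine ⟨2 + 2 * (D * (2 * Ka + Kc + ∑ i, Kb i)), by positivity, fun f hf => ?_⟩
  have e : IPv f = fun y => f y - Pv f y := rfl
  have hP : RD1 (Pv f) := by rw [Pv_eq]; exact kf_rd1 _ _ _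
  have h1 : ∫ x, Qf γ (IPv f) x ≤ ∫ x, (2 * Qf γ f x + 2 * Qf γ (Pv f) x) := by
    rw [e]
    exact integral_mono (Qf_int hγ2 (hf.sub hP)) (int_add' ((Qf_int hγ2 hf).const_mul 2) ((Qf_int hγ2 hP).const_mul 2))
      (Qf_sub hf.diff hP.diff)
  rw [integral_add ((Qf_int hγ2 hf).const_mul 2) ((Qf_int hγ2 hP).const_mul 2), integral_const_mul, integral_const_mul] at h1
  have h2 : ∫ x, Qf γ (Pv f) x ≤ D * ((aC f - 3 * cC f) ^ 2 + cC f ^ 2 + ∑ i, bC i f ^ 2) := by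
    rw [Pv_eq]; exact hD _ _ _
  have ha : aC f ^ 2 ≤ Ka * ∫ x, Qf γ f x := by simpa [aC] using hKa f hf
  have hc : (6 * cC f) ^ 2 ≤ Kc * ∫ x, Qf γ f x := by
    have := hKc f hf
    unfold cC
    convert this using 2
    ring
  have hbs : ∑ i, bC i f ^ 2 ≤ (∑ i, Kb i) * ∫ x, Qf γ f x := by
    rw [Finset.sum_mul]; exact Finset.sum_le_sum fun i _ => hKb i f hf
  have hQ : 0 ≤ ∫ x, Qf γ f x := integral_nonneg (Qf_nonneg γ f)
  have h3 : (aC f - 3 * cC f) ^ 2 + cC f ^ 2 + ∑ i, bC i f ^ 2 ≤ (2 * Ka + Kc + ∑ i, Kb i) * ∫ x, Qf γ f x := by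
    nlinarith [sq_nonneg (aC f + 3 * cC f), sq_nonneg (cC f)]
  have h4 := mul_le_mul_of_nonneg_left h3 hD0
  linarith

theorem nu_hh_int {f : E3 → ℝ} (hf : RD1 f) : Integrable (fun x => nu x * hh f x) := by
  have hc : Continuous (fun x => nu x * hh f x) := nu_cont.mul (hh_diff hf.diff).continuous
  have e : (fun x => nu x * hh f x) = fun x => nu x / Mx x * (sqrtM x * f x) := by
    funext x
    have := (sqrtM_pos x).ne'
    unfold hh
    rw [← sqrtM_mul_self]
    field_simp
  refine Dec.integrable ?_ hc.aestronglyMeasurable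
  rw [e]
  exact (exp_div_dec (by norm_num : (1:ℝ) / 2 < 4)).mul (dec_sqrtM.mul hf.dec.pg).pg

theorem hh_kf (a c : ℝ) (b : Fin 3 → ℝ) : hh (kf a c b) = pl a c b := by
  funext x; unfold hh kf; have := (sqrtM_pos x).ne'; field_simp

theorem main_coer (hγ1 : -3 ≤ γ) (hγ2 : γ < -2) : ∃ C : ℝ, 0 < C ∧ ∀ u : E3 → ℝ, RD2 u →
    ∫ x, Qf γ (IPv u) x ≤ C * ipv (Lop γ u) u := by
  obtain ⟨C1, hC1, H1⟩ := coer1 hγ1 hγ2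
  obtain ⟨C2, hC2, H2⟩ := wpoinc hγ1 hγ2
  obtain ⟨C3, hC3, H3⟩ := IPv_bd hγ1 hγ2
  refine ⟨(C3 + 1) * ((1 + C2) * C1), by positivity, fun u hu => ?_⟩
  obtain ⟨b, c, h⟩ := H1 u hu
  have hN : 0 < ∫ x, nu x := int_pos' nu_cont nu_int (fun x => (nu_pos x).le) (nu_pos 0).ne'
  let v0 : E3 → ℝ := fun y => u y - kf 0 (c / 2) b y
  have hv0 : RD2 v0 := hu.sub (kf_rd2 _ _ _)
  let a : ℝ := (∫ x, nu x * hh v0 x) / ∫ x, nu x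
  let v : E3 → ℝ := fun y => u y - kf a (c / 2) b y
  have hv : RD2 v := hu.sub (kf_rd2 _ _ _)
  have hz : ∫ x, nu x * hh v x = 0 := by
    have e : ∀ x, nu x * hh v x = nu x * hh v0 x - a * nu x := by
      intro x
      simp only [hh, v, v0, kf, pl]
      have := (sqrtM_pos x).ne'
      field_simp
      ring
    simp only [e]
    rw [integral_sub (nu_hh_int hv0.r) (nu_int.const_mul a), integral_const_mul]
    simp only [a]
    field_simp
    ring
  have hUv : ∀ i x, Uf v i x = Uf u i x - (b i + c * x i) * sqrtM x := by
    intro i x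
    simp only [v]
    rw [Uf_sub hu.r.diff (kf_rd1 _ _ _).diff, kf_Uf]; ring
  simp only [← hUv] at h
  have hW := (Ww_cont γ).measurable
  have hU := hv.r.Uf_meas
  have hvm := hv.r.cont.measurable
  have iB : Integrable (fun x => Ww γ x * ((1 + ‖x‖ ^ 2) * v x ^ 2)) :=
    (Dec.mul' (Ww_pg hγ2) (Dec.mul' ((PG.const 1).add (PG.norm.pow 2)) hv.r.dec.sq)).integrable
      (Measurable.aestronglyMeasurable (by fun_prop))
  have iF : Integrable (fun x => Ww γ x * ∑ i, Uf v i x ^ 2) :=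
    (Dec.mul' (Ww_pg hγ2) (Dec.sum Finset.univ fun i => (hv.r.Uf_dec i).sq)).integrable
      (Measurable.aestronglyMeasurable (by
        have := hU 0; have := hU 1; have := hU 2
        simp only [Fin.sum_univ_three]; fun_prop))
  have iQ := Qf_int hγ2 hv.r
  have eA : ∀ x, Ww γ x * ((∑ i, Uf v i x ^ 2) + cr x (fun i => Uf v i x)) = Qf γ v x - Ww γ x * ((1 + ‖x‖ ^ 2) * v x ^ 2) := by
    intro x; unfold Qf; ring
  have iA : Integrable (fun x => Ww γ x * ((∑ i, Uf v i x ^ 2) + cr x (fun i => Uf v i x))) := by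
    simp only [eA]; exact int_sub' iQ iB
  have hA : ∫ x, Ww γ x * ∑ i, Uf v i x ^ 2 ≤ ∫ x, Ww γ x * ((∑ i, Uf v i x ^ 2) + cr x (fun i => Uf v i x)) := by
    refine integral_mono iF iA fun x => mul_le_mul_of_nonneg_left ?_ (Ww_pos γ x).le
    have := cr_nonneg x (fun i => Uf v i x)
    linarith
  have hQ : ∫ x, Qf γ v x = (∫ x, Ww γ x * ((∑ i, Uf v i x ^ 2) + cr x (fun i => Uf v i x))) + ∫ x, Ww γ x * ((1 + ‖x‖ ^ 2) * v x ^ 2) := by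
    rw [← integral_add iA iB]
    congr 1; funext x; rw [eA]; ring
  have h2 := H2 v hv hz
  have h3 := H3 v hv.r
  have hI : IPv v = IPv u := IPv_shift hu.r _ _ _
  rw [hI] at h3
  have hQ2 : ∫ x, Qf γ v x ≤ (1 + C2) * (C1 * ipv (Lop γ u) u) := by
    rw [hQ]
    have := mul_le_mul_of_nonneg_left (hA.trans h) hC2
    linarith
  have hQ0 : 0 ≤ ∫ x, Qf γ v x := integral_nonneg (Qf_nonneg γ v)
  have h4 := mul_le_mul_of_nonneg_left hQ2 (by linarith : 0 ≤ C3 + 1)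
  linarith

end

theorem linearized_Landau_properties (γ : ℝ) (hγ1 : -3 ≤ γ) (hγ2 : γ < -2) :
    (∀ u v : SchwartzMap E3 ℝ,
        ipv (Lop γ ⇑u) ⇑v = ipv ⇑u (Lop γ ⇑v) ∧ 0 ≤ ipv (Lop γ ⇑u) ⇑u) ∧
    (∀ u : SchwartzMap E3 ℝ,
        (∀ ξ, Lop γ ⇑u ξ = 0) ↔
          ∃ c₀ c₄ : ℝ, ∃ cb : Fin 3 → ℝ, ∀ ξ : E3,
            u ξ = (c₀ + (∑ i : Fin 3, cb i * ξ i) + c₄ * ‖ξ‖ ^ 2) * sqrtM ξ) ∧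
    (∀ u : SchwartzMap E3 ℝ,
        ipv (Lop γ ⇑u) ⇑u = 0 ↔ ∀ ξ, u ξ = Pv ⇑u ξ) ∧
    (∃ κ₀ > (0 : ℝ), ∀ u : SchwartzMap E3 ℝ,
        κ₀ * vsigSq γ 0 0 1 0 (IPv ⇑u) ≤ ipv (Lop γ ⇑u) ⇑u) := by
  obtain ⟨C, hC, H⟩ := main_coer hγ1 hγ2
  obtain ⟨D, hD, HD⟩ := vsig_ub hγ1 hγ2
  have hip : ∀ u : SchwartzMap E3 ℝ, RD1 (IPv ⇑u) := fun u => by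
    have hP : RD1 (Pv ⇑u) := by rw [Pv_eq]; exact kf_rd1 _ _ _
    exact (schwartz_rd1 u).sub hP
  -- vanishing of the form forces `u = Pu`
  have hc1 : ∀ u : SchwartzMap E3 ℝ, ipv (Lop γ ⇑u) ⇑u = 0 → ∀ ξ, u ξ = Pv ⇑u ξ := by
    intro u h0 ξ
    by_contra hne
    have h1 := H u (schwartz_rd2 u)
    rw [h0, mul_zero] at h1
    have hWc := Ww_cont γ
    have huc := (hip u).cont
    have iW : Integrable (fun x => Ww γ x * IPv (⇑u) x ^ 2) :=
      (Dec.mul' (Ww_pg hγ2) (hip u).dec.sq).integrable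
        (Continuous.aestronglyMeasurable (by fun_prop))
    have h2 : 0 < ∫ x, Ww γ x * IPv (⇑u) x ^ 2 := by
      refine int_pos' (by fun_prop) iW (fun x => mul_nonneg (Ww_pos γ x).le (sq_nonneg _)) (x0 := ξ) ?_
      exact mul_ne_zero (Ww_pos γ ξ).ne' (pow_ne_zero 2 (sub_ne_zero.2 hne))
    have h3 : ∫ x, Ww γ x * IPv (⇑u) x ^ 2 ≤ ∫ x, Qf γ (IPv ⇑u) x := by
      refine integral_mono iW (Qf_int hγ2 (hip u)) fun x => ?_
      show Ww γ x * IPv (⇑u) x ^ 2 ≤ Qf γ (IPv ⇑u) x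
      unfold Qf
      refine mul_le_mul_of_nonneg_left ?_ (Ww_pos γ x).le
      have b1 := cr_nonneg x (fun i => Uf (IPv ⇑u) i x)
      have b2 : 0 ≤ ∑ i, Uf (IPv ⇑u) i x ^ 2 := Finset.sum_nonneg fun i _ => sq_nonneg _
      have b3 := mul_nonneg (sq_nonneg ‖x‖) (sq_nonneg (IPv (⇑u) x))
      linarith
    linarith
  -- hydrodynamic functions are in the kernel
  have hk : ∀ u : SchwartzMap E3 ℝ, ∀ a c b, ⇑u = kf a c b → ∀ ξ, Lop γ ⇑u ξ = 0 := by
    intro u a c b e ξ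
    rw [e]
    exact Lop_kernel hγ1 hγ2 (kf_rd2 a c b) b (2 * c) (fun j x => kf_Uf a c b j x) ξ
  have hz : ∀ u : SchwartzMap E3 ℝ, (∀ ξ, Lop γ ⇑u ξ = 0) → ipv (Lop γ ⇑u) ⇑u = 0 := by
    intro u h
    unfold ipv
    simp [h]
  refine ⟨fun u v => ⟨Lop_symm hγ1 hγ2 (schwartz_rd2 u) (schwartz_rd2 v),
    Lop_nonneg hγ1 hγ2 (schwartz_rd2 u)⟩, fun u => ⟨fun h => ?_, ?_⟩, fun u => ⟨hc1 u, fun h => ?_⟩, ?_⟩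
  · refine ⟨aC u - 3 * cC u, cC u, fun i => bC i u, fun ξ => ?_⟩
    rw [hc1 u (hz u h) ξ, Pv_eq]
    rfl
  · rintro ⟨c₀, c₄, cb, h⟩
    exact hk u c₀ c₄ cb (funext h)
  · refine hz u (hk u (aC u - 3 * cC u) (cC u) (fun i => bC i u) ?_)
    rw [← Pv_eq]
    exact funext h
  · refine ⟨1 / ((D + 1) * C), by positivity, fun u => ?_⟩
    have h1 := H u (schwartz_rd2 u)
    have h2 := HD _ (hip u)
    have h0 : 0 ≤ ∫ x, Qf γ (IPv ⇑u) x := integral_nonneg (Qf_nonneg γ _)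
    have h3 := mul_le_mul_of_nonneg_left h1 (by linarith : 0 ≤ D + 1)
    rw [one_div, inv_mul_le_iff₀ (by positivity)]
    linarith
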